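/- arXiv:2010.01385 — 4 statements merged into one kernel-verified Lean document; each statement's English description precedes it below -/
import Mathlib

section
/- Every multilinear polynomial in F[x₁,...,x_n] computed by a strict-interval algebraic branching program of size S is also computed by a read-once oblivious algebraic branching program (in which the variables appear in the order x₁, x₂, ..., x_n) of size at most 2nS; in particular, the class of polynomials computed by polynomial-size strict-interval ABPs equals the class of polynomials computed by polynomial-size ROABPs. -/
/-- A (layered) algebraic branching program over `F` in variables `x_0, …, x_{n-1}`.
Layer `j` (for `0 ≤ j ≤ m`) has `width j` nodes, numbered `0, …, width j - 1`; layers `0`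
and `m` consist of the single nodes `s` and `t`.  `label j u v = some e` means there is an
edge from node `u` of layer `j` to node `v` of layer `j+1` labeled by the constant or
variable `e`, and `label j u v = none` means there is no such edge. -/
structure ABP (F : Type) (n : ℕ) where
  m : ℕ
  width : ℕ → ℕ
  w0 : width 0 = 1
  wm : width m = 1
  label : ℕ → ℕ → ℕ → Option (F ⊕ Fin n)

namespace ABP

variable {F : Type} {n : ℕ}

/-- The polynomial contributed by one edge label (`none`, i.e. a missing edge, contributes `0`). -/
noncomputable def edgeVal [Field F] : Option (F ⊕ Fin n) → MvPolynomial (Fin n) F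
  | none => 0
  | some (Sum.inl c) => MvPolynomial.C c
  | some (Sum.inr i) => MvPolynomial.X i

/-- The polynomial computed by the ABP: the sum over all `s`-to-`t` paths of the product of
the edge labels along the path. -/
noncomputable def eval [Field F] (P : ABP F n) : MvPolynomial (Fin n) F :=
  ∑ π : (∀ i : Fin (P.m + 1), Fin (P.width i)), ∏ k : Fin P.m,
    edgeVal (P.label k (π k.castSucc) (π k.succ))

/-- The size of an ABP is its number of nodes. -/
def size (P : ABP F n) : ℕ := ∑ i ∈ Finset.range (P.m + 1), P.width i

/-- `π` describes an `s`-to-`t` path: `π j` is the node of layer `j` used by the path. -/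
def IsPath (P : ABP F n) (π : ℕ → ℕ) : Prop :=
  π 0 = 0 ∧ π P.m = 0 ∧ (∀ k, k ≤ P.m → π k < P.width k) ∧
    ∀ k, k < P.m → P.label k (π k) (π (k + 1)) ≠ none

/-- Syntactic multilinearity: on every `s`-to-`t` path, each variable appears at most once
as an edge label. -/
def SynMultilinear (P : ABP F n) : Prop :=
  ∀ π : ℕ → ℕ, P.IsPath π → ∀ x : Fin n,
    {k : ℕ | k < P.m ∧ P.label k (π k) (π (k + 1)) = some (Sum.inr x)}.ncard ≤ 1

/-- The variable `x` appears as a label of an edge leaving layer `j`. -/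
def VarInLayer (P : ABP F n) (x : Fin n) (j : ℕ) : Prop :=
  j < P.m ∧ ∃ u v : ℕ, u < P.width j ∧ v < P.width (j + 1) ∧
    P.label j u v = some (Sum.inr x)

/-- Obliviousness: for each layer, at most one variable appears on the edges leaving it. -/
def Oblivious (P : ABP F n) : Prop :=
  ∀ (j : ℕ) (x x' : Fin n), P.VarInLayer x j → P.VarInLayer x' j → x = x'

/-- Each variable appears in at most one layer. -/
def ReadOnceVars (P : ABP F n) : Prop :=
  ∀ (x : Fin n) (j j' : ℕ), P.VarInLayer x j → P.VarInLayer x j' → j = j'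

/-- A read-once oblivious ABP (ROABP): an oblivious syntactically multilinear ABP in which
each variable appears in at most one layer. -/
def IsROABP (P : ABP F n) : Prop :=
  P.Oblivious ∧ P.ReadOnceVars ∧ P.SynMultilinear

end ABP

namespace ABP

variable {F : Type} {n : ℕ}

/-- The variable `x` appears (as an edge label) in the subprogram `[u,v]` of `P`, where `u`
is a node of layer `i` and `v` a node of layer `j`: some `u`-to-`v` path contains an edge
labeled `x`. -/
def VarInSub (P : ABP F n) (i j u v : ℕ) (x : Fin n) : Prop :=
  ∃ π : ℕ → ℕ, π i = u ∧ π j = v ∧ (∀ k, i ≤ k → k ≤ j → π k < P.width k) ∧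
    (∀ k, i ≤ k → k < j → P.label k (π k) (π (k + 1)) ≠ none) ∧
    ∃ k, i ≤ k ∧ k < j ∧ P.label k (π k) (π (k + 1)) = some (Sum.inr x)

end ABP

/-- A strict-interval ABP: a syntactically multilinear ABP in which every subprogram
`[u,v]` (with `u` a node of layer `i`, `v` a node of layer `j`, `i < j ≤ m`) has an
associated nonempty interval `[lo i j u v, hi i j u v]` of variable indices containing
the indices of all variables appearing in `[u,v]`, and for every pair of consecutive
subprograms `[u,v]` and `[v,w]` the associated intervals are disjoint. -/
structure StrictIntervalABP (F : Type) (n : ℕ) extends ABP F n where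
  sm : toABP.SynMultilinear
  lo : ℕ → ℕ → ℕ → ℕ → Fin n
  hi : ℕ → ℕ → ℕ → ℕ → Fin n
  lo_le_hi : ∀ i j u v, i < j → j ≤ m → u < width i → v < width j →
    lo i j u v ≤ hi i j u v
  mem_ival : ∀ i j u v (x : Fin n), i < j → j ≤ m → u < width i → v < width j →
    toABP.VarInSub i j u v x → lo i j u v ≤ x ∧ x ≤ hi i j u v
  disj : ∀ i j k u v w, i < j → j < k → k ≤ m →
    u < width i → v < width j → w < width k →
    Disjoint (Finset.Icc (lo i j u v) (hi i j u v))
      (Finset.Icc (lo j k v w) (hi j k v w))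

namespace StrictIntervalABP

variable {F : Type} {n : ℕ}

/-- The node `v` of layer `i` (with `0 < i < m`) is ascending: `I_{s,v} ⪯ I_{v,t}`. -/
def Ascending (P : StrictIntervalABP F n) (i v : ℕ) : Prop :=
  P.hi 0 i 0 v ≤ P.lo i P.m v 0

/-- The node `v` of layer `i` (with `0 < i < m`) is descending: `I_{v,t} ⪯ I_{s,v}`. -/
def Descending (P : StrictIntervalABP F n) (i v : ℕ) : Prop :=
  P.hi i P.m v 0 ≤ P.lo 0 i 0 v

end StrictIntervalABP

/-- The variables of `P` appear in the (ascending) order `x_0, x_1, …, x_{n-1}`. -/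
def ABP.OrderedAsc {F : Type} {n : ℕ} (P : ABP F n) : Prop :=
  ∀ (x x' : Fin n) (j j' : ℕ), P.VarInLayer x j → P.VarInLayer x' j' → x < x' → j < j'
open MvPolynomial in
noncomputable def tau {F : Type} [Field F] {n : ℕ} (i : ℕ) :
    MvPolynomial (Fin n) F →ₐ[F] MvPolynomial (Fin n) F :=
  aeval (fun j => if j.val < i then X j else 0)

section tauLemmas
open MvPolynomial
variable {F : Type} [Field F] {n : ℕ}

theorem tau_X (i : ℕ) (j : Fin n) : tau (F := F) i (X j) = if j.val < i then X j else 0 := by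
  simp [tau]

theorem tau_C (i : ℕ) (c : F) : tau (n := n) i (C c) = C c := by
  simp [tau]

theorem tau_fix {i j : ℕ} (h : j ≤ i) {g : MvPolynomial (Fin n) F} (hg : tau j g = g) :
    tau i g = g := by
  have : (tau i).comp (tau j) = (tau j : MvPolynomial (Fin n) F →ₐ[F] _) := by
    apply MvPolynomial.algHom_ext
    intro k
    simp only [AlgHom.comp_apply, tau_X]
    split_ifs with h1
    · rw [tau_X, if_pos (by omega)]
    · simp
  have h2 := DFunLike.congr_fun this g
  simpa [hg] using h2

theorem tau_top {i : ℕ} (h : n ≤ i) (g : MvPolynomial (Fin n) F) : tau i g = g := by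
  have : (tau i) = (AlgHom.id F (MvPolynomial (Fin n) F)) := by
    apply MvPolynomial.algHom_ext
    intro k
    rw [tau_X, if_pos (by omega)]; simp
  rw [this]; rfl

theorem tau_zero (g : MvPolynomial (Fin n) F) : ∃ c : F, tau 0 g = C c := by
  refine ⟨constantCoeff g, ?_⟩
  have : (tau 0 : MvPolynomial (Fin n) F →ₐ[F] _) = aeval (fun _ => 0) := by
    unfold tau; simp
  rw [this]
  exact MvPolynomial.aeval_zero' g

theorem const_of_fix {g : MvPolynomial (Fin n) F} (hg : tau 0 g = g) : ∃ c : F, g = C c := by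
  obtain ⟨c, hc⟩ := tau_zero g
  exact ⟨c, by rw [← hg, hc]⟩

noncomputable def cpart : Option (F ⊕ Fin n) → F
  | some (Sum.inl c) => c
  | _ => 0

def selL (i : ℕ) : Option (F ⊕ Fin n) → Option (F ⊕ Fin n)
  | some (Sum.inr j) => if j.val = i then some (Sum.inr j) else none
  | _ => none

def carryL (i : ℕ) : Option (F ⊕ Fin n) → Option (F ⊕ Fin n)
  | some (Sum.inr j) => if j.val = i then some (Sum.inr j) else none
  | some (Sum.inl c) => some (Sum.inl (-c))
  | none => none

/-- the variable part, restricted to variables of index below `i` -/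
noncomputable def lowL (i : ℕ) : Option (F ⊕ Fin n) → MvPolynomial (Fin n) F
  | some (Sum.inr j) => if j.val < i then X j else 0
  | _ => 0

theorem lowL_succ (i : ℕ) (l : Option (F ⊕ Fin n)) :
    lowL (i+1) l = lowL i l + ABP.edgeVal (selL i l) := by
  rcases l with _ | c | j
  · simp [lowL, selL, ABP.edgeVal]
  · simp [lowL, selL, ABP.edgeVal]
  · simp only [lowL, selL]
    rcases lt_trichotomy j.val i with h | h | h
    · rw [if_pos (by omega), if_pos h, if_neg (by omega)]; simp [ABP.edgeVal]
    · rw [if_pos (by omega), if_neg (by omega), if_pos h]; simp [ABP.edgeVal]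
    · rw [if_neg (by omega), if_neg (by omega), if_neg (by omega)]; simp [ABP.edgeVal]

theorem edgeVal_eq (i : ℕ) (hi : n ≤ i) (l : Option (F ⊕ Fin n)) :
    ABP.edgeVal l = C (cpart l) + lowL i l := by
  rcases l with _ | c | j
  · simp [lowL, cpart, ABP.edgeVal]
  · simp [lowL, cpart, ABP.edgeVal]
  · simp only [lowL, cpart, ABP.edgeVal]
    rw [if_pos (by omega)]; simp

theorem term_step (i : ℕ) (g : MvPolynomial (Fin n) F) (l : Option (F ⊕ Fin n))
    (h : ∀ j, l = some (Sum.inr j) → tau j.val g = g) :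
    tau (i+1) (g * ABP.edgeVal l) = tau i (g * ABP.edgeVal l)
      + tau i g * ABP.edgeVal (carryL i l) + C (cpart l) * tau (i+1) g := by
  rcases l with _ | c | j
  · simp [carryL, cpart, ABP.edgeVal]
  · simp [carryL, cpart, ABP.edgeVal]; ring
  · have hj := h j rfl
    simp only [carryL, cpart, ABP.edgeVal, map_mul, tau_X]
    rcases lt_trichotomy j.val i with h | h | h
    · rw [if_pos (by omega), if_pos h, if_neg (by omega),
        tau_fix (by omega) hj, tau_fix (i := i) (by omega) hj]; simp
    · rw [if_pos (by omega), if_neg (by omega), if_pos h,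
        tau_fix (by omega) hj, tau_fix (i := i) (by omega) hj]; simp
    · rw [if_neg (by omega), if_neg (by omega), if_neg (by omega)]; simp

end tauLemmas

/-! ### evaluation by recursion -/
section evalLemmas
variable {F : Type} [Field F] {n : ℕ}

theorem pathsum {R : Type*} [CommSemiring R] (w : ℕ → ℕ) (hw : w 0 = 1)
    (e : ℕ → ℕ → ℕ → R) (g : ℕ → ℕ → R) (g0 : g 0 0 = 1) (m : ℕ)
    (hg : ∀ k, k < m → ∀ v, v < w (k+1) → g (k+1) v = ∑ u ∈ Finset.range (w k), g k u * e k u v)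
    (k : ℕ) (hk : k ≤ m) (h : ℕ → R) :
    ∑ π : (∀ i : Fin (k+1), Fin (w i)), (∏ j : Fin k, e j (π j.castSucc) (π j.succ)) *
      h (π (Fin.last k)) = ∑ v ∈ Finset.range (w k), g k v * h v := by
  induction k generalizing h with
  | zero =>
    rw [hw]
    have hu : Unique (∀ i : Fin (0+1), Fin (w i)) := by
      refine ⟨⟨fun i => ⟨0, ?_⟩⟩, ?_⟩
      · have : i = 0 := Fin.ext (by omega)
        subst this; simp [hw]
      · intro a; funext i
        have : i = 0 := Fin.ext (by omega)
        subst this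
        apply Fin.ext
        have := (a 0).isLt
        have h0 : w ((0 : Fin (0+1)) : ℕ) = 1 := hw
        omega
    have hval : ∀ π : (∀ i : Fin (0+1), Fin (w i)), ((π (Fin.last 0) : Fin _) : ℕ) = 0 := by
      intro π
      have := (π (Fin.last 0)).isLt
      have h0 : w ((Fin.last 0 : Fin (0+1)) : ℕ) = 1 := hw
      omega
    rw [Fintype.sum_unique, hval]
    simp [g0]
  | succ k ih =>
    rw [← (Fin.snocEquiv (fun i : Fin (k+1+1) => Fin (w i))).sum_comp, Fintype.sum_prod_type]
    have hterm : ∀ (x : Fin (w (Fin.last (k+1) : Fin (k+1+1))))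
        (p : ∀ i : Fin (k+1), Fin (w i)),
        (∏ j : Fin (k+1), e j ((Fin.snocEquiv (fun i : Fin (k+1+1) => Fin (w i))) (x, p) j.castSucc)
          ((Fin.snocEquiv (fun i : Fin (k+1+1) => Fin (w i))) (x, p) j.succ)) *
          h ((Fin.snocEquiv (fun i : Fin (k+1+1) => Fin (w i))) (x, p) (Fin.last (k+1)))
        = (∏ j : Fin k, e j (p j.castSucc) (p j.succ)) * (e k (p (Fin.last k)) x * h x) := by
      intro x p
      rw [Fin.prod_univ_castSucc]
      have h1 : ∀ i : Fin (k+1), (Fin.snocEquiv (fun i : Fin (k+1+1) => Fin (w i))) (x, p) i.castSucc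
          = p i := by
        intro i; simp [Fin.snocEquiv]
      have h2 : (Fin.snocEquiv (fun i : Fin (k+1+1) => Fin (w i))) (x, p) (Fin.last (k+1)) = x := by
        simp [Fin.snocEquiv]
      rw [h2]
      have h3 : ∀ j : Fin k, (Fin.snocEquiv (fun i : Fin (k+1+1) => Fin (w i))) (x, p)
          (j.castSucc.succ) = p j.succ := fun j => h1 j.succ
      have h4 : (Fin.snocEquiv (fun i : Fin (k+1+1) => Fin (w i))) (x, p)
          ((Fin.last k).succ) = x := h2
      simp only [h1, h3, h4]
      rw [mul_assoc]; rfl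
    refine Eq.trans (Finset.sum_congr rfl fun x _ => Finset.sum_congr rfl fun p _ => hterm x p) ?_
    have : ∀ x : Fin (w (Fin.last (k+1) : Fin (k+1+1))),
        ∑ p : (∀ i : Fin (k+1), Fin (w i)), (∏ j : Fin k, e j (p j.castSucc) (p j.succ)) *
          (e k (p (Fin.last k)) x * h x) = g (k+1) x * h x := by
      intro x
      rw [ih (by omega) (fun y => e k y x * h x), hg k (by omega) x x.isLt, Finset.sum_mul]
      exact Finset.sum_congr rfl fun _ _ => by ring
    refine Eq.trans (Finset.sum_congr rfl fun x _ => this x) ?_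
    exact (Finset.sum_range (fun v => g (k+1) v * h v)).symm

theorem eval_eq (P : ABP F n) (g : ℕ → ℕ → MvPolynomial (Fin n) F) (g0 : g 0 0 = 1)
    (hg : ∀ k, k < P.m → ∀ v, v < P.width (k+1) →
      g (k+1) v = ∑ u ∈ Finset.range (P.width k), g k u * ABP.edgeVal (P.label k u v)) :
    P.eval = g P.m 0 := by
  have := pathsum P.width P.w0 (fun k u v => ABP.edgeVal (P.label k u v)) g g0 P.m hg P.m le_rfl
    (fun _ => 1)
  simp only [mul_one] at this
  rw [ABP.eval, this, P.wm]; simp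

theorem span_coef {R : Type*} [CommRing R] [Algebra F R] {N : ℕ} (g : ℕ → R) (x : R)
    (h : x ∈ Submodule.span F (g '' Set.Iio N)) :
    ∃ c : ℕ → F, x = ∑ u ∈ Finset.range N, g u * algebraMap F R (c u) := by
  have : (Set.Iio N) = ((Finset.range N : Finset ℕ) : Set ℕ) := by ext; simp
  rw [this, Submodule.mem_span_image_finset_iff_exists_fun] at h
  obtain ⟨c, hc⟩ := h
  refine ⟨fun u => if h : u ∈ Finset.range N then c ⟨u, h⟩ else 0, ?_⟩
  rw [← hc, ← Finset.sum_attach (Finset.range N), Finset.univ_eq_attach]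
  refine Finset.sum_congr rfl fun u _ => ?_
  simp only [u.2, dif_pos]
  rw [Algebra.smul_def, mul_comm]

open Classical in
theorem buildQ (w : ℕ → ℕ) (g : ℕ → ℕ → MvPolynomial (Fin n) F) (hw0 : w 0 = 1)
    (hwm : w (2*n) = 1) (g0 : g 0 0 = 1)
    (hodd : ∀ i, i < n → ∀ v, v < w (2*i+2) →
      g (2*i+2) v ∈ Submodule.span F (g (2*i+1) '' Set.Iio (w (2*i+1))))
    (lab : ℕ → ℕ → ℕ → Option (F ⊕ Fin n))
    (hlab : ∀ i u v j, lab i u v = some (Sum.inr j) → j.val = i)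
    (heven : ∀ i, i < n → ∀ v, v < w (2*i+1) →
      g (2*i+1) v = ∑ u ∈ Finset.range (w (2*i)), g (2*i) u * ABP.edgeVal (lab i u v)) :
    ∃ Q : ABP F n, Q.IsROABP ∧ Q.OrderedAsc ∧ Q.eval = g (2*n) 0 ∧
      Q.size = ∑ i ∈ Finset.range (2*n+1), w i := by
  have hc : ∀ i v, ∃ c : ℕ → F, i < n → v < w (2*i+2) →
      g (2*i+2) v = ∑ u ∈ Finset.range (w (2*i+1)), g (2*i+1) u * MvPolynomial.C (c u) := by
    intro i v
    by_cases h : i < n ∧ v < w (2*i+2)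
    · obtain ⟨c, hc⟩ := span_coef _ _ (hodd i h.1 v h.2)
      exact ⟨c, fun _ _ => hc⟩
    · exact ⟨0, fun h1 h2 => absurd ⟨h1, h2⟩ h⟩
  choose c hc using hc
  let Q : ABP F n :=
    { m := 2*n, width := w, w0 := hw0, wm := hwm
      label := fun k u v => if k % 2 = 0 then lab (k/2) u v else some (Sum.inl (c (k/2) v u)) }
  have key : ∀ x k u v, Q.label k u v = some (Sum.inr x) → k = 2 * x.val := by
    intro x k u v h
    simp only [Q] at h
    split_ifs at h with h1
    · have := hlab _ _ _ _ h
      omega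
    · simp at h
  have key2 : ∀ x j, Q.VarInLayer x j → j = 2 * x.val := by
    rintro x j ⟨_, u, v, _, _, h⟩
    exact key _ _ _ _ h
  refine ⟨Q, ⟨?_, ?_, ?_⟩, ?_, ?_, rfl⟩
  · intro j x x' h h'
    have := key2 _ _ h
    have := key2 _ _ h'
    apply Fin.ext; omega
  · intro x j j' h h'
    rw [key2 _ _ h, key2 _ _ h']
  · intro π _ x
    have : {k : ℕ | k < Q.m ∧ Q.label k (π k) (π (k + 1)) = some (Sum.inr x)} ⊆ {2 * x.val} := by
      rintro k ⟨_, h⟩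
      exact key _ _ _ _ h
    calc _ ≤ _ := Set.ncard_le_ncard this (Set.finite_singleton _)
      _ = 1 := Set.ncard_singleton _
  · intro x x' j j' h h' hx
    have := key2 _ _ h
    have := key2 _ _ h'
    have : x.val < x'.val := hx
    omega
  · apply eval_eq Q g g0
    intro k hk v hv
    have hk' : k < 2 * n := hk
    rcases Nat.even_or_odd' k with ⟨i, rfl | rfl⟩
    · have := heven i (by omega) v hv
      rw [this]
      simp [Q]
    · have := hc i v (by omega) hv
      rw [show 2 * i + 1 + 1 = 2 * i + 2 from rfl, this]
      have h1 : (2 * i + 1) % 2 ≠ 0 := by omega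
      have h2 : (2 * i + 1) / 2 = i := by omega
      simp only [Q, if_neg h1, h2]
      rfl

end evalLemmas

section core
open MvPolynomial
variable {F : Type} [Field F] {n : ℕ}

/-- abstract data of a cleaned strict-interval program -/
structure CoreData (F : Type) [Field F] (n : ℕ) (V : Type) [Fintype V] [DecidableEq V] where
  s : V
  t : V
  base : V → V → Option (F ⊕ Fin n)
  G : V → MvPolynomial (Fin n) F
  H : V → MvPolynomial (Fin n) F
  U : V → Prop
  Pre : V → Prop
  Post : V → Prop
  ly : V → ℕ
  M : ℕ
  ly_le : ∀ v, ly v ≤ M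
  hst : s ≠ t
  hly : ∀ u w, base u w ≠ none → ly u < ly w
  hG : ∀ v, G v = (if v = s then 1 else 0) + ∑ u, G u * ABP.edgeVal (base u v)
  hH : ∀ v, H v = (if v = t then 1 else 0) + ∑ w, H w * ABP.edgeVal (base v w)
  h1 : ∀ u w j, U u → base u w = some (Sum.inr j) → tau j.val (G u) = G u
  h2 : ∀ u w j, ¬ U w → base u w = some (Sum.inr j) → tau j.val (H w) = H w
  h3 : ∀ u w, base u w ≠ none → ¬ U u → ¬ U w
  hPre : ∀ u, Pre u → tau 0 (G u) = G u
  hPost : ∀ u, Post u → tau 0 (H u) = H u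
  hPU : ∀ u, Post u → ¬ U u
  h7 : ∀ u w, U u → ¬ U w → base u w ≠ none → Pre u ∨ Post w
  hs : Pre s
  ht : Post t
  hsin : ∀ u, base u s = none
  htout : ∀ u, base t u = none
  hsU : U s

namespace CoreData
variable {V : Type} [Fintype V] [DecidableEq V] (D : CoreData F n V)
open Classical

noncomputable def E (i : ℕ) : MvPolynomial (Fin n) F :=
  ∑ u, ∑ w, if D.U u ∧ ¬ D.U w then D.G u * lowL i (D.base u w) * D.H w else 0

noncomputable def val (i : ℕ) (u : V) : MvPolynomial (Fin n) F :=
  if u = D.t then D.E i else if D.U u then tau i (D.G u) else tau i (D.H u)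

noncomputable def lab (i : ℕ) (u w : V) : Option (F ⊕ Fin n) :=
  if w = D.s then (if u = D.s then some (Sum.inl 1) else none)
  else if w = D.t then
    (if u = D.t then some (Sum.inl 1) else if D.U u then selL i (D.base u D.t)
      else if D.Post u then none else selL i (D.base D.s u))
  else if D.U w then
    (if D.Pre w then (if ¬ D.U u ∧ ¬ D.Post u then selL i (D.base w u) else none)
     else if u = w then some (Sum.inl 1) else if D.U u then carryL i (D.base u w) else none)
  else
    (if D.Post w then (if D.U u then selL i (D.base u w) else none)
     else if u = w then some (Sum.inl 1) else if u = D.s then carryL i (D.base w D.t)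
     else if ¬ D.U u ∧ u ≠ D.t then carryL i (D.base w u) else none)

noncomputable def raw (i : ℕ) (w : V) : MvPolynomial (Fin n) F :=
  ∑ u, D.val i u * ABP.edgeVal (D.lab i u w)

theorem selL_inr {i : ℕ} {l : Option (F ⊕ Fin n)} {j : Fin n}
    (h : selL i l = some (Sum.inr j)) : j.val = i := by
  rcases l with _ | c | k <;> simp [selL] at h
  exact h.2 ▸ h.1

theorem carryL_inr {i : ℕ} {l : Option (F ⊕ Fin n)} {j : Fin n}
    (h : carryL i l = some (Sum.inr j)) : j.val = i := by
  rcases l with _ | c | k <;> simp [carryL] at h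
  exact h.2 ▸ h.1

theorem lab_inr (i : ℕ) (u w : V) (j : Fin n) (h : D.lab i u w = some (Sum.inr j)) :
    j.val = i := by
  unfold lab at h
  split_ifs at h <;> first | exact selL_inr h | exact carryL_inr h | simp at h

theorem tU : ¬ D.U D.t := D.hPU _ D.ht

theorem base_self (u : V) : D.base u u = none := by
  by_contra h
  exact lt_irrefl _ (D.hly _ _ h)

theorem G_s : D.G D.s = 1 := by
  rw [D.hG]; simp [D.hsin, ABP.edgeVal]

theorem H_t : D.H D.t = 1 := by
  rw [D.hH]; simp [D.htout, ABP.edgeVal]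

theorem val_s (i : ℕ) : D.val i D.s = 1 := by
  simp [val, D.hst, D.hsU, D.G_s]

theorem raw_s (i : ℕ) : D.raw i D.s = 1 := by
  unfold raw
  rw [Finset.sum_eq_single D.s]
  · simp [lab, ABP.edgeVal, D.val_s]
  · intro b _ hb; simp [lab, hb, ABP.edgeVal]
  · simp

noncomputable abbrev Sp (i : ℕ) : Submodule F (MvPolynomial (Fin n) F) :=
  Submodule.span F (Set.range (D.raw i))

theorem raw_mem (i : ℕ) (u : V) : D.raw i u ∈ D.Sp i := Submodule.subset_span ⟨u, rfl⟩

theorem Cmul_mem {i : ℕ} (c : F) {p : MvPolynomial (Fin n) F} (hp : p ∈ D.Sp i) :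
    C c * p ∈ D.Sp i := by
  rw [← MvPolynomial.smul_eq_C_mul]; exact Submodule.smul_mem _ _ hp

theorem C_mem (i : ℕ) (c : F) : C c ∈ D.Sp i := by
  have := D.Cmul_mem c (D.raw_mem i D.s)
  rwa [D.raw_s, mul_one] at this

theorem const_mem (i k : ℕ) {p : MvPolynomial (Fin n) F} (h : tau 0 p = p) :
    tau k p ∈ D.Sp i := by
  rw [tau_fix (Nat.zero_le _) h]
  obtain ⟨c, rfl⟩ := const_of_fix h
  exact D.C_mem i c

theorem raw_A (i : ℕ) (w : V) (hw : D.U w) (hp : ¬ D.Pre w) :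
    D.raw i w = tau i (D.G w) +
      ∑ u, tau i (D.G u) * ABP.edgeVal (carryL i (D.base u w)) := by
  have hws : w ≠ D.s := fun h => hp (h ▸ D.hs)
  have hwt : w ≠ D.t := fun h => D.tU (h ▸ hw)
  have : tau i (D.G w) = ∑ u, if u = w then tau i (D.G w) else 0 := by simp
  rw [this, ← Finset.sum_add_distrib]
  unfold raw
  refine Finset.sum_congr rfl fun u _ => ?_
  simp only [lab, hws, hwt, hw, hp, if_false, if_true]
  by_cases huw : u = w
  · subst huw
    simp [D.base_self, carryL, ABP.edgeVal, val, hw, hwt]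
  · simp only [huw, if_false, zero_add]
    by_cases hu : D.U u
    · have : u ≠ D.t := fun h => D.tU (h ▸ hu)
      simp [hu, val, this]
    · have : D.base u w = none := by
        by_contra hb
        exact D.h3 _ _ hb hu hw
      simp [hu, this, carryL, ABP.edgeVal]

theorem raw_D (i : ℕ) (w : V) (hw : ¬ D.U w) (hp : ¬ D.Post w) :
    D.raw i w = tau i (D.H w) +
      ∑ u, tau i (D.H u) * ABP.edgeVal (carryL i (D.base w u)) := by
  have hws : w ≠ D.s := fun h => hw (h ▸ D.hsU)
  have hwt : w ≠ D.t := fun h => hp (h ▸ D.ht)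
  have : tau i (D.H w) = ∑ u, if u = w then tau i (D.H w) else 0 := by simp
  rw [this, ← Finset.sum_add_distrib, ← Equiv.sum_comp (Equiv.swap D.s D.t)]
  unfold raw
  refine Finset.sum_congr rfl fun u _ => ?_
  simp only [lab, hws, hwt, hw, hp, if_false]
  by_cases hus : u = D.s
  · subst hus
    simp [Ne.symm hwt, Ne.symm hws, D.H_t, D.val_s]
  by_cases hut : u = D.t
  · subst hut
    simp [Ne.symm hwt, Ne.symm hws, D.hsin, carryL, ABP.edgeVal, Ne.symm D.hst]
  rw [Equiv.swap_apply_of_ne_of_ne hus hut]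
  by_cases huw : u = w
  · subst huw
    simp [D.base_self, carryL, ABP.edgeVal, val, hw, hwt]
  · simp only [huw, if_false, zero_add, hus]
    by_cases hu : D.U u
    · have : D.base w u = none := by
        by_contra hb
        exact D.h3 _ _ hb hw hu
      simp [hu, this, carryL, ABP.edgeVal]
    · simp [hu, val, hut]

theorem raw_Post (i : ℕ) (w : V) (hp : D.Post w) (hwt : w ≠ D.t) :
    D.raw i w = ∑ u, if D.U u then tau i (D.G u) * ABP.edgeVal (selL i (D.base u w)) else 0 := by
  have hw := D.hPU _ hp
  have hws : w ≠ D.s := fun h => hw (h ▸ D.hsU)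
  unfold raw
  refine Finset.sum_congr rfl fun u _ => ?_
  simp only [lab, hws, hwt, hw, hp, if_false, if_true]
  by_cases hu : D.U u
  · have : u ≠ D.t := fun h => D.tU (h ▸ hu)
    simp [hu, val, this]
  · simp [hu, ABP.edgeVal]

theorem raw_Pre (i : ℕ) (w : V) (hw : D.U w) (hp : D.Pre w) (hws : w ≠ D.s) :
    D.raw i w = ∑ u, if ¬ D.U u ∧ ¬ D.Post u then
      tau i (D.H u) * ABP.edgeVal (selL i (D.base w u)) else 0 := by
  have hwt : w ≠ D.t := fun h => D.tU (h ▸ hw)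
  unfold raw
  refine Finset.sum_congr rfl fun u _ => ?_
  simp only [lab, hws, hwt, hw, hp, if_false, if_true]
  by_cases hu : ¬ D.U u ∧ ¬ D.Post u
  · have : u ≠ D.t := fun h => hu.2 (h ▸ D.ht)
    simp [hu, val, this]
  · simp [hu, ABP.edgeVal]

theorem raw_t (i : ℕ) :
    D.raw i D.t = D.E i +
      (∑ u, if D.U u then tau i (D.G u) * ABP.edgeVal (selL i (D.base u D.t)) else 0) +
      ∑ u, if ¬ D.U u ∧ ¬ D.Post u then
        tau i (D.H u) * ABP.edgeVal (selL i (D.base D.s u)) else 0 := by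
  have : D.E i = ∑ u, if u = D.t then D.E i else 0 := by simp
  rw [this, ← Finset.sum_add_distrib, ← Finset.sum_add_distrib]
  unfold raw
  refine Finset.sum_congr rfl fun u _ => ?_
  simp only [lab, Ne.symm D.hst, if_false, if_true]
  by_cases hut : u = D.t
  · subst hut
    simp [D.tU, D.ht, ABP.edgeVal, val]
  by_cases hu : D.U u
  · simp [hu, val, hut]
  · by_cases hp : D.Post u
    · simp [hu, hp, hut, ABP.edgeVal]
    · simp [hu, hp, hut, val]

theorem mem_U (i : ℕ) (u : V) (hu : D.U u) : tau (i+1) (D.G u) ∈ D.Sp i := by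
  induction h : D.ly u using Nat.strong_induction_on generalizing u with
  | _ k ih =>
    subst h
    by_cases hp : D.Pre u
    · exact D.const_mem _ _ (D.hPre u hp)
    have hus : u ≠ D.s := fun h => hp (h ▸ D.hs)
    have e1 : D.G u = ∑ u', D.G u' * ABP.edgeVal (D.base u' u) := by
      conv_lhs => rw [D.hG]
      simp [hus]
    have key : tau (i+1) (D.G u) = D.raw i u +
        ∑ u', C (cpart (D.base u' u)) * tau (i+1) (D.G u') := by
      rw [D.raw_A i u hu hp]
      conv_lhs => rw [e1]
      conv_rhs => rw [e1]
      rw [map_sum, map_sum, ← Finset.sum_add_distrib, ← Finset.sum_add_distrib]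
      refine Finset.sum_congr rfl fun u' _ => ?_
      apply term_step
      intro j hj
      refine D.h1 u' u j ?_ hj
      by_contra hu'
      exact D.h3 u' u (by simp [hj]) hu' hu
    rw [key]
    refine Submodule.add_mem _ (D.raw_mem _ _) (Submodule.sum_mem _ fun u' _ => ?_)
    by_cases hb : D.base u' u = none
    · simp [hb, cpart]
    · refine D.Cmul_mem _ (ih _ (D.hly _ _ hb) u' ?_ rfl)
      by_contra hu'
      exact D.h3 u' u hb hu' hu

theorem mem_nU (i : ℕ) (u : V) (hu : ¬ D.U u) : tau (i+1) (D.H u) ∈ D.Sp i := by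
  induction h : D.M - D.ly u using Nat.strong_induction_on generalizing u with
  | _ k ih =>
    subst h
    by_cases hp : D.Post u
    · exact D.const_mem _ _ (D.hPost u hp)
    have hut : u ≠ D.t := fun h => hp (h ▸ D.ht)
    have e1 : D.H u = ∑ u', D.H u' * ABP.edgeVal (D.base u u') := by
      conv_lhs => rw [D.hH]
      simp [hut]
    have key : tau (i+1) (D.H u) = D.raw i u +
        ∑ u', C (cpart (D.base u u')) * tau (i+1) (D.H u') := by
      rw [D.raw_D i u hu hp]
      conv_lhs => rw [e1]
      conv_rhs => rw [e1]
      rw [map_sum, map_sum, ← Finset.sum_add_distrib, ← Finset.sum_add_distrib]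
      refine Finset.sum_congr rfl fun u' _ => ?_
      apply term_step
      intro j hj
      exact D.h2 u u' j (D.h3 u u' (by simp [hj]) hu) hj
    rw [key]
    refine Submodule.add_mem _ (D.raw_mem _ _) (Submodule.sum_mem _ fun u' _ => ?_)
    by_cases hb : D.base u u' = none
    · simp [hb, cpart]
    · have := D.hly _ _ hb
      have := D.ly_le u'
      exact D.Cmul_mem _ (ih _ (by omega) u' (D.h3 u u' hb hu) rfl)

theorem sel_fix {i : ℕ} {l : Option (F ⊕ Fin n)} {g : MvPolynomial (Fin n) F}
    (h : ∀ j, l = some (Sum.inr j) → tau j.val g = g) :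
    g * ABP.edgeVal (selL i l) = tau i g * ABP.edgeVal (selL i l) := by
  rcases l with _ | c | j
  · simp [selL, ABP.edgeVal]
  · simp [selL, ABP.edgeVal]
  · by_cases hj : j.val = i
    · have := h j rfl
      rw [hj] at this
      rw [this]
    · simp [selL, hj, ABP.edgeVal]

theorem mem_E (i : ℕ) : D.E (i+1) ∈ D.Sp i := by
  set α : V → MvPolynomial (Fin n) F := fun w =>
    ∑ u, if D.U u then tau i (D.G u) * ABP.edgeVal (selL i (D.base u w)) else 0 with hα
  set β : V → MvPolynomial (Fin n) F := fun u =>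
    ∑ w, if ¬ D.U w ∧ ¬ D.Post w then
        tau i (D.H w) * ABP.edgeVal (selL i (D.base u w)) else 0 with hβ
  have key : D.E (i+1) = D.E i + (∑ w, if D.Post w then D.H w * α w else 0) +
      ∑ u, if D.U u ∧ D.Pre u then D.G u * β u else 0 := by
    have hA : (∑ w, if D.Post w then D.H w * α w else 0) =
        ∑ u, ∑ w, if D.Post w ∧ D.U u then
          D.H w * (tau i (D.G u) * ABP.edgeVal (selL i (D.base u w))) else 0 := by
      rw [Finset.sum_comm]
      refine Finset.sum_congr rfl fun w _ => ?_
      by_cases hw : D.Post w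
      · simp only [hw, if_true, hα, Finset.mul_sum, true_and, mul_ite, mul_zero]
      · simp [hw]
    have hB : (∑ u, if D.U u ∧ D.Pre u then D.G u * β u else 0) =
        ∑ u, ∑ w, if (D.U u ∧ D.Pre u) ∧ (¬ D.U w ∧ ¬ D.Post w) then
          D.G u * (tau i (D.H w) * ABP.edgeVal (selL i (D.base u w))) else 0 := by
      refine Finset.sum_congr rfl fun u _ => ?_
      by_cases hu : D.U u ∧ D.Pre u
      · simp only [hu, if_true, hβ, Finset.mul_sum, true_and, mul_ite, mul_zero, and_self]
      · simp [hu]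
    rw [hA, hB]
    unfold E
    rw [← Finset.sum_add_distrib, ← Finset.sum_add_distrib]
    refine Finset.sum_congr rfl fun u _ => ?_
    rw [← Finset.sum_add_distrib, ← Finset.sum_add_distrib]
    refine Finset.sum_congr rfl fun w _ => ?_
    by_cases hu : D.U u
    · by_cases hw : D.U w
      · have : ¬ D.Post w := fun h => D.hPU _ h hw
        simp [hw, this]
      · have eG := sel_fix (i := i) (fun j hj => D.h1 u w j hu hj)
        have eH := sel_fix (i := i) (fun j hj => D.h2 u w j hw hj)
        have e0 : D.G u * lowL (i+1) (D.base u w) * D.H w =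
            D.G u * lowL i (D.base u w) * D.H w +
            D.G u * ABP.edgeVal (selL i (D.base u w)) * D.H w := by
          rw [lowL_succ]; ring
        by_cases hp : D.Post w
        · simp only [hu, hw, hp, e0, ← eG]
          simp; ring
        · by_cases hq : D.Pre u
          · simp only [hu, hw, hp, hq, e0, ← eH]
            simp; ring
          · have hb : D.base u w = none := by
              by_contra hb
              rcases D.h7 u w hu hw hb with h | h
              · exact hq h
              · exact hp h
            simp [hb, lowL, selL, ABP.edgeVal]
    · simp [hu]
  have k2 : D.E (i+1) = D.raw i D.t +
      (∑ w ∈ Finset.univ.erase D.t, if D.Post w then D.H w * α w else 0) +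
      ∑ u ∈ Finset.univ.erase D.s, if D.U u ∧ D.Pre u then D.G u * β u else 0 := by
    rw [key, D.raw_t, ← Finset.add_sum_erase _ _ (Finset.mem_univ D.t),
      ← Finset.add_sum_erase Finset.univ (fun u => if D.U u ∧ D.Pre u then D.G u * β u else 0)
        (Finset.mem_univ D.s)]
    simp only [D.ht, D.hsU, D.hs, if_true, D.G_s, D.H_t, one_mul, and_self, hα, hβ]
    ring
  rw [k2]
  refine Submodule.add_mem _ (Submodule.add_mem _ (D.raw_mem _ _)
    (Submodule.sum_mem _ fun w hw => ?_)) (Submodule.sum_mem _ fun u hu => ?_)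
  · split_ifs with hp
    · have := D.raw_Post i w hp (Finset.ne_of_mem_erase hw)
      obtain ⟨c, hc⟩ := const_of_fix (D.hPost w hp)
      rw [hc]
      refine D.Cmul_mem _ ?_
      simp only [hα]
      rw [← this]; exact D.raw_mem _ _
    · exact Submodule.zero_mem _
  · split_ifs with hp
    · have := D.raw_Pre i u hp.1 hp.2 (Finset.ne_of_mem_erase hu)
      obtain ⟨c, hc⟩ := const_of_fix (D.hPre u hp.2)
      rw [hc]
      refine D.Cmul_mem _ ?_
      simp only [hβ]
      rw [← this]; exact D.raw_mem _ _
    · exact Submodule.zero_mem _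

theorem val_mem (i : ℕ) (u : V) : D.val (i+1) u ∈ D.Sp i := by
  unfold val
  split_ifs with h1 h2
  · exact D.mem_E i
  · exact D.mem_U i u h2
  · exact D.mem_nU i u h2

theorem val_zero (u : V) : ∃ c : F, D.val 0 u = C c := by
  unfold val
  split_ifs with h1 h2
  · refine ⟨0, ?_⟩
    have : ∀ l : Option (F ⊕ Fin n), lowL 0 l = 0 := by
      intro l; rcases l with _ | c | j <;> simp [lowL]
    simp [E, this]
  · exact tau_zero _
  · exact tau_zero _

theorem cut : D.H D.s = ∑ u, ∑ w, if D.U u ∧ ¬ D.U w then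
    D.G u * ABP.edgeVal (D.base u w) * D.H w else 0 := by
  have hA : ∑ u, (if D.U u then D.G u * D.H u else 0) =
      ∑ u, ∑ w, if D.U u then D.G u * ABP.edgeVal (D.base u w) * D.H w else 0 := by
    refine Finset.sum_congr rfl fun u _ => ?_
    by_cases hu : D.U u
    · have hut : u ≠ D.t := fun h => D.tU (h ▸ hu)
      simp only [hu, if_true]
      rw [D.hH u]
      simp only [hut, if_false, zero_add, Finset.mul_sum]
      exact Finset.sum_congr rfl fun w _ => by ring
    · simp [hu]
  have hB : ∑ w, (if D.U w then D.G w * D.H w else 0) =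
      D.H D.s + ∑ w, ∑ u, if D.U u ∧ D.U w then
        D.G u * ABP.edgeVal (D.base u w) * D.H w else 0 := by
    have : D.H D.s = ∑ w, if w = D.s then D.H w else 0 := by simp
    rw [this, ← Finset.sum_add_distrib]
    refine Finset.sum_congr rfl fun w _ => ?_
    by_cases hw : D.U w
    · simp only [hw, if_true, and_true]
      conv_lhs => rw [D.hG w]
      rw [add_mul, Finset.sum_mul]
      congr 1
      · simp
      · refine Finset.sum_congr rfl fun u _ => ?_
        by_cases hu : D.U u
        · simp [hu]
        · have : D.base u w = none := by
            by_contra hb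
            exact D.h3 _ _ hb hu hw
          simp [this, ABP.edgeVal]
    · have : w ≠ D.s := fun h => hw (h ▸ D.hsU)
      simp [hw, this]
  rw [Finset.sum_comm, hA] at hB
  rw [← sub_eq_iff_eq_add] at hB
  rw [← hB, ← Finset.sum_sub_distrib]
  refine Finset.sum_congr rfl fun u _ => ?_
  rw [← Finset.sum_sub_distrib]
  refine Finset.sum_congr rfl fun w _ => ?_
  by_cases hu : D.U u <;> by_cases hw : D.U w <;> simp [hu, hw]

theorem f_mem (i : ℕ) (hi : n ≤ i + 1) : D.H D.s ∈ D.Sp i := by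
  have : D.H D.s = D.E (i+1) + ∑ u, ∑ w, if D.U u ∧ ¬ D.U w then
      C (cpart (D.base u w)) * (D.G u * D.H w) else 0 := by
    rw [D.cut, E, ← Finset.sum_add_distrib]
    refine Finset.sum_congr rfl fun u _ => ?_
    rw [← Finset.sum_add_distrib]
    refine Finset.sum_congr rfl fun w _ => ?_
    split_ifs
    · rw [edgeVal_eq (i+1) hi]; ring
    · simp
  rw [this]
  refine Submodule.add_mem _ (D.mem_E i) (Submodule.sum_mem _ fun u _ =>
    Submodule.sum_mem _ fun w _ => ?_)
  split_ifs with h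
  · by_cases hb : D.base u w = none
    · simp [hb, cpart]
    refine D.Cmul_mem _ ?_
    rcases D.h7 u w h.1 h.2 hb with hp | hp
    · obtain ⟨c, hc⟩ := const_of_fix (D.hPre u hp)
      rw [hc]
      refine D.Cmul_mem _ ?_
      have := D.mem_nU i w h.2
      rwa [tau_top hi] at this
    · obtain ⟨c, hc⟩ := const_of_fix (D.hPost w hp)
      rw [hc, mul_comm]
      refine D.Cmul_mem _ ?_
      have := D.mem_U i u h.1
      rwa [tau_top hi] at this
  · exact Submodule.zero_mem _

end CoreData
end core

section coreToQ
open MvPolynomial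
variable {F : Type} [Field F] {n : ℕ}

theorem coreQ (hn : 0 < n) {V : Type} [Fintype V] [DecidableEq V] (D : CoreData F n V) :
    ∃ Q : ABP F n, Q.IsROABP ∧ Q.OrderedAsc ∧ Q.eval = D.H D.s ∧
      Q.size ≤ 2 * n * Fintype.card V := by
  classical
  set S := Fintype.card V with hS
  have hS2 : 2 ≤ S := by
    rw [hS]; exact Fintype.one_lt_card_iff.mpr ⟨D.s, D.t, D.hst⟩
  let e : V ≃ Fin S := Fintype.equivFin V
  let nd : ℕ → V := fun a => if h : a < S then e.symm ⟨a, h⟩ else D.s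
  have hnd : ∀ v, ∃ a, a < S ∧ nd a = v := fun v => ⟨e v, (e v).isLt, by simp [nd]⟩
  have hsum : ∀ φ : V → MvPolynomial (Fin n) F,
      ∑ u, φ u = ∑ a ∈ Finset.range S, φ (nd a) := by
    intro φ
    rw [Finset.sum_range, ← Equiv.sum_comp e.symm]
    exact Finset.sum_congr rfl fun a _ => by simp [nd]
  let w : ℕ → ℕ := fun k => if k = 0 then 1 else if k = 2*n then 1 else if k = 1 then 2 else S
  let g : ℕ → ℕ → MvPolynomial (Fin n) F := fun k a =>
    if k = 0 then 1 else if k = 2*n then D.H D.s else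
    if k = 1 then (if a = 0 then 1 else X ⟨0, hn⟩) else
    if k % 2 = 0 then D.val (k/2) (nd a) else D.raw (k/2) (nd a)
  let lb : ℕ → ℕ → ℕ → Option (F ⊕ Fin n) := fun i a b =>
    if i = 0 then (if b = 0 then some (Sum.inl 1) else some (Sum.inr ⟨0, hn⟩))
    else D.lab i (nd a) (nd b)
  have hspan : ∀ i, i < n → D.Sp i ≤ Submodule.span F (g (2*i+1) '' Set.Iio (w (2*i+1))) := by
    intro i hi
    rw [Submodule.span_le]
    rintro _ ⟨v, rfl⟩
    by_cases h0 : i = 0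
    · subst h0
      have hw1 : w (2*0+1) = 2 := by simp [w]; omega
      have m0 : (1 : MvPolynomial (Fin n) F) ∈
          Submodule.span F (g (2*0+1) '' Set.Iio (w (2*0+1))) := by
        apply Submodule.subset_span
        refine ⟨0, by simp [hw1], ?_⟩
        simp [g]; omega
      have m1 : (X ⟨0, hn⟩ : MvPolynomial (Fin n) F) ∈
          Submodule.span F (g (2*0+1) '' Set.Iio (w (2*0+1))) := by
        apply Submodule.subset_span
        refine ⟨1, by simp [hw1], ?_⟩
        simp [g]; omega
      refine Submodule.sum_mem _ fun u _ => ?_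
      obtain ⟨c, hc⟩ := D.val_zero u
      rw [hc, ← MvPolynomial.smul_eq_C_mul]
      apply Submodule.smul_mem
      rcases hl : D.lab 0 u v with _ | c | j
      · simp [ABP.edgeVal]
      · have := Submodule.smul_mem _ c m0
        rwa [MvPolynomial.smul_eq_C_mul, mul_one] at this
      · have := D.lab_inr _ _ _ _ hl
        have : j = ⟨0, hn⟩ := Fin.ext this
        subst this
        exact m1
    · obtain ⟨a, ha, rfl⟩ := hnd v
      apply Submodule.subset_span
      have e1 : ¬ (2*i+1 = 2*n) := by omega
      have e2 : ¬ (2*i+1 = 1) := by omega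
      have e3 : ¬ ((2*i+1) % 2 = 0) := by omega
      have e4 : (2*i+1)/2 = i := by omega
      refine ⟨a, ?_, ?_⟩
      · simp only [w, e1, e2, if_false]; simpa using ha
      · simp only [g, e1, e2, e3, e4, if_false]; simp
  obtain ⟨Q, h1, h2, h3, h4⟩ := buildQ w g (by simp [w]) (by simp [w]) (by simp [g])
    (by
      intro i hi v hv
      apply hspan i hi
      by_cases hl : i + 1 = n
      · have : g (2*i+2) v = D.H D.s := by
          have : 2*i+2 = 2*n := by omega
          simp only [g, this]; simp; omega
        rw [this]
        exact D.f_mem i (by omega)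
      · have e1 : ¬ (2*i+2 = 2*n) := by omega
        have e2 : ¬ (2*i+2 = 1) := by omega
        have e3 : ((2*i+2) % 2 = 0) := by omega
        have e4 : (2*i+2)/2 = i+1 := by omega
        have : g (2*i+2) v = D.val (i+1) (nd v) := by
          simp only [g, e1, e2, e3, e4, if_false, if_true]; simp
        rw [this]
        exact D.val_mem i _)
    lb
    (by
      intro i a b j h
      simp only [lb] at h
      by_cases h1 : i = 0
      · by_cases h2 : b = 0
        · simp [h1, h2] at h
        · simp [h1, h2] at h; rw [← h, h1]
      · rw [if_neg h1] at h
        exact D.lab_inr _ _ _ _ h)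
    (by
      intro i hi v hv
      by_cases h0 : i = 0
      · subst h0
        have e1 : ¬ (1 = 2*n) := by omega
        simp only [w, g, lb]
        by_cases hv : v = 0
        · simp [hv, e1, ABP.edgeVal]
        · simp [hv, e1, ABP.edgeVal]
      · have e1 : ¬ (2*i+1 = 2*n) := by omega
        have e2 : ¬ (2*i+1 = 1) := by omega
        have e3 : ¬ ((2*i+1) % 2 = 0) := by omega
        have e4 : (2*i+1)/2 = i := by omega
        have e1' : ¬ (2*i = 2*n) := by omega
        have e2' : ¬ (2*i = 1) := by omega
        have e3' : ((2*i) % 2 = 0) := by omega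
        have e4' : (2*i)/2 = i := by omega
        have e5 : ¬ (2*i = 0) := by omega
        have e6 : ¬ (2*i+1 = 0) := by omega
        simp only [w, g, lb, e1, e2, e3, e4, e1', e2', e3', e4', e5, e6, h0, if_false, if_true]
        rw [CoreData.raw, hsum])
  refine ⟨Q, h1, h2, ?_, ?_⟩
  · rw [h3]; simp [g]; omega
  · rw [h4, Finset.sum_range_succ]
    obtain ⟨k, hk⟩ : ∃ k, n = k + 1 := ⟨n - 1, by omega⟩
    have : ∑ i ∈ Finset.range (2*n), w i = 3 + 2 * k * S := by
      rw [show 2*n = 2*k+1+1 by omega, Finset.sum_range_succ', Finset.sum_range_succ']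
      have hc : ∀ i ∈ Finset.range (2*k), w (i+1+1) = S := by
        intro i hi
        have := Finset.mem_range.mp hi
        simp only [w]
        rw [if_neg (by omega), if_neg (by omega), if_neg (by omega)]
      rw [Finset.sum_congr rfl hc]
      have a1 : w (0+1) = 2 := by simp [w]; omega
      have a0 : w 0 = 1 := by simp [w]
      rw [a1, a0]; simp; ring
    have hlast : w (2*n) = 1 := by simp [w]
    have h5 : 2 * n * S = 2 * k * S + 2 * S := by rw [hk]; ring
    rw [this, hlast, h5]
    omega

end coreToQ

section bridge
open MvPolynomial
variable {F : Type} {n : ℕ}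

def Conn (P : ABP F n) (i j u v : ℕ) : Prop :=
  ∃ π : ℕ → ℕ, π i = u ∧ π j = v ∧ (∀ k, i ≤ k → k ≤ j → π k < P.width k) ∧
    (∀ k, i ≤ k → k < j → P.label k (π k) (π (k + 1)) ≠ none)

/-- glue a path, an edge -/
theorem varInSub_snoc (P : ABP F n) {i j u v w : ℕ} {x : Fin n} (hij : i ≤ j)
    (hw : w < P.width (j+1)) (hl : P.label j v w ≠ none) (h : P.VarInSub i j u v x) :
    P.VarInSub i (j+1) u w x := by
  obtain ⟨π, h1, h2, h3, h4, k, hk1, hk2, hk3⟩ := h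
  have e : ∀ k, k ≤ j → Function.update π (j+1) w k = π k := fun k hk =>
    Function.update_of_ne (by omega) _ _
  refine ⟨Function.update π (j+1) w, by rw [e i hij, h1], by simp, ?_, ?_, k, hk1, by omega, ?_⟩
  · intro k hk hk'
    by_cases h : k = j+1
    · subst h; simpa using hw
    · rw [e k (by omega)]; exact h3 k hk (by omega)
  · intro k hk hk'
    rw [e k (by omega)]
    by_cases h : k = j
    · subst h; simpa [h2] using hl
    · rw [e (k+1) (by omega)]; exact h4 k hk (by omega)
  · rw [e k (by omega), e (k+1) (by omega)]; exact hk3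

theorem varInSub_snoc_new (P : ABP F n) {i j u v w : ℕ} {x : Fin n} (hij : i ≤ j)
    (hw : w < P.width (j+1)) (hl : P.label j v w = some (Sum.inr x)) (h : Conn P i j u v) :
    P.VarInSub i (j+1) u w x := by
  obtain ⟨π, h1, h2, h3, h4⟩ := h
  have e : ∀ k, k ≤ j → Function.update π (j+1) w k = π k := fun k hk =>
    Function.update_of_ne (by omega) _ _
  refine ⟨Function.update π (j+1) w, by rw [e i hij, h1], by simp, ?_, ?_, j, hij, by omega, ?_⟩
  · intro k hk hk'
    by_cases h : k = j+1
    · subst h; simpa using hw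
    · rw [e k (by omega)]; exact h3 k hk (by omega)
  · intro k hk hk'
    rw [e k (by omega)]
    by_cases h : k = j
    · subst h; simp [h2, hl]
    · rw [e (k+1) (by omega)]; exact h4 k hk (by omega)
  · rw [e j (by omega)]; simpa [h2] using hl

theorem varInSub_cons (P : ABP F n) {i j u v w : ℕ} {x : Fin n} (hij : i + 1 ≤ j)
    (hu : u < P.width i) (hl : P.label i u v ≠ none) (h : P.VarInSub (i+1) j v w x) :
    P.VarInSub i j u w x := by
  obtain ⟨π, h1, h2, h3, h4, k, hk1, hk2, hk3⟩ := h
  have e : ∀ k, i + 1 ≤ k → Function.update π i u k = π k := fun k hk =>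
    Function.update_of_ne (by omega) _ _
  refine ⟨Function.update π i u, by simp, by rw [e j hij, h2], ?_, ?_, k, by omega, by omega, ?_⟩
  · intro k hk hk'
    by_cases h : k = i
    · subst h; simpa using hu
    · rw [e k (by omega)]; exact h3 k (by omega) (by omega)
  · intro k hk hk'
    rw [e (k+1) (by omega)]
    by_cases h : k = i
    · subst h; simpa [h1] using hl
    · rw [e k (by omega)]; exact h4 k (by omega) (by omega)
  · rw [e k (by omega), e (k+1) (by omega)]; exact hk3

theorem varInSub_cons_new (P : ABP F n) {i j u v w : ℕ} {x : Fin n} (hij : i + 1 ≤ j)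
    (hu : u < P.width i) (hl : P.label i u v = some (Sum.inr x)) (h : Conn P (i+1) j v w) :
    P.VarInSub i j u w x := by
  obtain ⟨π, h1, h2, h3, h4⟩ := h
  have e : ∀ k, i + 1 ≤ k → Function.update π i u k = π k := fun k hk =>
    Function.update_of_ne (by omega) _ _
  refine ⟨Function.update π i u, by simp, by rw [e j hij, h2], ?_, ?_, i, le_rfl, by omega, ?_⟩
  · intro k hk hk'
    by_cases h : k = i
    · subst h; simpa using hu
    · rw [e k (by omega)]; exact h3 k (by omega) (by omega)
  · intro k hk hk'
    rw [e (k+1) (by omega)]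
    by_cases h : k = i
    · subst h; simp [h1, hl]
    · rw [e k (by omega)]; exact h4 k (by omega) (by omega)
  · rw [e (i+1) (by omega)]; simpa [h1] using hl

open Classical in
noncomputable def cleanABP (P : ABP F n) : ABP F n :=
  { P with label := fun k u v =>
      if Conn P 0 k 0 u ∧ Conn P (k+1) P.m v 0 then P.label k u v else none }

theorem clean_eval [Field F] (P : ABP F n) : (cleanABP P).eval = P.eval := by
  unfold ABP.eval
  refine Finset.sum_congr rfl fun π _ => ?_
  change (∀ i : Fin (P.m + 1), Fin (P.width i)) at π
  change (∏ k : Fin P.m, ABP.edgeVal ((cleanABP P).label k (π k.castSucc) (π k.succ))) =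
    ∏ k : Fin P.m, ABP.edgeVal (P.label k (π k.castSucc) (π k.succ))
  by_cases h : ∃ k : Fin P.m, P.label k (π k.castSucc) (π k.succ) = none
  · obtain ⟨k, hk⟩ := h
    rw [Finset.prod_eq_zero (Finset.mem_univ k), Finset.prod_eq_zero (Finset.mem_univ k)]
    · simp [hk, ABP.edgeVal]
    · simp [cleanABP, hk, ABP.edgeVal]
  · push Not at h
    refine Finset.prod_congr rfl fun k _ => ?_
    let p : ℕ → ℕ := fun j => if hj : j < P.m + 1 then π ⟨j, hj⟩ else 0
    have pw : ∀ j, j ≤ P.m → p j < P.width j := by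
      intro j hj
      have : j < P.m + 1 := by omega
      simp only [p, this, dif_pos]
      exact (π ⟨j, this⟩).isLt
    have pl : ∀ j, j < P.m → P.label j (p j) (p (j+1)) ≠ none := by
      intro j hj
      have h1 : j < P.m + 1 := by omega
      have h2 : j + 1 < P.m + 1 := by omega
      simp only [p, h1, h2, dif_pos]
      exact h ⟨j, hj⟩
    have p0 : p 0 = 0 := by
      have := pw 0 (by omega)
      rw [P.w0] at this; omega
    have pm : p P.m = 0 := by
      have := pw P.m (by omega)
      rw [P.wm] at this; omega
    have hk := k.isLt
    have hc : Conn P 0 k 0 (π k.castSucc) ∧ Conn P (k+1) P.m (π k.succ) 0 := by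
      refine ⟨⟨p, p0, ?_, fun j _ hj => pw j (by omega), fun j _ hj => pl j (by omega)⟩,
        ⟨p, ?_, pm, fun j _ hj => pw j (by omega), fun j _ hj => pl j (by omega)⟩⟩
      · have : (k : ℕ) < P.m + 1 := by omega
        simp only [p, this, dif_pos]; rfl
      · have : (k : ℕ) + 1 < P.m + 1 := by omega
        simp only [p, this, dif_pos]; rfl
    simp [cleanABP, hc]

/-- solutions of the linear recurrences -/
theorem exists_inv {V R : Type} [Fintype V] [DecidableEq V] [CommRing R] (A : Matrix V V R)
    (ly : V → ℕ) (M : ℕ) (hM : ∀ v, ly v ≤ M) (h : ∀ u w, A u w ≠ 0 → ly u < ly w) :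
    ∃ N : Matrix V V R, (∀ u w, N u w = (if u = w then 1 else 0) + ∑ x, N u x * A x w) ∧
      (∀ u w, N u w = (if u = w then 1 else 0) + ∑ x, A u x * N x w) := by
  have hp : ∀ k u w, (A ^ k) u w ≠ 0 → ly u + k ≤ ly w := by
    intro k
    induction k with
    | zero =>
      intro u w hu
      have : u = w := by
        by_contra hne
        exact hu (by simp [Matrix.one_apply, hne])
      simp [this]
    | succ k ih =>
      intro u w hu
      rw [pow_succ, Matrix.mul_apply] at hu
      obtain ⟨x, _, hx⟩ := Finset.exists_ne_zero_of_sum_ne_zero hu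
      have h1 := ih u x (left_ne_zero_of_mul hx)
      have h2 := h x w (right_ne_zero_of_mul hx)
      omega
  have hnil : IsNilpotent A := by
    refine ⟨M+1, ?_⟩
    ext u w
    by_contra hne
    have := hp _ _ _ hne
    have := hM w
    omega
  obtain ⟨B, hB⟩ := hnil.isUnit_one_sub
  have e1 : (↑B⁻¹ : Matrix V V R) = 1 + (↑B⁻¹ : Matrix V V R) * A := by
    have : (↑B⁻¹ : Matrix V V R) * (1 - A) = 1 := by rw [← hB]; exact B.inv_mul
    rw [mul_sub, mul_one, sub_eq_iff_eq_add] at this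
    exact this
  have e2 : (↑B⁻¹ : Matrix V V R) = 1 + A * (↑B⁻¹ : Matrix V V R) := by
    have : (1 - A) * (↑B⁻¹ : Matrix V V R) = 1 := by rw [← hB]; exact B.mul_inv
    rw [sub_mul, one_mul, sub_eq_iff_eq_add] at this
    exact this
  refine ⟨(↑B⁻¹ : Matrix V V R), fun u w => ?_, fun u w => ?_⟩
  · conv_lhs => rw [e1]
    rw [Matrix.add_apply, Matrix.one_apply, Matrix.mul_apply]
  · conv_lhs => rw [e2]
    rw [Matrix.add_apply, Matrix.one_apply, Matrix.mul_apply]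

theorem fix_of_vars [Field F] {V : Type} [Fintype V] [DecidableEq V] (s : V)
    (base : V → V → Option (F ⊕ Fin n)) (G : V → MvPolynomial (Fin n) F)
    (ly : V → ℕ) (hly : ∀ u w, base u w ≠ none → ly u < ly w)
    (hG : ∀ v, G v = (if v = s then 1 else 0) + ∑ u, G u * ABP.edgeVal (base u v))
    (Bf : V → Fin n → Prop)
    (hB1 : ∀ u w x, base u w ≠ none → Bf u x → Bf w x)
    (hB2 : ∀ u w x, base u w = some (Sum.inr x) → Bf w x)
    (j : ℕ) (v : V) (hv : ∀ a, Bf v a → a.val < j) : tau j (G v) = G v := by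
  induction h : ly v using Nat.strong_induction_on generalizing v with
  | _ k ih =>
    subst h
    rw [hG v, map_add, map_sum]
    congr 1
    · split_ifs <;> simp
    · refine Finset.sum_congr rfl fun u _ => ?_
      rw [map_mul]
      rcases hb : base u v with _ | c | x
      · simp [ABP.edgeVal]
      · have hne : base u v ≠ none := by simp [hb]
        rw [ih _ (hly _ _ hne) u (fun a ha => hv a (hB1 u v a hne ha)) rfl]
        simp [ABP.edgeVal, tau_C]
      · have hne : base u v ≠ none := by simp [hb]
        rw [ih _ (hly _ _ hne) u (fun a ha => hv a (hB1 u v a hne ha)) rfl]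
        simp only [ABP.edgeVal, tau_X]
        rw [if_pos (hv x (hB2 u v x hb))]

end bridge

section final
open MvPolynomial
variable {F : Type} {n : ℕ}

abbrev Nd (P : ABP F n) : Type := Σ i : Fin (P.m + 1), Fin (P.width i)

noncomputable def bs (P : ABP F n) (x y : Nd P) : Option (F ⊕ Fin n) :=
  if y.1.val = x.1.val + 1 then (cleanABP P).label x.1 x.2 y.2 else none

theorem bs_layer {P : ABP F n} {x y : Nd P} (h : bs P x y ≠ none) :
    y.1.val = x.1.val + 1 := by
  by_contra hne
  exact h (by simp [bs, hne])

theorem bs_eq {P : ABP F n} {x y : Nd P} (h : bs P x y ≠ none) :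
    P.label x.1 x.2 y.2 = bs P x y ∧ Conn P 0 x.1 0 x.2 ∧ Conn P (x.1+1) P.m y.2 0 := by
  have h1 := bs_layer h
  unfold bs cleanABP at h ⊢
  simp only [h1, if_true] at h ⊢
  by_cases hc : Conn P 0 x.1 0 x.2 ∧ Conn P (x.1+1) P.m y.2 0
  · simp [hc]
  · simp [hc] at h

def Bf (P : ABP F n) (v : Nd P) (a : Fin n) : Prop := P.VarInSub 0 v.1 0 v.2 a
def Af (P : ABP F n) (v : Nd P) (a : Fin n) : Prop := P.VarInSub v.1 P.m v.2 0 a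

theorem Bf_edge {P : ABP F n} {u w : Nd P} {a : Fin n} (h : bs P u w ≠ none) (ha : Bf P u a) :
    Bf P w a := by
  have h1 := bs_layer h
  have h2 := bs_eq h
  have hw : w.2.val < P.width (u.1.val + 1) := by rw [← h1]; exact w.2.isLt
  have := varInSub_snoc P (Nat.zero_le _) hw (by rw [h2.1]; exact h) ha
  have key : ∀ i, w.1.val = i → P.VarInSub 0 i 0 w.2 a → Bf P w a := by
    rintro i rfl h; exact h
  exact key _ h1 this

theorem Bf_new {P : ABP F n} {u w : Nd P} {a : Fin n} (h : bs P u w = some (Sum.inr a)) :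
    Bf P w a := by
  have h0 : bs P u w ≠ none := by simp [h]
  have h1 := bs_layer h0
  have h2 := bs_eq h0
  have hw : w.2.val < P.width (u.1.val + 1) := by rw [← h1]; exact w.2.isLt
  have := varInSub_snoc_new P (Nat.zero_le _) hw (by rw [h2.1]; exact h) h2.2.1
  have key : ∀ i, w.1.val = i → P.VarInSub 0 i 0 w.2 a → Bf P w a := by
    rintro i rfl h; exact h
  exact key _ h1 this

theorem Af_edge {P : ABP F n} {u w : Nd P} {a : Fin n} (h : bs P u w ≠ none) (ha : Af P w a) :
    Af P u a := by
  have h1 := bs_layer h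
  have h2 := bs_eq h
  have hm := w.1.isLt
  have ha : P.VarInSub (u.1.val + 1) P.m w.2 0 a := by
    have key : ∀ i, w.1.val = i → P.VarInSub i P.m w.2 0 a := by
      rintro i rfl; exact ha
    exact key _ h1
  exact varInSub_cons P (by omega) u.2.isLt (by rw [h2.1]; exact h) ha

theorem Af_new {P : ABP F n} {u w : Nd P} {a : Fin n} (h : bs P u w = some (Sum.inr a)) :
    Af P u a := by
  have h0 : bs P u w ≠ none := by simp [h]
  have h1 := bs_layer h0
  have h2 := bs_eq h0
  have hm := w.1.isLt
  exact varInSub_cons_new P (by omega) u.2.isLt (by rw [h2.1]; exact h) h2.2.2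

theorem dich (P : StrictIntervalABP F n) (v : Nd P.toABP) :
    (∀ a c, Bf P.toABP v a → Af P.toABP v c → a < c) ∨
    (∀ a c, Bf P.toABP v a → Af P.toABP v c → c < a) := by
  by_cases h0 : v.1.val = 0
  · left
    rintro a c ⟨π, _, _, _, _, k, _, hk, _⟩ _
    omega
  by_cases hm : v.1.val = P.m
  · left
    rintro a c _ ⟨π, _, _, _, _, k, hk1, hk, _⟩
    omega
  have hlt := v.1.isLt
  have hw0 : 0 < P.width 0 := by rw [P.w0]; omega
  have hwm : 0 < P.width P.m := by rw [P.wm]; omega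
  have d := P.disj 0 v.1 P.m 0 v.2 0 (by omega) (by omega) le_rfl hw0 v.2.isLt hwm
  have l1 := P.lo_le_hi 0 v.1 0 v.2 (by omega) (by omega) hw0 v.2.isLt
  have l2 := P.lo_le_hi v.1 P.m v.2 0 (by omega) (by omega) v.2.isLt hwm
  have m1 := fun x => P.mem_ival 0 v.1 0 v.2 x (by omega) (by omega) hw0 v.2.isLt
  have m2 := fun x => P.mem_ival v.1 P.m v.2 0 x (by omega) (by omega) v.2.isLt hwm
  by_cases c1 : P.hi 0 v.1 0 v.2 < P.lo v.1 P.m v.2 0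
  · left
    intro a c ha hc
    exact lt_of_le_of_lt (m1 a ha).2 (lt_of_lt_of_le c1 (m2 c hc).1)
  by_cases c2 : P.hi v.1 P.m v.2 0 < P.lo 0 v.1 0 v.2
  · right
    intro a c ha hc
    exact lt_of_le_of_lt (m2 c hc).2 (lt_of_lt_of_le c2 (m1 a ha).1)
  exfalso
  rw [not_lt] at c1 c2
  have d' := Finset.disjoint_left.mp d
  refine @d' (max (P.lo 0 v.1 0 v.2) (P.lo v.1 P.m v.2 0)) ?_ ?_
  · rw [Finset.mem_Icc]; exact ⟨le_max_left _ _, max_le l1 c1⟩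
  · rw [Finset.mem_Icc]; exact ⟨le_max_right _ _, max_le c2 l2⟩

theorem constQ [Field F] (c : F) : ∃ Q : ABP F n, Q.IsROABP ∧ Q.OrderedAsc ∧ Q.eval = C c ∧
    Q.size = 2 := by
  let Q : ABP F n := ⟨1, fun _ => 1, rfl, rfl, fun _ _ _ => some (Sum.inl c)⟩
  have hv : ∀ x j, ¬ Q.VarInLayer x j := by
    rintro x j ⟨_, u, v, _, _, h⟩
    simp [Q] at h
  refine ⟨Q, ⟨fun j x x' h => absurd h (hv _ _), fun x j j' h => absurd h (hv _ _), ?_⟩,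
    fun x x' j j' h => absurd h (hv _ _), ?_, by simp [ABP.size, Q]⟩
  · intro π _ x
    simp [Q]
  · rw [eval_eq Q (fun k _ => if k = 0 then 1 else C c) (by simp)]
    · simp [Q]
    · intro k hk v _
      have : k = 0 := by simp [Q] at hk; exact hk
      subst this
      simp [Q, ABP.edgeVal]

theorem eval_G [Field F] (P : ABP F n) (s t : Nd P) (hs : s.1.val = 0) (ht : t.1.val = P.m)
    (G : Nd P → MvPolynomial (Fin n) F)
    (hG : ∀ v, G v = (if v = s then 1 else 0) + ∑ u, G u * ABP.edgeVal (bs P u v)) :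
    P.eval = G t := by
  classical
  let g : ℕ → ℕ → MvPolynomial (Fin n) F := fun k v =>
    if h : k < P.m + 1 then (if h' : v < P.width k then G ⟨⟨k, h⟩, ⟨v, h'⟩⟩ else 0) else 0
  have hg : ∀ k v (h : k < P.m + 1) (h' : v < P.width k), g k v = G ⟨⟨k, h⟩, ⟨v, h'⟩⟩ := by
    intro k v h h'
    simp only [g]
    rw [dif_pos h, dif_pos h']
  have hw0 : 0 < P.width 0 := by rw [P.w0]; omega
  have hwm : 0 < P.width P.m := by rw [P.wm]; omega
  have es : s = ⟨⟨0, by omega⟩, ⟨0, hw0⟩⟩ := by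
    obtain ⟨⟨i, hi⟩, ⟨j, hj⟩⟩ := s
    simp only at hs; subst hs
    have : j = 0 := by have := P.w0; simp only at hj; omega
    subst this; rfl
  have et : t = ⟨⟨P.m, by omega⟩, ⟨0, hwm⟩⟩ := by
    obtain ⟨⟨i, hi⟩, ⟨j, hj⟩⟩ := t
    simp only at ht; subst ht
    have : j = 0 := by have := P.wm; simp only at hj; omega
    subst this; rfl
  rw [← clean_eval, eval_eq (cleanABP P) g]
  · change g P.m 0 = _
    rw [hg P.m 0 (by omega) hwm, et]
  · rw [hg 0 0 (by omega) hw0, ← es, hG s, if_pos rfl, Finset.sum_eq_zero, add_zero]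
    intro u _
    have : bs P u s = none := by
      by_contra h
      have := bs_layer h
      omega
    simp [this, ABP.edgeVal]
  · intro k hk v hv
    change k < P.m at hk
    change v < P.width (k+1) at hv
    change g (k+1) v = ∑ u ∈ Finset.range (P.width k), _
    rw [hg (k+1) v (by omega) hv, hG, if_neg, zero_add, Fintype.sum_sigma,
      Finset.sum_eq_single (⟨k, by omega⟩ : Fin (P.m+1)), Finset.sum_range]
    · refine Finset.sum_congr rfl fun u _ => ?_
      rw [hg k u (by omega) u.isLt]
      simp [bs]
    · intro b _ hb
      refine Finset.sum_eq_zero fun u _ => ?_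
      have : ¬ (k + 1 = b.val + 1) := fun h => hb (Fin.ext (by simp; omega))
      simp only [bs, this, if_false, ABP.edgeVal, mul_zero]
    · simp
    · intro h
      have := congrArg (fun x : Nd P => x.1.val) h
      simp only at this
      omega

theorem card_Nd (P : ABP F n) : Fintype.card (Nd P) = P.size := by
  simp [ABP.size, Finset.sum_range]

theorem mainQ [Field F] (hn : 0 < n) (P : StrictIntervalABP F n) (hm : 0 < P.m) :
    ∃ Q : ABP F n, Q.IsROABP ∧ Q.OrderedAsc ∧ Q.eval = P.toABP.eval ∧
      Q.size ≤ 2 * n * P.toABP.size := by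
  classical
  have hw0 : 0 < P.width 0 := by rw [P.w0]; omega
  have hwm : 0 < P.width P.m := by rw [P.wm]; omega
  let V := Nd P.toABP
  let s : V := ⟨⟨0, by omega⟩, ⟨0, hw0⟩⟩
  let t : V := ⟨⟨P.m, by omega⟩, ⟨0, hwm⟩⟩
  let ly : V → ℕ := fun v => v.1.val
  have ly_le : ∀ v, ly v ≤ P.m := fun v => by have := v.1.isLt; simp only [ly]; omega
  have hly : ∀ u w, bs P.toABP u w ≠ none → ly u < ly w := by
    intro u w h
    have := bs_layer h
    simp only [ly]; omega
  obtain ⟨N, hN1, hN2⟩ := exists_inv (V := V)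
    (Matrix.of fun u w => ABP.edgeVal (bs P.toABP u w)) ly P.m ly_le (by
      intro u w h
      refine hly u w fun h' => h ?_
      simp [h', ABP.edgeVal])
  simp only [Matrix.of_apply] at hN1 hN2
  have hG : ∀ v, N s v = (if v = s then 1 else 0) + ∑ u, N s u * ABP.edgeVal (bs P.toABP u v) := by
    intro v
    rw [hN1 s v]
    simp only [eq_comm]
  have hH : ∀ v, N v t = (if v = t then 1 else 0) + ∑ w, N w t * ABP.edgeVal (bs P.toABP v w) := by
    intro v
    rw [hN2 v t]
    simp only [mul_comm]
  have hev : P.toABP.eval = N s t := eval_G P.toABP s t rfl rfl (fun v => N s v) hG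
  have fG : ∀ j v, (∀ a, Bf P.toABP v a → a.val < j) → tau j (N s v) = N s v := fun j v hv =>
    fix_of_vars s (bs P.toABP) (fun v => N s v) ly hly hG (Bf P.toABP)
      (fun u w x h => Bf_edge h) (fun u w x h => Bf_new h) j v hv
  have fH : ∀ j v, (∀ a, Af P.toABP v a → a.val < j) → tau j (N v t) = N v t := fun j v hv =>
    fix_of_vars t (fun u w => bs P.toABP w u) (fun v => N v t) (fun v => P.m - ly v)
      (fun u w h => by
        have h1 := hly _ _ h
        have h2 := ly_le u
        show P.m - ly u < P.m - ly w
        omega) hH (Af P.toABP)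
      (fun u w x h => Af_edge h) (fun u w x h => Af_new h) j v hv
  by_cases hPs : ∃ c, Af P.toABP s c
  swap
  · have h0 : tau 0 (N s t) = N s t := fH 0 s fun a ha => absurd ⟨a, ha⟩ hPs
    obtain ⟨c, hc⟩ := const_of_fix h0
    obtain ⟨Q, q1, q2, q3, q4⟩ := constQ (n := n) c
    refine ⟨Q, q1, q2, by rw [q3, hev, hc], ?_⟩
    have : 1 ≤ P.toABP.size := by
      rw [← card_Nd]
      exact Fintype.card_pos_iff.mpr ⟨s⟩
    rw [q4]
    nlinarith
  let Asc : V → Prop := fun v => ∀ a c, Bf P.toABP v a → Af P.toABP v c → a < c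
  let U : V → Prop := fun v => (∃ c, Af P.toABP v c) ∧ Asc v
  have hBs : ¬ ∃ a, Bf P.toABP s a := by
    rintro ⟨a, π, _, _, _, _, k, _, hk, _⟩
    simp [s] at hk
  have hAt : ¬ ∃ a, Af P.toABP t a := by
    rintro ⟨a, π, _, _, _, _, k, hk1, hk, _⟩
    simp [t] at hk1
    omega
  have nU : ∀ v, ¬ U v → (∃ c, Af P.toABP v c) →
      (∃ a, Bf P.toABP v a) ∧ ∀ a c, Bf P.toABP v a → Af P.toABP v c → c < a := by
    intro v hv hc
    have hna : ¬ Asc v := fun h => hv ⟨hc, h⟩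
    refine ⟨?_, (dich P v).resolve_left hna⟩
    by_contra hb
    exact hna fun a c ha => absurd ⟨a, ha⟩ hb
  let D : CoreData F n V :=
    { s := s, t := t, base := bs P.toABP, G := fun v => N s v, H := fun v => N v t
      U := U
      Pre := fun v => ¬ ∃ a, Bf P.toABP v a
      Post := fun v => ¬ ∃ c, Af P.toABP v c
      ly := ly, M := P.m, ly_le := ly_le
      hst := by
        intro h
        have := congrArg ly h
        simp [ly, s, t] at this
        omega
      hly := hly
      hG := hG
      hH := hH
      h1 := by
        intro u w j hu hb
        exact fG _ _ fun a ha => hu.2 a j ha (Af_new hb)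
      h2 := by
        intro u w j hw hb
        refine fH _ _ fun c hc => ?_
        exact (nU w hw ⟨c, hc⟩).2 j c (Bf_new hb) hc
      h3 := by
        intro u w hb hu hw
        obtain ⟨⟨c, hc⟩, hasc⟩ := hw
        have hcu := Af_edge hb hc
        obtain ⟨⟨a, ha⟩, hd⟩ := nU u hu ⟨c, hcu⟩
        exact lt_asymm (hd a c ha hcu) (hasc a c (Bf_edge hb ha) hc)
      hPre := fun u hu => fG 0 u fun a ha => absurd ⟨a, ha⟩ hu
      hPost := fun u hu => fH 0 u fun a ha => absurd ⟨a, ha⟩ hu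
      hPU := fun u hu h => hu h.1
      h7 := by
        intro u w hu hw hb
        by_contra hcon
        push Not at hcon
        obtain ⟨⟨a, ha⟩, ⟨c, hc⟩⟩ := hcon
        exact lt_asymm (hu.2 a c ha (Af_edge hb hc)) ((nU w hw ⟨c, hc⟩).2 a c (Bf_edge hb ha) hc)
      hs := hBs
      ht := hAt
      hsin := by
        intro u
        by_contra h
        have := bs_layer h
        simp [s] at this
      htout := by
        intro u
        by_contra h
        have := bs_layer h
        have := u.1.isLt
        simp [t] at *
        omega
      hsU := ⟨hPs, fun a c ha => absurd ⟨a, ha⟩ hBs⟩ }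
  obtain ⟨Q, q1, q2, q3, q4⟩ := coreQ hn D
  refine ⟨Q, q1, q2, by rw [q3, hev], ?_⟩
  rw [← card_Nd P.toABP]
  exact q4

theorem zeroQ [Field F] (P : ABP F n) (hm : P.m = 0) : P.eval = C 1 := by
  rw [eval_eq P (fun _ _ => C 1) (by simp)]
  intro k hk
  omega

end final


/-- every multilinear polynomial computed by a strict-interval ABP of size `S`
is also computed by a ROABP, in which the variables appear in the order
`x_0, x_1, …, x_{n-1}`, of size at most `2nS`. -/
theorem strictInterval_equiv_ROABP (F : Type) [Field F] (n : ℕ) (hn : 0 < n)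
    (P : StrictIntervalABP F n) (S : ℕ) (hS : P.toABP.size = S)
    (f : MvPolynomial (Fin n) F) (hml : ∀ i, f.degreeOf i ≤ 1)
    (hf : P.toABP.eval = f) :
    ∃ Q : ABP F n, Q.IsROABP ∧ Q.OrderedAsc ∧ Q.eval = f ∧ Q.size ≤ 2 * n * S := by
  subst hS hf
  rcases Nat.eq_zero_or_pos P.m with hm | hm
  · obtain ⟨Q, q1, q2, q3, q4⟩ := constQ (F := F) (n := n) 1
    refine ⟨Q, q1, q2, by rw [q3, zeroQ _ hm], ?_⟩
    have : 1 ≤ P.toABP.size := by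
      unfold ABP.size
      rw [Finset.sum_range_succ, P.wm]
      omega
    rw [q4]
    nlinarith
  · exact mainQ hn P hm
end

section
/- There exist constants c₁, c₂ > 0 such that every polynomial f ∈ F[x₁,...,x_n] computed by an interval formula of size s is also computed by an interval formula of size at most s^{c₁} and depth at most c₂ · log s. -/
/-- An arithmetic formula over `F` in variables `x_0, …, x_{n-1}`: a rooted binary tree
whose leaves are labeled by variables or constants and whose internal nodes are `+` or `×`. -/
inductive Formula (F : Type) (n : ℕ) where
  | const : F → Formula F n
  | var : Fin n → Formula F n
  | add : Formula F n → Formula F n → Formula F n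
  | mul : Formula F n → Formula F n → Formula F n

namespace Formula

variable {F : Type} {n : ℕ}

/-- The polynomial computed by a formula. -/
noncomputable def eval [Field F] : Formula F n → MvPolynomial (Fin n) F
  | const c => MvPolynomial.C c
  | var i => MvPolynomial.X i
  | add f g => f.eval + g.eval
  | mul f g => f.eval * g.eval

/-- Number of leaves of the formula labeled by the variable `x_i`. -/
def readCount : Formula F n → Fin n → ℕ
  | const _, _ => 0
  | var j, i => if j = i then 1 else 0
  | add f g, i => f.readCount i + g.readCount i
  | mul f g, i => f.readCount i + g.readCount i

/-- The size of a formula is its number of nodes. -/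
def size : Formula F n → ℕ
  | const _ => 1
  | var _ => 1
  | add f g => f.size + g.size + 1
  | mul f g => f.size + g.size + 1

/-- The depth of a formula is the length of its longest root-to-leaf path. -/
def depth : Formula F n → ℕ
  | const _ => 0
  | var _ => 0
  | add f g => max f.depth g.depth + 1
  | mul f g => max f.depth g.depth + 1

end Formula

/-- An interval formula: every gate computes a polynomial whose variables are contained in
an interval of consecutive variables, and for every product gate the intervals associated
with its two children are disjoint.  (Intervals are intervals `[a,b]` of indices; for a
child whose polynomial has no variables the associated interval may be empty.) -/
def IsIntervalFormula {F : Type} {n : ℕ} [Field F] : Formula F n → Prop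
  | .const _ => True
  | .var _ => True
  | .add f g => IsIntervalFormula f ∧ IsIntervalFormula g
  | .mul f g => IsIntervalFormula f ∧ IsIntervalFormula g ∧
      ∃ a b c d : ℕ, Disjoint (Finset.Icc a b) (Finset.Icc c d) ∧
        (Formula.eval f).vars.image Fin.val ⊆ Finset.Icc a b ∧
        (Formula.eval g).vars.image Fin.val ⊆ Finset.Icc c d


namespace DR

open Formula

variable {F : Type} {n : ℕ}

def leaves : Formula F n → ℕ
  | const _ => 1
  | var _ => 1
  | add f g => leaves f + leaves g
  | mul f g => leaves f + leaves g

def sv : Formula F n → Set (Fin n)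
  | const _ => ∅
  | var i => {i}
  | add f g => sv f ∪ sv g
  | mul f g => sv f ∪ sv g

def LT (S T : Set (Fin n)) : Prop := ∀ i ∈ S, ∀ j ∈ T, i < j

lemma LT.mono {S T S' T' : Set (Fin n)} (h : LT S T) (h1 : S' ⊆ S) (h2 : T' ⊆ T) : LT S' T' :=
  fun i hi j hj => h i (h1 hi) j (h2 hj)

lemma LT.union_left {S T U : Set (Fin n)} (h : LT S U) (h' : LT T U) : LT (S ∪ T) U := by
  rintro i (hi | hi) j hj
  · exact h i hi j hj
  · exact h' i hi j hj

lemma LT.union_right {S T U : Set (Fin n)} (h : LT U S) (h' : LT U T) : LT U (S ∪ T) := by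
  rintro i hi j (hj | hj)
  · exact h i hi j hj
  · exact h' i hi j hj

lemma LT.empty_left {S : Set (Fin n)} : LT ∅ S := fun i hi => absurd hi (by simp)

lemma LT.empty_right {S : Set (Fin n)} : LT S ∅ := fun i _ j hj => absurd hj (by simp)

def SI : Formula F n → Prop
  | const _ => True
  | var _ => True
  | add f g => SI f ∧ SI g
  | mul f g => SI f ∧ SI g ∧ (LT (sv f) (sv g) ∨ LT (sv g) (sv f))

lemma leaves_pos (f : Formula F n) : 1 ≤ leaves f := by
  induction f <;> simp only [leaves] <;> omega

lemma size_leaves (f : Formula F n) : f.size + 1 = 2 * leaves f := by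
  induction f <;> simp only [leaves, size] <;> omega

lemma depth_lt (f : Formula F n) : f.depth < leaves f := by
  induction f <;> simp only [leaves, depth] <;> omega

lemma size_le (f : Formula F n) : f.size + 1 ≤ 2 ^ (f.depth + 1) := by
  induction f with
  | const c => simp [size, depth]
  | var c => simp [size, depth]
  | add f g hf hg =>
    simp only [size, depth]
    have h1 : 2 ^ (f.depth + 1) ≤ 2 ^ (max f.depth g.depth + 1) :=
      Nat.pow_le_pow_right (by norm_num) (by omega)
    have h2 : 2 ^ (g.depth + 1) ≤ 2 ^ (max f.depth g.depth + 1) :=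
      Nat.pow_le_pow_right (by norm_num) (by omega)
    rw [pow_succ 2 (max f.depth g.depth + 1)]
    omega
  | mul f g hf hg =>
    simp only [size, depth]
    have h1 : 2 ^ (f.depth + 1) ≤ 2 ^ (max f.depth g.depth + 1) :=
      Nat.pow_le_pow_right (by norm_num) (by omega)
    have h2 : 2 ^ (g.depth + 1) ≤ 2 ^ (max f.depth g.depth + 1) :=
      Nat.pow_le_pow_right (by norm_num) (by omega)
    rw [pow_succ 2 (max f.depth g.depth + 1)]
    omega

variable [Field F]

lemma vars_sub (f : Formula F n) : (f.eval.vars : Set (Fin n)) ⊆ sv f := by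
  classical
  induction f with
  | const c => simp [eval, sv]
  | var c => simp [eval, sv]
  | add f g hf hg =>
    intro i hi
    have := MvPolynomial.vars_add_subset _ _ hi
    rcases Finset.mem_union.1 this with h | h
    · exact Or.inl (hf h)
    · exact Or.inr (hg h)
  | mul f g hf hg =>
    intro i hi
    have := MvPolynomial.vars_mul _ _ hi
    rcases Finset.mem_union.1 this with h | h
    · exact Or.inl (hf h)
    · exact Or.inr (hg h)

lemma exists_Icc (A B : Finset (Fin n)) (h : LT (A : Set (Fin n)) (B : Set (Fin n))) :
    ∃ a b c d : ℕ, Disjoint (Finset.Icc a b) (Finset.Icc c d) ∧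
      A.image Fin.val ⊆ Finset.Icc a b ∧ B.image Fin.val ⊆ Finset.Icc c d := by
  rcases A.eq_empty_or_nonempty with rfl | hA
  · refine ⟨1, 0, 0, n, by simp, by simp, ?_⟩
    intro x hx
    obtain ⟨i, hi, rfl⟩ := Finset.mem_image.1 hx
    simp only [Finset.mem_Icc]; omega
  · have hm := A.max'_mem hA
    refine ⟨0, A.max' hA, A.max' hA + 1, n, ?_, ?_, ?_⟩
    · rw [Finset.disjoint_left]
      intro x hx hy
      simp only [Finset.mem_Icc] at hx hy
      omega
    · intro x hx
      obtain ⟨i, hi, rfl⟩ := Finset.mem_image.1 hx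
      have := A.le_max' i hi
      simpa using this
    · intro x hx
      obtain ⟨i, hi, rfl⟩ := Finset.mem_image.1 hx
      have : A.max' hA < i := h _ hm i hi
      have : (A.max' hA : ℕ) < i := this
      simp only [Finset.mem_Icc]
      omega

lemma SI.isInterval {f : Formula F n} (h : SI f) : IsIntervalFormula f := by
  induction f with
  | const c => trivial
  | var c => trivial
  | add f g hf hg => exact ⟨hf h.1, hg h.2⟩
  | mul f g hf hg =>
    refine ⟨hf h.1, hg h.2.1, ?_⟩
    rcases h.2.2 with h | h
    · exact exists_Icc _ _ (h.mono (vars_sub f) (vars_sub g))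
    · obtain ⟨a, b, c, d, h1, h2, h3⟩ := exists_Icc _ _ (h.mono (vars_sub g) (vars_sub f))
      exact ⟨c, d, a, b, h1.symm, h3, h2⟩

open Classical in
noncomputable def restr (S : Set (Fin n)) : Formula F n → Formula F n
  | const c => const c
  | var i => if i ∈ S then var i else const 0
  | add f g => add (restr S f) (restr S g)
  | mul f g => mul (restr S f) (restr S g)

lemma restr_leaves (S : Set (Fin n)) (f : Formula F n) : leaves (restr S f) = leaves f := by
  induction f with
  | const c => rfl
  | var c => simp only [restr]; split_ifs <;> rfl
  | add f g hf hg => simp only [restr, leaves, hf, hg]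
  | mul f g hf hg => simp only [restr, leaves, hf, hg]

lemma restr_sv (S : Set (Fin n)) (f : Formula F n) : sv (restr S f) ⊆ sv f ∩ S := by
  induction f with
  | const c => simp [restr, sv]
  | var c => simp only [restr]; split_ifs <;> simp_all [sv]
  | add f g hf hg =>
    simp only [restr, sv]
    rintro i (h | h)
    · exact ⟨Or.inl (hf h).1, (hf h).2⟩
    · exact ⟨Or.inr (hg h).1, (hg h).2⟩
  | mul f g hf hg =>
    simp only [restr, sv]
    rintro i (h | h)
    · exact ⟨Or.inl (hf h).1, (hf h).2⟩
    · exact ⟨Or.inr (hg h).1, (hg h).2⟩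

lemma restr_SI (S : Set (Fin n)) {f : Formula F n} (h : SI f) : SI (restr S f) := by
  induction f with
  | const c => trivial
  | var c => simp only [restr]; split_ifs <;> trivial
  | add f g hf hg => exact ⟨hf h.1, hg h.2⟩
  | mul f g hf hg =>
    have h1 := fun i hi => (restr_sv S f (a := i) hi).1
    have h2 := fun i hi => (restr_sv S g (a := i) hi).1
    exact ⟨hf h.1, hg h.2.1, h.2.2.imp (fun h => h.mono h1 h2) (fun h => h.mono h2 h1)⟩

open Classical in
lemma restr_eval (S : Set (Fin n)) (f : Formula F n) :
    (restr S f).eval = MvPolynomial.aeval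
      (fun i => if i ∈ S then (MvPolynomial.X i : MvPolynomial (Fin n) F) else 0) f.eval := by
  induction f with
  | const c => simp [restr, eval, MvPolynomial.algebraMap_eq]
  | var c => simp only [restr]; split_ifs <;> simp_all [eval]
  | add f g hf hg => simp only [restr, eval, hf, hg, map_add]
  | mul f g hf hg => simp only [restr, eval, hf, hg, map_mul]

lemma restr_eval_self (f : Formula F n) : (restr (f.eval.vars : Set (Fin n)) f).eval = f.eval := by
  classical
  rw [restr_eval]
  have := MvPolynomial.hom_congr_vars (p₁ := f.eval) (p₂ := f.eval)
    (f₁ := (MvPolynomial.aeval (fun i => if i ∈ (f.eval.vars : Set (Fin n)) then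
      (MvPolynomial.X i : MvPolynomial (Fin n) F) else 0)).toRingHom)
    (f₂ := RingHom.id _) (by ext1 c; simp [MvPolynomial.algebraMap_eq])
    (by intro i hi _; simp [hi]) rfl
  simpa using this

lemma clean {f : Formula F n} (h : SI f) : ∃ g : Formula F n, SI g ∧ g.eval = f.eval ∧
    leaves g = leaves f ∧ sv g ⊆ (f.eval.vars : Set (Fin n)) :=
  ⟨restr (f.eval.vars : Set (Fin n)) f, restr_SI _ h, restr_eval_self f, restr_leaves _ _,
    fun _ hi => (restr_sv _ f hi).2⟩

lemma LT_of_Icc {A B : Finset (Fin n)} {a b c d : ℕ}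
    (h : Disjoint (Finset.Icc a b) (Finset.Icc c d))
    (h1 : A.image Fin.val ⊆ Finset.Icc a b) (h2 : B.image Fin.val ⊆ Finset.Icc c d) :
    LT (A : Set (Fin n)) (B : Set (Fin n)) ∨ LT (B : Set (Fin n)) (A : Set (Fin n)) := by
  have k1 : ∀ i ∈ A, a ≤ i.val ∧ i.val ≤ b := fun i hi =>
    Finset.mem_Icc.1 (h1 (Finset.mem_image_of_mem _ hi))
  have k2 : ∀ i ∈ B, c ≤ i.val ∧ i.val ≤ d := fun i hi =>
    Finset.mem_Icc.1 (h2 (Finset.mem_image_of_mem _ hi))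
  have k3 : ∀ x, a ≤ x → x ≤ b → c ≤ x → x ≤ d → False := fun x x1 x2 x3 x4 =>
    Finset.disjoint_left.1 h (Finset.mem_Icc.2 ⟨x1, x2⟩) (Finset.mem_Icc.2 ⟨x3, x4⟩)
  have ka := k3 a
  have kc := k3 c
  by_cases hac : a ≤ c
  · left
    intro i hi j hj
    have := k1 i hi
    have := k2 j hj
    show i.val < j.val
    by_contra hn
    exact kc hac (by omega) le_rfl (by omega)
  · right
    intro i hi j hj
    have := k2 i hi
    have := k1 j hj
    show i.val < j.val
    by_contra hn
    exact ka le_rfl (by omega) (by omega) (by omega)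

lemma exists_SI {f : Formula F n} (h : IsIntervalFormula f) : ∃ g : Formula F n, SI g ∧
    g.eval = f.eval ∧ leaves g = leaves f ∧ sv g ⊆ (f.eval.vars : Set (Fin n)) := by
  suffices H : ∃ g : Formula F n, SI g ∧ g.eval = f.eval ∧ leaves g = leaves f by
    obtain ⟨g, h1, h2, h3⟩ := H
    obtain ⟨g', k1, k2, k3, k4⟩ := clean h1
    exact ⟨g', k1, k2.trans h2, k3.trans h3, h2 ▸ k4⟩
  induction f with
  | const c => exact ⟨const c, trivial, rfl, rfl⟩
  | var c => exact ⟨var c, trivial, rfl, rfl⟩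
  | add f g hf hg =>
    obtain ⟨f', f1, f2, f3⟩ := hf h.1
    obtain ⟨g', g1, g2, g3⟩ := hg h.2
    exact ⟨add f' g', ⟨f1, g1⟩, by simp only [eval, f2, g2], by simp only [leaves, f3, g3]⟩
  | mul f g hf hg =>
    obtain ⟨f0, f1, f2, f3⟩ := hf h.1
    obtain ⟨g0, g1, g2, g3⟩ := hg h.2.1
    obtain ⟨f', k1, k2, k3, k4⟩ := clean f1
    obtain ⟨g', l1, l2, l3, l4⟩ := clean g1
    obtain ⟨a, b, c, d, H, Ha, Hc⟩ := h.2.2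
    rw [f2] at k4
    rw [g2] at l4
    refine ⟨mul f' g', ⟨k1, l1, ?_⟩, by simp only [eval, f2, g2, k2, l2],
      by simp only [leaves, f3, g3, k3, l3]⟩
    exact (LT_of_Icc H Ha Hc).imp (fun h => h.mono k4 l4) (fun h => h.mono l4 k4)

structure Dec (m : ℕ) (f V L R B : Formula F n) : Prop where
  siV : SI V
  siL : SI L
  siR : SI R
  siB : SI B
  svV : sv V ⊆ sv f
  svL : sv L ⊆ sv f
  svR : sv R ⊆ sv f
  svB : sv B ⊆ sv f
  LV : LT (sv L) (sv V)
  VR : LT (sv V) (sv R)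
  LR : LT (sv L) (sv R)
  ev : f.eval = L.eval * V.eval * R.eval + B.eval
  lV : leaves V ≤ m
  lV' : m < 2 * leaves V
  lL : leaves L + leaves V ≤ leaves f + 1
  lR : leaves R + leaves V ≤ leaves f + 1
  lB : leaves B + leaves V ≤ leaves f + 1

lemma dec_base {m : ℕ} {f : Formula F n} (h : SI f) (h1 : leaves f ≤ m) (h2 : m < 2 * leaves f) :
    Dec m f f (const 1) (const 1) (const 0) where
  siV := h
  siL := trivial
  siR := trivial
  siB := trivial
  svV := subset_rfl
  svL := Set.empty_subset _
  svR := Set.empty_subset _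
  svB := Set.empty_subset _
  LV := LT.empty_left
  VR := LT.empty_right
  LR := LT.empty_left
  ev := by simp [eval]
  lV := h1
  lV' := h2
  lL := by simp only [leaves]; omega
  lR := by simp only [leaves]; omega
  lB := by simp only [leaves]; omega

lemma dec_add {m : ℕ} {f V L R B g p : Formula F n} (h : Dec m f V L R B) (hg : SI g)
    (hs : sv p = sv f ∪ sv g) (hl : leaves p = leaves f + leaves g)
    (he : p.eval = f.eval + g.eval) : Dec m p V L R (add B g) where
  siV := h.siV
  siL := h.siL
  siR := h.siR
  siB := ⟨h.siB, hg⟩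
  svV := hs ▸ h.svV.trans Set.subset_union_left
  svL := hs ▸ h.svL.trans Set.subset_union_left
  svR := hs ▸ h.svR.trans Set.subset_union_left
  svB := hs ▸ Set.union_subset_union_left _ h.svB
  LV := h.LV
  VR := h.VR
  LR := h.LR
  ev := by rw [he, h.ev]; simp only [eval]; ring
  lV := h.lV
  lV' := h.lV'
  lL := by have := h.lL; omega
  lR := by have := h.lR; omega
  lB := by have := h.lB; simp only [leaves]; omega

lemma dec_mulL {m : ℕ} {f V L R B g p : Formula F n} (h : Dec m f V L R B) (hg : SI g)
    (hs : sv p = sv f ∪ sv g) (hl : leaves p = leaves f + leaves g)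
    (he : p.eval = f.eval * g.eval) (hlt : LT (sv g) (sv f)) :
    Dec m p V (mul g L) R (mul g B) where
  siV := h.siV
  siL := ⟨hg, h.siL, Or.inl (hlt.mono subset_rfl h.svL)⟩
  siR := h.siR
  siB := ⟨hg, h.siB, Or.inl (hlt.mono subset_rfl h.svB)⟩
  svV := hs ▸ h.svV.trans Set.subset_union_left
  svL := hs ▸ Set.union_subset Set.subset_union_right (h.svL.trans Set.subset_union_left)
  svR := hs ▸ h.svR.trans Set.subset_union_left
  svB := hs ▸ Set.union_subset Set.subset_union_right (h.svB.trans Set.subset_union_left)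
  LV := LT.union_left (hlt.mono subset_rfl h.svV) h.LV
  VR := h.VR
  LR := LT.union_left (hlt.mono subset_rfl h.svR) h.LR
  ev := by rw [he, h.ev]; simp only [eval]; ring
  lV := h.lV
  lV' := h.lV'
  lL := by have := h.lL; simp only [leaves]; omega
  lR := by have := h.lR; omega
  lB := by have := h.lB; simp only [leaves]; omega

lemma dec_mulR {m : ℕ} {f V L R B g p : Formula F n} (h : Dec m f V L R B) (hg : SI g)
    (hs : sv p = sv f ∪ sv g) (hl : leaves p = leaves f + leaves g)
    (he : p.eval = f.eval * g.eval) (hlt : LT (sv f) (sv g)) :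
    Dec m p V L (mul g R) (mul g B) where
  siV := h.siV
  siL := h.siL
  siR := ⟨hg, h.siR, Or.inr (hlt.mono h.svR subset_rfl)⟩
  siB := ⟨hg, h.siB, Or.inr (hlt.mono h.svB subset_rfl)⟩
  svV := hs ▸ h.svV.trans Set.subset_union_left
  svL := hs ▸ h.svL.trans Set.subset_union_left
  svR := hs ▸ Set.union_subset Set.subset_union_right (h.svR.trans Set.subset_union_left)
  svB := hs ▸ Set.union_subset Set.subset_union_right (h.svB.trans Set.subset_union_left)
  LV := h.LV
  VR := LT.union_right (hlt.mono h.svV subset_rfl) h.VR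
  LR := LT.union_right (hlt.mono h.svL subset_rfl) h.LR
  ev := by rw [he, h.ev]; simp only [eval]; ring
  lV := h.lV
  lV' := h.lV'
  lL := by have := h.lL; omega
  lR := by have := h.lR; simp only [leaves]; omega
  lB := by have := h.lB; simp only [leaves]; omega

lemma exists_dec {m : ℕ} (hm : 1 ≤ m) (f : Formula F n) (hf : SI f) (h : m < 2 * leaves f) :
    ∃ V L R B, Dec m f V L R B := by
  by_cases hle : leaves f ≤ m
  · exact ⟨_, _, _, _, dec_base hf hle h⟩
  induction f with
  | const c => simp only [leaves] at hle; omega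
  | var c => simp only [leaves] at hle; omega
  | add f g ihf ihg =>
    have key : ∀ e : Formula F n, SI e → m < 2 * leaves e →
        (SI e → m < 2 * leaves e → ¬ leaves e ≤ m → ∃ V L R B, Dec m e V L R B) →
        ∃ V L R B, Dec m e V L R B := by
      intro e he h1 h2
      by_cases h3 : leaves e ≤ m
      · exact ⟨_, _, _, _, dec_base he h3 h1⟩
      · exact h2 he h1 h3
    simp only [leaves] at hle
    by_cases hc : m < 2 * leaves f
    · obtain ⟨V, L, R, B, H⟩ := key f hf.1 hc ihf
      exact ⟨_, _, _, _, dec_add H hf.2 rfl rfl rfl⟩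
    · obtain ⟨V, L, R, B, H⟩ := key g hf.2 (by omega) ihg
      exact ⟨_, _, _, _, dec_add H hf.1 (Set.union_comm _ _) (add_comm _ _) (add_comm _ _)⟩
  | mul f g ihf ihg =>
    have key : ∀ e : Formula F n, SI e → m < 2 * leaves e →
        (SI e → m < 2 * leaves e → ¬ leaves e ≤ m → ∃ V L R B, Dec m e V L R B) →
        ∃ V L R B, Dec m e V L R B := by
      intro e he h1 h2
      by_cases h3 : leaves e ≤ m
      · exact ⟨_, _, _, _, dec_base he h3 h1⟩
      · exact h2 he h1 h3
    simp only [leaves] at hle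
    by_cases hc : m < 2 * leaves f
    · obtain ⟨V, L, R, B, H⟩ := key f hf.1 hc ihf
      rcases hf.2.2 with hlt | hlt
      · exact ⟨_, _, _, _, dec_mulR H hf.2.1 rfl rfl rfl hlt⟩
      · exact ⟨_, _, _, _, dec_mulL H hf.2.1 rfl rfl rfl hlt⟩
    · obtain ⟨V, L, R, B, H⟩ := key g hf.2.1 (by omega) ihg
      rcases hf.2.2 with hlt | hlt
      · exact ⟨_, _, _, _, dec_mulL H hf.1 (Set.union_comm _ _) (add_comm _ _) (mul_comm _ _) hlt⟩
      · exact ⟨_, _, _, _, dec_mulR H hf.1 (Set.union_comm _ _) (add_comm _ _) (mul_comm _ _) hlt⟩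

lemma log_step {a b : ℕ} (ha : 1 ≤ a) (h : 4 * a ≤ 3 * b) :
    12 * Real.log a + 3 ≤ 12 * Real.log b := by
  have ha' : (0 : ℝ) < a := by exact_mod_cast ha
  have h' : (4 : ℝ) * a ≤ 3 * b := by exact_mod_cast h
  have h1 : Real.log (4 / 3 * a) ≤ Real.log b := Real.log_le_log (by positivity) (by linarith)
  rw [Real.log_mul (by norm_num) ha'.ne'] at h1
  have h2 := Real.one_sub_inv_le_log_of_pos (show (0 : ℝ) < 4 / 3 by norm_num)
  norm_num at h2
  linarith

lemma reduce (k : ℕ) : ∀ f : Formula F n, SI f → leaves f ≤ k →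
    ∃ g : Formula F n, SI g ∧ g.eval = f.eval ∧ sv g ⊆ sv f ∧
      (g.depth : ℝ) ≤ 12 * Real.log (leaves f) + 12 := by
  induction k with
  | zero => intro f _ h; have := leaves_pos f; omega
  | succ k ih =>
    intro f hf hk
    by_cases hs : leaves f ≤ 12
    · refine ⟨f, hf, rfl, subset_rfl, ?_⟩
      have h1 : f.depth ≤ 12 := (depth_lt f).le.trans hs
      have h2 : (f.depth : ℝ) ≤ 12 := by exact_mod_cast h1
      have h3 := Real.log_natCast_nonneg (leaves f)
      linarith
    · obtain ⟨V, L, R, B, D⟩ := exists_dec (m := 2 * leaves f / 3) (by omega) f hf (by omega)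
      have key : ∀ e : Formula F n, SI e → 4 * leaves e ≤ 3 * leaves f →
          ∃ g : Formula F n, SI g ∧ g.eval = e.eval ∧ sv g ⊆ sv e ∧
            (g.depth : ℝ) + 3 ≤ 12 * Real.log (leaves f) + 12 := by
        intro e he hle
        obtain ⟨g, h1, h2, h3, h4⟩ := ih e he (by omega)
        exact ⟨g, h1, h2, h3, by linarith [log_step (leaves_pos e) hle]⟩
      have := D.lV
      have := D.lV'
      have := D.lL
      have := D.lR
      have := D.lB
      obtain ⟨V', v1, v2, v3, v4⟩ := key V D.siV (by omega)
      obtain ⟨L', l1, l2, l3, l4⟩ := key L D.siL (by omega)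
      obtain ⟨R', r1, r2, r3, r4⟩ := key R D.siR (by omega)
      obtain ⟨B', b1, b2, b3, b4⟩ := key B D.siB (by omega)
      refine ⟨add (mul (mul L' V') R') B', ⟨⟨⟨l1, v1, Or.inl (D.LV.mono l3 v3)⟩, r1,
        Or.inl (LT.union_left (D.LR.mono l3 r3) (D.VR.mono v3 r3))⟩, b1⟩, ?_, ?_, ?_⟩
      · simp only [eval, l2, v2, r2, b2, D.ev]
      · exact Set.union_subset (Set.union_subset (Set.union_subset (l3.trans D.svL)
          (v3.trans D.svV)) (r3.trans D.svR)) (b3.trans D.svB)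
      · simp only [depth]
        push_cast
        have hx : max (max (max (L'.depth : ℝ) V'.depth + 1) R'.depth + 1) B'.depth ≤
            12 * Real.log (leaves f) + 12 - 1 := by
          refine max_le ?_ (by linarith)
          rw [← le_sub_iff_add_le]
          refine max_le ?_ (by linarith)
          rw [← le_sub_iff_add_le]
          exact max_le (by linarith) (by linarith)
        linarith

end DR

/-- depth reduction for interval formulas: there are constants `c₁, c₂ > 0`
such that every polynomial computed by an interval formula of size `s` is also computed by
an interval formula of size at most `s^{c₁}` and depth at most `c₂ · log s`. -/
theorem interval_formula_depth_reduction :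
    ∃ c₁ c₂ : ℝ, 0 < c₁ ∧ 0 < c₂ ∧
      ∀ (F : Type) [inst : Field F] (n : ℕ) (f : MvPolynomial (Fin n) F)
        (Φ : Formula F n) (s : ℕ),
        IsIntervalFormula Φ → Φ.eval = f → Φ.size = s →
        ∃ Ψ : Formula F n, IsIntervalFormula Ψ ∧ Ψ.eval = f ∧
          (Ψ.size : ℝ) ≤ (s : ℝ) ^ c₁ ∧ (Ψ.depth : ℝ) ≤ c₂ * Real.log s := by
  refine ⟨25, 24, by norm_num, by norm_num, ?_⟩
  intro F inst n f Φ s hΦ hev hs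
  have hsl := DR.size_leaves Φ
  have hpos := DR.leaves_pos Φ
  by_cases h1 : s ≤ 2
  · have hs1 : Φ.size = 1 := by omega
    have hs1' : s = 1 := by omega
    have hd := DR.depth_lt Φ
    have hd0 : Φ.depth = 0 := by omega
    exact ⟨Φ, hΦ, hev, by rw [hs1, hs1']; simp, by rw [hd0, hs1']; simp⟩
  · obtain ⟨Φ', a1, a2, a3, -⟩ := DR.exists_SI hΦ
    obtain ⟨Ψ, b1, b2, -, b4⟩ := DR.reduce _ Φ' a1 le_rfl
    have hs3 : (3 : ℝ) ≤ s := by exact_mod_cast (by omega : 3 ≤ s)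
    have hlog : 1 ≤ Real.log s := by
      rw [Real.le_log_iff_exp_le (by linarith)]
      linarith [Real.exp_one_lt_d9]
    have hll : Real.log (DR.leaves Φ') ≤ Real.log s := by
      apply Real.log_le_log
      · rw [a3]; exact_mod_cast hpos
      · rw [a3]; exact_mod_cast (by omega : DR.leaves Φ ≤ s)
    have hdep : (Ψ.depth : ℝ) ≤ 24 * Real.log s := by linarith
    refine ⟨Ψ, b1.isInterval, (b2.trans a2).trans hev, ?_, hdep⟩
    have hsz : (Ψ.size : ℝ) ≤ 2 ^ (Ψ.depth + 1) := by
      exact_mod_cast (Nat.le_succ _).trans (DR.size_le Ψ)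
    refine hsz.trans ?_
    rw [Real.rpow_def_of_pos (by linarith)]
    have h2 : (2 : ℝ) ≤ Real.exp 1 := by linarith [Real.exp_one_gt_d9]
    calc (2 : ℝ) ^ (Ψ.depth + 1) ≤ Real.exp 1 ^ (Ψ.depth + 1) :=
          pow_le_pow_left₀ (by norm_num) h2 _
      _ = Real.exp ((Ψ.depth + 1 : ℕ) : ℝ) := by rw [← Real.exp_nat_mul, mul_one]
      _ ≤ Real.exp (Real.log s * 25) := by
          apply Real.exp_le_exp.2
          push_cast
          linarith
end

section
/- For every sufficiently large even constant r there exist constants ε > 0 and δ > 0 such that the following holds for all n divisible by r with n/r even: for every polynomial f ∈ F[x₁,...,x_n] computable by a read-once formula over a field F, the probability over an equi-partition φ sampled from the distribution D_B that rank_φ(f) > 2^{n/2 − εn} is at most 2^{−δn}; equivalently, with probability at least 1 − 2^{−δn} over φ ~ D_B, rank_φ(f) ≤ 2^{n/2 − εn}. -/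
/-- The partial derivative matrix of a multilinear polynomial `f ∈ F[Y ∪ Z]`:
rows are indexed by subsets `S ⊆ Y`, columns by subsets `T ⊆ Z`, and the
`(S, T)` entry is the coefficient in `f` of the monomial `∏_{y ∈ S} y · ∏_{z ∈ T} z`. -/
noncomputable def pdMatrix (F : Type) [Field F] (n : ℕ) (Y Z : Finset (Fin n))
    (f : MvPolynomial (Fin n) F) : Matrix (Finset (Fin n)) (Finset (Fin n)) F :=
  fun S T =>
    if S ⊆ Y ∧ T ⊆ Z then
      MvPolynomial.coeff (∑ i ∈ S ∪ T, Finsupp.single i 1) f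
    else 0

/-- `rank_φ(f)` for an equi-partition given as `φ : Fin n → Bool` (`true` = the `Y` side,
`false` = the `Z` side). -/
noncomputable def rankPart (F : Type) [Field F] (n : ℕ) (φ : Fin n → Bool)
    (f : MvPolynomial (Fin n) F) : ℕ :=
  (pdMatrix F n (Finset.univ.filter fun i => φ i = true)
    (Finset.univ.filter fun i => φ i = false) f).rank

/-- `φ` is a partition in the support of the distribution `D_B` for block size `r`: in each
of the `n/r` consecutive blocks `B_b = {x_{br}, …, x_{br + r - 1}}`, exactly `r/2` of the
`r` variables are assigned to the `Y` side (so `D_B` is the uniform distribution on the set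
of all such `φ`). -/
def BlockBalanced (n r : ℕ) (φ : Fin n → Bool) : Prop :=
  ∀ b : ℕ, b < n / r →
    ({i : Fin n | (i : ℕ) / r = b ∧ φ i = true} : Set (Fin n)).ncard = r / 2

section Alg
open MvPolynomial
open scoped Pointwise

variable {F : Type} [Field F] {n : ℕ}

/-- `f` has a decomposition with Y-side dimension at most `B`. -/
def HasD (φ : Fin n → Bool) (f : MvPolynomial (Fin n) F) (B : ℝ) : Prop :=
  ∃ G : Finset (MvPolynomial (Fin n) F), 1 ∈ G ∧
    (∀ g ∈ G, g ∈ supported F {i | φ i = true}) ∧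
    f ∈ Submodule.span (supported F {i : Fin n | φ i = false}) (G : Set (MvPolynomial (Fin n) F)) ∧
    (G.card : ℝ) ≤ B

open Classical in
theorem HasD.mul {φ : Fin n → Bool} {f g : MvPolynomial (Fin n) F} {A B : ℝ}
    (hf : HasD φ f A) (hg : HasD φ g B) : HasD φ (f * g) (A * B) := by
  obtain ⟨G, h1, hY, hs, hc⟩ := hf
  obtain ⟨H, h1', hY', hs', hc'⟩ := hg
  refine ⟨G * H, ?_, ?_, ?_, ?_⟩
  · simpa using Finset.mul_mem_mul h1 h1'
  · intro x hx
    obtain ⟨a, ha, b, hb, rfl⟩ := Finset.mem_mul.1 hx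
    exact mul_mem (hY a ha) (hY' b hb)
  · rw [Finset.coe_mul, ← Submodule.span_mul_span]
    exact Submodule.mul_mem_mul hs hs'
  · have : ((G * H).card : ℝ) ≤ G.card * H.card := by exact_mod_cast Finset.card_mul_le
    refine this.trans ?_
    have := Nat.cast_nonneg (α := ℝ) H.card
    have := Nat.cast_nonneg (α := ℝ) G.card
    gcongr
    linarith

open Classical in
theorem HasD.add {φ : Fin n → Bool} {f g : MvPolynomial (Fin n) F} {A B : ℝ}
    (hf : HasD φ f A) (hg : HasD φ g B) : HasD φ (f + g) (A * B) := by
  obtain ⟨G, h1, hY, hs, hc⟩ := hf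
  obtain ⟨H, h1', hY', hs', hc'⟩ := hg
  refine ⟨G * H, ?_, ?_, ?_, ?_⟩
  · simpa using Finset.mul_mem_mul h1 h1'
  · intro x hx
    obtain ⟨a, ha, b, hb, rfl⟩ := Finset.mem_mul.1 hx
    exact mul_mem (hY a ha) (hY' b hb)
  · refine add_mem (Submodule.span_mono ?_ hs) (Submodule.span_mono ?_ hs')
    · intro x hx
      have := Finset.mul_mem_mul (s := G) (t := H) hx h1'
      rw [mul_one] at this
      exact this
    · intro x hx
      have := Finset.mul_mem_mul (s := G) (t := H) h1 hx
      rw [one_mul] at this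
      exact this
  · have : ((G * H).card : ℝ) ≤ G.card * H.card := by exact_mod_cast Finset.card_mul_le
    refine this.trans ?_
    have := Nat.cast_nonneg (α := ℝ) H.card
    have := Nat.cast_nonneg (α := ℝ) G.card
    gcongr
    linarith

theorem HasD.mono {φ : Fin n → Bool} {f : MvPolynomial (Fin n) F} {A B : ℝ}
    (hf : HasD φ f A) (h : A ≤ B) : HasD φ f B := by
  obtain ⟨G, h1, hY, hs, hc⟩ := hf
  exact ⟨G, h1, hY, hs, hc.trans h⟩

theorem HasD.C (φ : Fin n → Bool) (c : F) : HasD φ (MvPolynomial.C c) 1 := by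
  refine ⟨{1}, by simp, ?_, ?_, by simp⟩
  · intro g hg
    rw [Finset.mem_singleton.1 hg]
    exact one_mem _
  · have := Submodule.smul_mem (Submodule.span (supported F {i : Fin n | φ i = false})
      (({1} : Finset (MvPolynomial (Fin n) F)) : Set (MvPolynomial (Fin n) F)))
      (⟨MvPolynomial.C c, Subalgebra.algebraMap_mem _ c⟩ : supported F {i : Fin n | φ i = false})
      (Submodule.subset_span (by simp : (1 : MvPolynomial (Fin n) F) ∈ _))
    simpa [Algebra.smul_def, Subalgebra.smul_def] using this

open Classical in
theorem HasD.X (φ : Fin n → Bool) (i : Fin n) :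
    HasD (F := F) φ (MvPolynomial.X i) (if φ i = true then 2 else 1) := by
  by_cases hi : φ i = true
  · refine ⟨{1, MvPolynomial.X i}, by simp, ?_, ?_, ?_⟩
    · intro g hg
      rcases Finset.mem_insert.1 hg with rfl | hg
      · exact one_mem _
      · rw [Finset.mem_singleton.1 hg]
        exact X_mem_supported.2 hi
    · exact Submodule.subset_span (by simp)
    · rw [if_pos hi]
      exact_mod_cast Finset.card_le_two
  · refine ⟨{1}, by simp, ?_, ?_, by simp [hi]⟩
    · intro g hg
      rw [Finset.mem_singleton.1 hg]
      exact one_mem _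
    · have := Submodule.smul_mem (Submodule.span (supported F {i : Fin n | φ i = false})
        (({1} : Finset (MvPolynomial (Fin n) F)) : Set (MvPolynomial (Fin n) F)))
        (⟨MvPolynomial.X i, X_mem_supported.2 (by simpa using hi)⟩ :
          supported F {i : Fin n | φ i = false})
        (Submodule.subset_span (by simp : (1 : MvPolynomial (Fin n) F) ∈ _))
      simpa [Subalgebra.smul_def] using this

open Classical in
theorem HasD.affine {φ : Fin n → Bool} {a b w : MvPolynomial (Fin n) F} {B : ℝ}
    (ha : a ∈ supported F {i | φ i = true}) (hb : b ∈ supported F {i | φ i = true})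
    (hw : HasD φ w B) : HasD φ (a * w + b) (3 * B) := by
  obtain ⟨G, h1, hY, hs, hc⟩ := hw
  refine ⟨{1, b} ∪ {a} * G, by simp, ?_, ?_, ?_⟩
  · intro g hg
    rcases Finset.mem_union.1 hg with hg | hg
    · rcases Finset.mem_insert.1 hg with rfl | hg
      · exact one_mem _
      · rw [Finset.mem_singleton.1 hg]
        exact hb
    · obtain ⟨x, hx, y, hy, rfl⟩ := Finset.mem_mul.1 hg
      rw [Finset.mem_singleton.1 hx]
      exact mul_mem ha (hY y hy)
  · refine add_mem ?_ (Submodule.subset_span (by simp))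
    have : a * w ∈ Submodule.span (supported F {i : Fin n | φ i = false})
        ((({a} : Finset (MvPolynomial (Fin n) F)) * G : Finset _) : Set (MvPolynomial (Fin n) F)) := by
      rw [Finset.coe_mul, ← Submodule.span_mul_span]
      exact Submodule.mul_mem_mul (Submodule.subset_span (by simp)) hs
    refine Submodule.span_mono ?_ this
    exact_mod_cast Finset.subset_union_right
  · have h2 : ({1, b} ∪ {a} * G : Finset (MvPolynomial (Fin n) F)).card ≤ 2 + G.card := by
      refine (Finset.card_union_le _ _).trans (add_le_add Finset.card_le_two ?_)
      refine Finset.card_mul_le.trans ?_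
      simp
    have h3 : 1 ≤ G.card := Finset.card_pos.2 ⟨1, h1⟩
    have h4 : ((({1, b} ∪ {a} * G : Finset (MvPolynomial (Fin n) F)).card : ℕ) : ℝ)
      ≤ 3 * G.card := by
      have : ({1, b} ∪ {a} * G : Finset (MvPolynomial (Fin n) F)).card ≤ 3 * G.card := by omega
      exact_mod_cast this
    linarith

theorem coeff_mul_split {s t : Set (Fin n)} (hst : Disjoint s t)
    {g h : MvPolynomial (Fin n) F} (hg : g ∈ supported F s) (hh : h ∈ supported F t)
    (m m' : Fin n →₀ ℕ) (hm : ∀ i, i ∉ s → m i = 0) (hm' : ∀ i, i ∉ t → m' i = 0) :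
    coeff (m + m') (g * h) = coeff m g * coeff m' h := by
  classical
  have hgs : ∀ k, coeff k g ≠ 0 → ∀ i, i ∉ s → k i = 0 := by
    intro k hk i hi
    by_contra h0
    apply hi
    apply mem_supported.1 hg
    rw [Finset.mem_coe, mem_vars_iff_mem_support]
    exact ⟨k, mem_support_iff.2 hk, Finsupp.mem_support_iff.2 h0⟩
  have hhs : ∀ k, coeff k h ≠ 0 → ∀ i, i ∉ t → k i = 0 := by
    intro k hk i hi
    by_contra h0
    apply hi
    apply mem_supported.1 hh
    rw [Finset.mem_coe, mem_vars_iff_mem_support]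
    exact ⟨k, mem_support_iff.2 hk, Finsupp.mem_support_iff.2 h0⟩
  rw [coeff_mul]
  rw [Finset.sum_eq_single (m, m')]
  · rintro ⟨a, b⟩ hab hne
    rw [Finset.HasAntidiagonal.mem_antidiagonal] at hab
    simp only at hab ⊢
    by_contra h0
    have ha := hgs a (left_ne_zero_of_mul h0)
    have hb := hhs b (right_ne_zero_of_mul h0)
    apply hne
    have : ∀ i, a i = m i ∧ b i = m' i := by
      intro i
      have hi := DFunLike.congr_fun hab i
      simp only [Finsupp.add_apply] at hi
      by_cases his : i ∈ s
      · have hit : i ∉ t := fun h => Set.disjoint_left.1 hst his h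
        have := hb i hit
        have := hm' i hit
        omega
      · have := ha i his
        have := hm i his
        omega
    ext i
    · exact (this i).1
    · exact (this i).2
  · intro h
    exact absurd (Finset.HasAntidiagonal.mem_antidiagonal.2 (show (m, m').1 + (m, m').2 = m + m' from rfl)) h

theorem HasD.rank_le {φ : Fin n → Bool} {f : MvPolynomial (Fin n) F} {B : ℝ}
    (hf : HasD φ f B) : (rankPart F n φ f : ℝ) ≤ B := by
  classical
  obtain ⟨G, h1, hY, hs, hc⟩ := hf
  refine le_trans ?_ hc
  obtain ⟨c, -, hcf⟩ := Submodule.mem_span_finset.1 hs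
  let M : Matrix (Finset (Fin n)) G F := fun S g =>
    if S ⊆ Finset.univ.filter (fun i => φ i = true) then
      coeff (∑ i ∈ S, Finsupp.single i 1) g.1 else 0
  let N : Matrix G (Finset (Fin n)) F := fun g T =>
    if T ⊆ Finset.univ.filter (fun i => φ i = false) then
      coeff (∑ i ∈ T, Finsupp.single i 1) (c g.1).1 else 0
  have key : pdMatrix F n (Finset.univ.filter fun i => φ i = true)
    (Finset.univ.filter fun i => φ i = false) f = M * N := by
    ext S T
    rw [Matrix.mul_apply]
    unfold pdMatrix
    simp only [M, N]
    by_cases hS : S ⊆ Finset.univ.filter (fun i => φ i = true)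
    swap
    · simp [hS]
    by_cases hT : T ⊆ Finset.univ.filter (fun i => φ i = false)
    swap
    · simp [hT]
    simp only [hS, hT, and_self, if_true]
    have hdis : Disjoint S T := by
      rw [Finset.disjoint_left]
      intro i hi hi'
      have a1 := (Finset.mem_filter.1 (hS hi)).2
      have a2 := (Finset.mem_filter.1 (hT hi')).2
      rw [a1] at a2
      exact absurd a2 (by simp)
    rw [Finset.sum_union hdis, ← hcf, coeff_sum]
    rw [← Finset.sum_coe_sort G]
    refine Finset.sum_congr rfl ?_
    intro g _
    rw [Subalgebra.smul_def, smul_eq_mul, mul_comm]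
    refine coeff_mul_split (s := {i | φ i = true}) (t := {i | φ i = false}) ?_ (hY _ g.2) (c g.1).2 _ _ ?_ ?_
    · rw [Set.disjoint_left]
      intro i hi hi'
      simp_all
    · intro i hi
      rw [Finsupp.finsetSum_apply]
      refine Finset.sum_eq_zero ?_
      intro j hj
      rw [Finsupp.single_apply, if_neg]
      rintro rfl
      exact hi (Finset.mem_filter.1 (hS hj)).2
    · intro i hi
      rw [Finsupp.finsetSum_apply]
      refine Finset.sum_eq_zero ?_
      intro j hj
      rw [Finsupp.single_apply, if_neg]
      rintro rfl
      exact hi (Finset.mem_filter.1 (hT hj)).2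
  unfold rankPart
  rw [key]
  have h1 := Matrix.rank_mul_le_left M N
  have h2 := Matrix.rank_le_card_width M
  rw [Fintype.card_coe] at h2
  exact_mod_cast h1.trans h2

end Alg

section Comb
open MvPolynomial

variable {F : Type} [Field F] {n : ℕ}

/-- weight of a pair -/
noncomputable def wt (φ : Fin n → Bool) (p : Fin n × Fin n) : ℝ :=
  if φ p.1 = true ∧ φ p.2 = true then 3 / 4 else 1

theorem wt_pos (φ : Fin n → Bool) (p : Fin n × Fin n) : 0 < wt φ p := by
  unfold wt; split_ifs <;> norm_num

theorem wt_le (φ : Fin n → Bool) (p : Fin n × Fin n) : wt φ p ≤ 1 := by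
  unfold wt; split_ifs <;> norm_num

/-- the bound -/
noncomputable def Bd (S : Finset (Fin n)) (P : Finset (Fin n × Fin n)) (φ : Fin n → Bool) : ℝ :=
  2 ^ (S.filter (fun i => φ i = true)).card * ∏ p ∈ P, wt φ p

/-- disjoint pairs inside `S` -/
def GoodP (S : Finset (Fin n)) (P : Finset (Fin n × Fin n)) : Prop :=
  (∀ p ∈ P, p.1 ∈ S ∧ p.2 ∈ S ∧ p.1 ≠ p.2) ∧
  ∀ p ∈ P, ∀ q ∈ P, p ≠ q → p.1 ≠ q.1 ∧ p.1 ≠ q.2 ∧ p.2 ≠ q.1 ∧ p.2 ≠ q.2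

/-- the induction state -/
structure St (f : MvPolynomial (Fin n) F) (S : Finset (Fin n))
    (P : Finset (Fin n × Fin n)) : Prop where
  good : GoodP S P
  all : ∀ φ, HasD φ f (Bd S P φ)
  aff : ∃ (S0 T : Finset (Fin n)) (a b w : MvPolynomial (Fin n) F),
    GoodP S0 P ∧ Disjoint S0 T ∧ S = S0 ∪ T ∧ T.card ≤ 1 ∧
    a ∈ supported F (T : Set (Fin n)) ∧ b ∈ supported F (T : Set (Fin n)) ∧ f = a * w + b ∧
    (∀ φ, HasD φ w (Bd S0 P φ)) ∧
    ((S0 = ∅ ∧ P = ∅ ∧ w = 0) ∨ S0.card + 2 ≤ 4 * P.card)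

theorem St.card {f : MvPolynomial (Fin n) F} {S : Finset (Fin n)} {P} (h : St f S P) :
    S.card ≤ 4 * P.card + 1 := by
  obtain ⟨S0, T, a, b, w, -, hd, rfl, hT, -, -, -, -, h⟩ := h.aff
  rw [Finset.card_union_of_disjoint hd]
  rcases h with ⟨rfl, rfl, -⟩ | h
  · simpa using hT
  · omega

theorem GoodP.disjoint {S S' : Finset (Fin n)} {P P'} (h : GoodP S P) (h' : GoodP S' P')
    (hd : Disjoint S S') : Disjoint P P' := by
  rw [Finset.disjoint_left] at hd ⊢
  intro p hp hp'
  exact hd (h.1 p hp).1 (h'.1 p hp').1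

theorem GoodP.union {S S' : Finset (Fin n)} {P P'} (h : GoodP S P) (h' : GoodP S' P')
    (hd : Disjoint S S') : GoodP (S ∪ S') (P ∪ P') := by
  have hne : ∀ x ∈ S, ∀ y ∈ S', x ≠ y := by
    rintro x hx y hy rfl
    exact Finset.disjoint_left.1 hd hx hy
  refine ⟨?_, ?_⟩
  · intro p hp
    rcases Finset.mem_union.1 hp with hp | hp
    · obtain ⟨a, b, c⟩ := h.1 p hp
      exact ⟨Finset.mem_union_left _ a, Finset.mem_union_left _ b, c⟩
    · obtain ⟨a, b, c⟩ := h'.1 p hp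
      exact ⟨Finset.mem_union_right _ a, Finset.mem_union_right _ b, c⟩
  · intro p hp q hq hpq
    rcases Finset.mem_union.1 hp with hp | hp <;> rcases Finset.mem_union.1 hq with hq | hq
    · exact h.2 p hp q hq hpq
    · obtain ⟨a, b, c⟩ := h.1 p hp
      obtain ⟨a', b', c'⟩ := h'.1 q hq
      exact ⟨hne _ a _ a', hne _ a _ b', hne _ b _ a', hne _ b _ b'⟩
    · obtain ⟨a, b, c⟩ := h'.1 p hp
      obtain ⟨a', b', c'⟩ := h.1 q hq
      exact ⟨(hne _ a' _ a).symm, (hne _ b' _ a).symm, (hne _ a' _ b).symm, (hne _ b' _ b).symm⟩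
    · exact h'.2 p hp q hq hpq

theorem GoodP.mono {S S' : Finset (Fin n)} {P} (h : GoodP S P) (hs : S ⊆ S') : GoodP S' P :=
  ⟨fun p hp => ⟨hs (h.1 p hp).1, hs (h.1 p hp).2.1, (h.1 p hp).2.2⟩, h.2⟩

theorem GoodP.empty (S : Finset (Fin n)) : GoodP S ∅ := by
  constructor <;> simp

theorem GoodP.single {x y : Fin n} (h : x ≠ y) : GoodP {x, y} {(x, y)} := by
  constructor
  · intro p hp
    rw [Finset.mem_singleton.1 hp]
    simp [h]
  · intro p hp q hq hpq
    rw [Finset.mem_singleton.1 hp, Finset.mem_singleton.1 hq] at hpq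
    exact absurd rfl hpq

theorem Bd_union {S S' : Finset (Fin n)} {P P'} (hd : Disjoint S S') (hP : Disjoint P P')
    (φ : Fin n → Bool) : Bd (S ∪ S') (P ∪ P') φ = Bd S P φ * Bd S' P' φ := by
  unfold Bd
  rw [Finset.filter_union, Finset.card_union_of_disjoint (Finset.disjoint_filter_filter hd),
    Finset.prod_union hP, pow_add]
  ring

theorem St.combine2 {f g k : MvPolynomial (Fin n) F} {S S' : Finset (Fin n)} {P P'}
    (hf : St f S P) (hg : St g S' P') (hd : Disjoint S S')
    (h : S.card + 1 ≤ 4 * P.card) (h' : S'.card + 1 ≤ 4 * P'.card)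
    (hk : ∀ φ A B, HasD φ f A → HasD φ g B → HasD φ k (A * B)) : St k (S ∪ S') (P ∪ P') := by
  have hP := hf.good.disjoint hg.good hd
  have hall : ∀ φ, HasD φ k (Bd (S ∪ S') (P ∪ P') φ) := by
    intro φ
    rw [Bd_union hd hP]
    exact hk _ _ _ (hf.all φ) (hg.all φ)
  refine ⟨hf.good.union hg.good hd, hall, S ∪ S', ∅, 1, 0, k, hf.good.union hg.good hd, by simp, by simp, by simp,
    one_mem _, zero_mem _, by simp, hall, Or.inr ?_⟩
  rw [Finset.card_union_of_disjoint hd, Finset.card_union_of_disjoint hP]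
  omega

theorem St.combine1 {f k : MvPolynomial (Fin n) F} {S T' : Finset (Fin n)} {P}
    (hf : St f S P) (hT' : T'.card ≤ 1) (hd : Disjoint S T')
    (hk : ∀ φ, HasD φ k (Bd (S ∪ T') P φ))
    (ha : ∀ (T : Finset (Fin n)) (a b w : MvPolynomial (Fin n) F), f = a * w + b →
      a ∈ supported F (T : Set (Fin n)) → b ∈ supported F (T : Set (Fin n)) →
      ∃ a2 b2, a2 ∈ supported F ((T ∪ T' : Finset (Fin n)) : Set (Fin n)) ∧
        b2 ∈ supported F ((T ∪ T' : Finset (Fin n)) : Set (Fin n)) ∧ k = a2 * w + b2) :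
    ∃ P', St k (S ∪ T') P' := by
  have hgood := hf.good
  obtain ⟨S0, T, a, b, w, hPS0, hd0, rfl, hT, haT, hbT, hfw, hw, h⟩ := hf.aff
  obtain ⟨a2, b2, ha2, hb2, hk2⟩ := ha T a b w hfw haT hbT
  rw [Finset.disjoint_union_left] at hd
  have hdd : Disjoint S0 (T ∪ T') := Finset.disjoint_union_right.2 ⟨hd0, hd.1⟩
  by_cases hc : (T ∪ T').card ≤ 1
  · exact ⟨P, hgood.mono Finset.subset_union_left, hk, S0, T ∪ T', a2, b2, w, hPS0, hdd,
      Finset.union_assoc _ _ _, hc, ha2, hb2, hk2, hw, h⟩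
  rw [Finset.card_union_of_disjoint hd.2] at hc
  obtain ⟨x, rfl⟩ := Finset.card_eq_one.1 (show T.card = 1 by omega)
  obtain ⟨y, rfl⟩ := Finset.card_eq_one.1 (show T'.card = 1 by omega)
  have hxy : x ≠ y := by simpa using hd.2
  have hTT : ({x} ∪ {y} : Finset (Fin n)) = {x, y} := rfl
  rw [hTT] at ha2 hb2 hdd
  have hdP := hPS0.disjoint (GoodP.single hxy) hdd
  have hg2 := hPS0.union (GoodP.single hxy) hdd
  have hSS : S0 ∪ {x} ∪ {y} = S0 ∪ {x, y} := by rw [Finset.union_assoc]; rfl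
  rw [hSS] at hk ⊢
  have hall : ∀ φ, HasD φ k (Bd (S0 ∪ {x, y}) (P ∪ {(x, y)}) φ) := by
    intro φ
    by_cases hφ : φ x = true ∧ φ y = true
    · have hsub : (({x, y} : Finset (Fin n)) : Set (Fin n)) ⊆ {i | φ i = true} := by
        intro i hi
        have : i = x ∨ i = y := by simpa using hi
        rcases this with rfl | rfl
        · exact hφ.1
        · exact hφ.2
      have := HasD.affine (supported_mono hsub ha2) (supported_mono hsub hb2) (hw φ)
      rw [← hk2] at this
      refine this.mono (le_of_eq ?_)
      rw [Bd_union hdd hdP]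
      have : Bd {x, y} {(x, y)} φ = 3 := by
        unfold Bd wt
        have hfl : ({x, y} : Finset (Fin n)).filter (fun i => φ i = true) = {x, y} :=
          Finset.filter_true_of_mem (fun i hi => hsub hi)
        rw [hfl, Finset.card_pair hxy]
        simp [hφ]
        norm_num
      rw [this]; ring
    · refine (hk φ).mono (le_of_eq ?_)
      unfold Bd
      rw [Finset.prod_union hdP]
      simp [wt, hφ]
  refine ⟨P ∪ {(x, y)}, hg2, hall, S0 ∪ {x, y}, ∅, 1, 0, k, hg2, by simp, by simp, by simp,
    one_mem _, zero_mem _, by simp, hall, Or.inr ?_⟩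
  rw [Finset.card_union_of_disjoint hdd, Finset.card_union_of_disjoint hdP, Finset.card_pair hxy]
  rcases h with ⟨rfl, rfl, -⟩ | h
  · simp
  · simp; omega



theorem St.dich {f : MvPolynomial (Fin n) F} {S : Finset (Fin n)} {P} (h : St f S P) :
    S.card + 1 ≤ 4 * P.card ∨
      (S.card ≤ 1 ∧ P = ∅ ∧ f ∈ supported F (S : Set (Fin n))) := by
  obtain ⟨S0, T, a, b, w, -, hd, rfl, hT, ha, hb, hf, -, h⟩ := h.aff
  rcases h with ⟨rfl, rfl, rfl⟩ | h
  · right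
    refine ⟨by simpa using hT, rfl, ?_⟩
    rw [hf]
    simpa using hb
  · left
    rw [Finset.card_union_of_disjoint hd]
    omega

theorem St.combine {f g k : MvPolynomial (Fin n) F} {S S' : Finset (Fin n)} {P P'}
    (hf : St f S P) (hg : St g S' P') (hd : Disjoint S S') (hk : k = f + g ∨ k = f * g) :
    ∃ P'', St k (S ∪ S') P'' := by
  have hD : ∀ φ A B, HasD φ f A → HasD φ g B → HasD φ k (A * B) := by
    intro φ A B h1 h2
    rcases hk with rfl | rfl
    · exact h1.add h2
    · exact h1.mul h2
  have hsym : ∀ (f g : MvPolynomial (Fin n) F) (S T' : Finset (Fin n)) (P P'), St f S P →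
      St g T' P' → Disjoint S T' → (k = f + g ∨ k = f * g) →
      (∀ φ A B, HasD φ f A → HasD φ g B → HasD φ k (A * B)) →
      (T'.card ≤ 1 ∧ P' = ∅ ∧ g ∈ supported F (T' : Set (Fin n))) → ∃ P'', St k (S ∪ T') P'' := by
    rintro f g S T' P P' hf hg hd hk hD ⟨hT', rfl, hgT⟩
    refine hf.combine1 hT' hd ?_ ?_
    · intro φ
      have := hD φ _ _ (hf.all φ) (hg.all φ)
      rw [← Bd_union hd (by simp)] at this
      simpa using this
    · intro T a b w hfw ha hb
      have hl : ((T : Finset (Fin n)) : Set (Fin n)) ⊆ ((T ∪ T' : Finset (Fin n)) : Set (Fin n)) := by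
        exact_mod_cast Finset.subset_union_left
      have hr : ((T' : Finset (Fin n)) : Set (Fin n)) ⊆ ((T ∪ T' : Finset (Fin n)) : Set (Fin n)) := by
        exact_mod_cast Finset.subset_union_right
      have ha := supported_mono (R := F) hl ha
      have hb := supported_mono (R := F) hl hb
      have hg := supported_mono (R := F) hr hgT
      rcases hk with rfl | rfl
      · exact ⟨a, b + g, ha, add_mem hb hg, by rw [hfw]; ring⟩
      · exact ⟨a * g, b * g, mul_mem ha hg, mul_mem hb hg, by rw [hfw]; ring⟩
  rcases hg.dich with h' | h'
  · rcases hf.dich with h | h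
    · exact ⟨_, hf.combine2 hg hd h h' hD⟩
    · rw [Finset.union_comm]
      refine hsym g f S' S P' P hg hf hd.symm ?_ ?_ h
      · rw [add_comm, mul_comm]; exact hk
      · intro φ A B h1 h2
        rw [mul_comm]
        exact hD φ B A h2 h1
  · exact hsym f g S S' P P' hf hg hd hk hD h'

theorem Bd_one (φ : Fin n → Bool) : Bd (n := n) ∅ ∅ φ = 1 := by simp [Bd]

theorem formula_St (Φ : Formula F n) (h : ∀ i, Φ.readCount i ≤ 1) :
    ∃ S P, (∀ i, i ∈ S ↔ 0 < Φ.readCount i) ∧ St Φ.eval S P := by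
  induction Φ with
  | const c =>
    refine ⟨∅, ∅, by simp [Formula.readCount], GoodP.empty _, ?_, ∅, ∅, 0, C c, 0,
      GoodP.empty _, by simp, by simp, by simp, zero_mem _, Subalgebra.algebraMap_mem _ c,
      by simp [Formula.eval], ?_, Or.inl (by simp)⟩
    · intro φ
      rw [Bd_one]
      exact HasD.C φ c
    · intro φ
      rw [Bd_one, ← C_0]
      exact HasD.C φ 0
  | var x =>
    refine ⟨{x}, ∅, ?_, GoodP.empty _, ?_, ∅, {x}, 0, X x, 0,
      GoodP.empty _, by simp, by simp, by simp, zero_mem _, X_mem_supported.2 (by simp),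
      by simp [Formula.eval], ?_, Or.inl (by simp)⟩
    · intro i
      simp only [Formula.readCount, Finset.mem_singleton]
      split_ifs with hh
      · simp [hh]
      · simp [Ne.symm hh]
    · intro φ
      refine (HasD.X φ x).mono (le_of_eq ?_)
      unfold Bd
      rw [Finset.filter_singleton]
      split_ifs <;> simp
    · intro φ
      rw [Bd_one, ← C_0]
      exact HasD.C φ 0
  | add f g ihf ihg =>
    simp only [Formula.readCount] at h ⊢
    obtain ⟨S, P, hS, hf⟩ := ihf (fun i => by have := h i; omega)
    obtain ⟨S', P', hS', hg⟩ := ihg (fun i => by have := h i; omega)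
    have hd : Disjoint S S' := by
      rw [Finset.disjoint_left]
      intro i hi hi'
      have := h i
      have := (hS i).1 hi
      have := (hS' i).1 hi'
      omega
    obtain ⟨P'', hP⟩ := hf.combine hg hd (Or.inl rfl)
    refine ⟨S ∪ S', P'', ?_, hP⟩
    intro i
    rw [Finset.mem_union, hS, hS']
    omega
  | mul f g ihf ihg =>
    simp only [Formula.readCount] at h ⊢
    obtain ⟨S, P, hS, hf⟩ := ihf (fun i => by have := h i; omega)
    obtain ⟨S', P', hS', hg⟩ := ihg (fun i => by have := h i; omega)
    have hd : Disjoint S S' := by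
      rw [Finset.disjoint_left]
      intro i hi hi'
      have := h i
      have := (hS i).1 hi
      have := (hS' i).1 hi'
      omega
    obtain ⟨P'', hP⟩ := hf.combine hg hd (Or.inr rfl)
    refine ⟨S ∪ S', P'', ?_, hP⟩
    intro i
    rw [Finset.mem_union, hS, hS']
    omega

theorem formula_fill (Φ : Formula F n) (h : ∀ i, Φ.readCount i ≤ 1) (s : Finset (Fin n)) :
    ∃ Ψ : Formula F n, Ψ.eval = Φ.eval ∧ (∀ i, Ψ.readCount i ≤ 1) ∧ ∀ i ∈ s, 0 < Ψ.readCount i := by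
  induction s using Finset.induction_on with
  | empty => exact ⟨Φ, rfl, h, by simp⟩
  | insert x s hx ih =>
    obtain ⟨Ψ, h1, h2, h3⟩ := ih
    by_cases h0 : 0 < Ψ.readCount x
    · refine ⟨Ψ, h1, h2, ?_⟩
      intro i hi
      rcases Finset.mem_insert.1 hi with rfl | hi
      · exact h0
      · exact h3 i hi
    · refine ⟨Ψ.add ((Formula.const 0).mul (Formula.var x)), by simp [Formula.eval, h1], ?_, ?_⟩
      · intro i
        simp only [Formula.readCount]
        split_ifs with hh
        · subst hh; omega
        · have := h2 i; omega
      · intro i hi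
        simp only [Formula.readCount]
        split_ifs with hh
        · omega
        · have := h3 i ((Finset.mem_insert.1 hi).resolve_left (Ne.symm hh)); omega

theorem main_alg (Φ : Formula F n) (h : ∀ i, Φ.readCount i ≤ 1) :
    ∃ P : Finset (Fin n × Fin n), GoodP Finset.univ P ∧ n ≤ 4 * P.card + 1 ∧
      ∀ φ, (rankPart F n φ Φ.eval : ℝ) ≤ Bd Finset.univ P φ := by
  obtain ⟨Ψ, h1, h2, h3⟩ := formula_fill Φ h Finset.univ
  obtain ⟨S, P, hS, hst⟩ := formula_St Ψ h2
  have : S = Finset.univ := by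
    ext i
    simp [hS, h3 i (Finset.mem_univ i)]
  subst this
  refine ⟨P, hst.good, ?_, ?_⟩
  · simpa using hst.card
  · intro φ
    rw [← h1]
    exact (hst.all φ).rank_le

end Comb

section Prob
open Classical

variable {n : ℕ}

/-- block -/
def blk (n r b : ℕ) : Finset (Fin n) := Finset.univ.filter fun i => (i : ℕ) / r = b

theorem mem_blk {r b : ℕ} {i : Fin n} : i ∈ blk n r b ↔ (i : ℕ) / r = b := by simp [blk]

theorem card_blk_le {r : ℕ} (hr : 0 < r) (b : ℕ) : (blk n r b).card ≤ r := by
  have h : ((blk n r b).map Fin.valEmbedding) ⊆ Finset.Ico (b * r) (b * r + r) := by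
    intro x hx
    obtain ⟨i, hi, rfl⟩ := Finset.mem_map.1 hx
    rw [mem_blk, Nat.div_eq_iff hr] at hi
    simp only [Fin.valEmbedding_apply, Finset.mem_Ico]
    omega
  simpa using Finset.card_le_card h

theorem card_blk {r : ℕ} (hr : 0 < r) (b : ℕ) (hb : b < n / r) :
    (blk n r b).card = r := by
  have h : ((blk n r b).map Fin.valEmbedding) = Finset.Ico (b * r) (b * r + r) := by
    ext x
    simp only [Finset.mem_map, mem_blk, Fin.valEmbedding_apply, Finset.mem_Ico]
    constructor
    · rintro ⟨i, hi, rfl⟩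
      rw [Nat.div_eq_iff hr] at hi
      omega
    · intro hx
      have h1 : (b + 1) * r ≤ n := (Nat.mul_le_mul_right r hb).trans (Nat.div_mul_le_self n r)
      refine ⟨⟨x, by rw [Nat.succ_mul] at h1; omega⟩, ?_, rfl⟩
      rw [Nat.div_eq_iff hr]
      simp only
      omega
  have := congrArg Finset.card h
  simpa using this

theorem bb_iff {r : ℕ} {φ : Fin n → Bool} : BlockBalanced n r φ ↔
    ∀ b < n / r, ((blk n r b).filter fun i => φ i = true).card = r / 2 := by
  unfold BlockBalanced
  refine forall₂_congr fun b _ => ?_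
  rw [← Set.ncard_coe_finset]
  congr! 2
  ext i
  simp [blk]

theorem exists_canon {r : ℕ} (hr : 4 ≤ r) (x y : Fin n) :
    ∃ c : Fin n → Bool, BlockBalanced n r c ∧
      ((x : ℕ) / r < n / r → c x = true) ∧ ((y : ℕ) / r < n / r → c y = true) := by
  have h : ∀ b : ℕ, ∃ U : Finset (Fin n), b < n / r →
      ({x, y} ∩ blk n r b ⊆ U ∧ U ⊆ blk n r b ∧ U.card = r / 2) := by
    intro b
    by_cases hb : b < n / r
    · obtain ⟨U, h1, h2, h3⟩ := Finset.exists_subsuperset_card_eq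
        (s := {x, y} ∩ blk n r b) (t := blk n r b) (n := r / 2) Finset.inter_subset_right
        ((Finset.card_le_card Finset.inter_subset_left).trans
          (Finset.card_le_two.trans (by omega))) (by rw [card_blk (by omega) b hb]; omega)
      exact ⟨U, fun _ => ⟨h1, h2, h3⟩⟩
    · exact ⟨∅, fun h => absurd h hb⟩
  choose U hU using h
  refine ⟨fun i => decide (i ∈ U ((i : ℕ) / r)), ?_, ?_, ?_⟩
  · rw [bb_iff]
    intro b hb
    rw [← (hU b hb).2.2]
    congr 1
    ext i
    simp only [Finset.mem_filter, mem_blk, decide_eq_true_eq]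
    constructor
    · rintro ⟨rfl, h⟩
      exact h
    · intro h
      have := mem_blk.1 ((hU b hb).2.1 h)
      subst this
      exact ⟨rfl, h⟩
  · intro hx
    have := (hU _ hx).1 (show x ∈ _ by simp [mem_blk])
    simpa using this
  · intro hx
    have := (hU _ hx).1 (show y ∈ _ by simp [mem_blk])
    simpa using this

/-- the two blocks touched by a pair -/
def blks (r : ℕ) (p : Fin n × Fin n) : Finset (Fin n) :=
  blk n r ((p.1 : ℕ) / r) ∪ blk n r ((p.2 : ℕ) / r)

theorem card_blks {r : ℕ} (hr : 0 < r) (p : Fin n × Fin n) : (blks r p).card ≤ 2 * r := by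
  have := Finset.card_union_le (blk n r ((p.1 : ℕ) / r)) (blk n r ((p.2 : ℕ) / r))
  have := card_blk_le (n := n) hr ((p.1 : ℕ) / r)
  have := card_blk_le (n := n) hr ((p.2 : ℕ) / r)
  unfold blks
  omega

theorem mem_blks_left (r : ℕ) (p : Fin n × Fin n) : p.1 ∈ blks r p := by simp [blks, mem_blk]
theorem mem_blks_right (r : ℕ) (p : Fin n × Fin n) : p.2 ∈ blks r p := by simp [blks, mem_blk]

theorem div_lt {r : ℕ} (hr : 0 < r) (hn : r ∣ n) (x : Fin n) : (x : ℕ) / r < n / r := by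
  rw [Nat.div_lt_iff_lt_mul hr, Nat.div_mul_cancel hn]
  exact x.2

/-- All balanced partitions -/
noncomputable def BB (n r : ℕ) : Finset (Fin n → Bool) :=
  Finset.univ.filter fun φ => BlockBalanced n r φ

theorem sum_step {r : ℕ} (hr : 4 ≤ r) (hn : r ∣ n) (p : Fin n × Fin n)
    (h : (Fin n → Bool) → ℝ) (h0 : ∀ φ, 0 ≤ h φ)
    (hinv : ∀ φ ψ : Fin n → Bool, (∀ i, i ∉ blks r p → φ i = ψ i) → h φ = h ψ) :
    ∑ φ ∈ BB n r, h φ * wt φ p ≤ (1 - 1 / (4 * 2 ^ (2 * r))) * ∑ φ ∈ BB n r, h φ := by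
  obtain ⟨c, hc, hx, hy⟩ := exists_canon hr p.1 p.2
  have hx := hx (div_lt (by omega) hn _)
  have hy := hy (div_lt (by omega) hn _)
  let Y := (BB n r).filter fun φ => φ p.1 = true ∧ φ p.2 = true
  let T : (Fin n → Bool) → (Fin n → Bool) := fun φ i => if i ∈ blks r p then c i else φ i
  have hT : ∀ φ ∈ BB n r, T φ ∈ Y := by
    intro φ hφ
    have hφ := (Finset.mem_filter.1 hφ).2
    simp only [Y, Finset.mem_filter, BB, Finset.mem_univ, true_and]
    refine ⟨?_, ?_, ?_⟩
    · rw [bb_iff] at hφ hc ⊢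
      intro b hb
      by_cases hbp : b = (p.1 : ℕ) / r ∨ b = (p.2 : ℕ) / r
      · rw [← hc b hb]
        congr 1
        refine Finset.filter_congr fun i hi => ?_
        have : i ∈ blks r p := by
          rw [mem_blk] at hi
          rw [blks, Finset.mem_union, mem_blk, mem_blk, hi]
          exact hbp
        simp [T, this]
      · rw [← hφ b hb]
        congr 1
        refine Finset.filter_congr fun i hi => ?_
        have : i ∉ blks r p := by
          rw [mem_blk] at hi
          rw [blks, Finset.mem_union, mem_blk, mem_blk, hi]
          exact hbp
        simp [T, this]
    · simp [T, mem_blks_left, hx]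
    · simp [T, mem_blks_right, hy]
  have hfib : ∀ ψ ∈ Y, ((BB n r).filter fun φ => T φ = ψ).card ≤ 2 ^ (2 * r) := by
    intro ψ _
    have : ((BB n r).filter fun φ => T φ = ψ).card ≤ (blks r p).powerset.card := by
      refine Finset.card_le_card_of_injOn (fun φ => (blks r p).filter fun i => φ i = true) ?_ ?_
      · intro φ _
        exact Finset.mem_coe.2 (Finset.mem_powerset.2 (Finset.filter_subset _ _))
      · intro φ hφ φ' hφ' he
        have h1 : T φ = T φ' := by
          rw [(Finset.mem_filter.1 hφ).2, (Finset.mem_filter.1 hφ').2]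
        funext i
        by_cases hi : i ∈ blks r p
        · have := Finset.ext_iff.1 he i
          simp only [Finset.mem_filter, hi, true_and] at this
          exact Bool.eq_iff_iff.2 this
        · have := congrFun h1 i
          simpa [T, hi] using this
    refine this.trans ?_
    rw [Finset.card_powerset]
    exact Nat.pow_le_pow_right (by norm_num) (card_blks (by omega) p)
  have hsum : ∑ φ ∈ BB n r, h φ ≤ 2 ^ (2 * r) * ∑ ψ ∈ Y, h ψ := by
    rw [← Finset.sum_fiberwise_of_maps_to hT, Finset.mul_sum]
    refine Finset.sum_le_sum fun ψ hψ => ?_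
    have : ∀ φ ∈ (BB n r).filter (fun φ => T φ = ψ), h φ = h ψ := by
      intro φ hφ
      rw [← (Finset.mem_filter.1 hφ).2]
      refine hinv _ _ fun i hi => ?_
      simp [T, hi]
    rw [Finset.sum_congr rfl this, Finset.sum_const, nsmul_eq_mul]
    refine mul_le_mul_of_nonneg_right ?_ (h0 _)
    exact_mod_cast hfib ψ hψ
  have heq : ∑ φ ∈ BB n r, h φ * wt φ p = ∑ φ ∈ BB n r, h φ - 1 / 4 * ∑ ψ ∈ Y, h ψ := by
    simp only [Y]
    rw [Finset.sum_filter, Finset.mul_sum, ← Finset.sum_sub_distrib]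
    refine Finset.sum_congr rfl fun φ _ => ?_
    unfold wt
    split_ifs <;> ring
  rw [heq]
  have hK : (0 : ℝ) < 2 ^ (2 * r) := by positivity
  have : 1 / (4 * 2 ^ (2 * r)) * ∑ φ ∈ BB n r, h φ ≤ 1 / 4 * ∑ ψ ∈ Y, h ψ := by
    calc _ ≤ 1 / (4 * 2 ^ (2 * r)) * (2 ^ (2 * r) * ∑ ψ ∈ Y, h ψ) := by gcongr
      _ = _ := by field_simp
  linarith

theorem sum_indep {r : ℕ} (hr : 4 ≤ r) (hn : r ∣ n) (Q : Finset (Fin n × Fin n))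
    (hQ : ∀ p ∈ Q, ∀ q ∈ Q, p ≠ q → p.1 ∉ blks r q ∧ p.2 ∉ blks r q) :
    ∑ φ ∈ BB n r, ∏ p ∈ Q, wt φ p ≤ (1 - 1 / (4 * 2 ^ (2 * r))) ^ Q.card * (BB n r).card := by
  induction Q using Finset.induction_on with
  | empty => simp
  | insert p Q hp ih =>
    have ih := ih (fun a ha b hb => hQ a (Finset.mem_insert_of_mem ha) b (Finset.mem_insert_of_mem hb))
    have h1 := sum_step hr hn p (fun φ => ∏ q ∈ Q, wt φ q)
      (fun φ => Finset.prod_nonneg fun q _ => (wt_pos φ q).le) (by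
        intro φ ψ h
        refine Finset.prod_congr rfl fun q hq => ?_
        have := hQ q (Finset.mem_insert_of_mem hq) p (Finset.mem_insert_self _ _)
          (by rintro rfl; exact hp hq)
        unfold wt
        rw [h _ this.1, h _ this.2])
    have h2 : ∑ φ ∈ BB n r, ∏ q ∈ insert p Q, wt φ q
        = ∑ φ ∈ BB n r, (∏ q ∈ Q, wt φ q) * wt φ p := by
      refine Finset.sum_congr rfl fun φ _ => ?_
      rw [Finset.prod_insert hp, mul_comm]
    rw [h2, Finset.card_insert_of_notMem hp, pow_succ']
    refine h1.trans ?_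
    rw [mul_assoc]
    refine mul_le_mul_of_nonneg_left ih ?_
    have : (1 : ℝ) ≤ 2 ^ (2 * r) := one_le_pow₀ (by norm_num)
    rw [sub_nonneg, div_le_one (by positivity)]
    linarith

theorem blks_symm {r : ℕ} {p q : Fin n × Fin n} (h : p.1 ∉ blks r q ∧ p.2 ∉ blks r q) :
    q.1 ∉ blks r p ∧ q.2 ∉ blks r p := by
  simp only [blks, Finset.mem_union, mem_blk, not_or] at h ⊢
  obtain ⟨⟨a, b⟩, c, d⟩ := h
  exact ⟨⟨Ne.symm a, Ne.symm c⟩, Ne.symm b, Ne.symm d⟩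

theorem exists_indep {r : ℕ} (hr : 0 < r) (P : Finset (Fin n × Fin n))
    (hP : GoodP Finset.univ P) : ∃ Q ⊆ P, P.card ≤ 2 * r * Q.card ∧
      ∀ p ∈ Q, ∀ q ∈ Q, p ≠ q → p.1 ∉ blks r q ∧ p.2 ∉ blks r q := by
  let C := P.powerset.filter fun Q => ∀ p ∈ Q, ∀ q ∈ Q, p ≠ q → p.1 ∉ blks r q ∧ p.2 ∉ blks r q
  obtain ⟨Q, hQ, hmax⟩ := Finset.exists_max_image C Finset.card ⟨∅, by simp [C]⟩
  have hQ' := Finset.mem_filter.1 hQ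
  have hQP := Finset.mem_powerset.1 hQ'.1
  have hQi := hQ'.2
  refine ⟨Q, hQP, ?_, hQi⟩
  have hcov : ∀ p ∈ P, ∃ q ∈ Q, p.1 ∈ blks r q ∨ p.2 ∈ blks r q := by
    intro p hp
    by_contra! hcon
    have hpQ : p ∉ Q := fun h => (hcon p h).1 (mem_blks_left r p)
    have : insert p Q ∈ C := by
      refine Finset.mem_filter.2 ⟨Finset.mem_powerset.2 (Finset.insert_subset hp hQP), ?_⟩
      intro a ha b hb hab
      rcases Finset.mem_insert.1 ha with ha' | ha' <;> rcases Finset.mem_insert.1 hb with hb' | hb'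
      · exact absurd (ha'.trans hb'.symm) hab
      · rw [ha']
        exact hcon b hb'
      · rw [hb']
        exact blks_symm (hcon a ha')
      · exact hQi a ha' b hb' hab
    have := hmax _ this
    rw [Finset.card_insert_of_notMem hpQ] at this
    omega
  have hsub : P ⊆ Q.biUnion fun q => P.filter fun p => p.1 ∈ blks r q ∨ p.2 ∈ blks r q := by
    intro p hp
    obtain ⟨q, hq, h⟩ := hcov p hp
    exact Finset.mem_biUnion.2 ⟨q, hq, Finset.mem_filter.2 ⟨hp, h⟩⟩
  refine (Finset.card_le_card hsub).trans ?_
  refine (Finset.card_biUnion_le_card_mul _ _ (2 * r) ?_).trans (le_of_eq (mul_comm _ _))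
  intro q _
  refine le_trans ?_ (card_blks hr q)
  refine Finset.card_le_card_of_injOn (fun p => if p.1 ∈ blks r q then p.1 else p.2) ?_ ?_
  · intro p hp
    have := (Finset.mem_filter.1 hp).2
    simp only [Finset.mem_coe]
    split_ifs with h
    · exact h
    · exact this.resolve_left h
  · intro p hp p' hp' he
    by_contra hne
    have h := hP.2 p (Finset.mem_filter.1 hp).1 p' (Finset.mem_filter.1 hp').1 hne
    simp only at he
    split_ifs at he
    · exact h.1 he
    · exact h.2.1 he
    · exact h.2.2.1 he
    · exact h.2.2.2 he

theorem card_Y {r : ℕ} (hr : 0 < r) (he : Even r) (hn : r ∣ n) {φ : Fin n → Bool}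
    (h : BlockBalanced n r φ) :
    2 * (Finset.univ.filter fun i => φ i = true).card = n := by
  rw [bb_iff] at h
  have h1 := Finset.card_eq_sum_card_fiberwise
    (s := Finset.univ.filter fun i => φ i = true) (t := Finset.range (n / r))
    (f := fun i : Fin n => (i : ℕ) / r) (by
      intro i _
      simpa using div_lt hr hn i)
  have h2 : ∀ b ∈ Finset.range (n / r),
      ((Finset.univ.filter fun i => φ i = true).filter fun i : Fin n => (i : ℕ) / r = b).card
        = r / 2 := by
    intro b hb
    rw [← h b (Finset.mem_range.1 hb)]
    congr 1
    ext i
    simp [blk, and_comm]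
  rw [Finset.sum_congr rfl h2] at h1
  rw [h1]
  simp only [Finset.sum_const, Finset.card_range, smul_eq_mul]
  obtain ⟨k, rfl⟩ := he
  obtain ⟨m, rfl⟩ := hn
  rw [Nat.mul_div_cancel_left _ hr]
  have : (k + k) / 2 = k := by omega
  rw [this]; ring

theorem sum_rank {r : ℕ} (hr : 4 ≤ r) (he : Even r) (hn : r ∣ n) (hn0 : 0 < n)
    {F : Type} [Field F] (Φ : Formula F n) (hΦ : ∀ i, Φ.readCount i ≤ 1) :
    ∃ N : ℕ, n ≤ 16 * r * N ∧ ∑ φ ∈ BB n r, (rankPart F n φ Φ.eval : ℝ) ≤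
      (2 : ℝ) ^ ((n : ℝ) / 2) * ((1 - 1 / (4 * 2 ^ (2 * r))) ^ N * (BB n r).card) := by
  obtain ⟨P, hP, hPn, hrk⟩ := main_alg Φ hΦ
  obtain ⟨Q, hQP, hQc, hQ⟩ := exists_indep (r := r) (by omega) P hP
  have hrn := Nat.le_of_dvd hn0 hn
  refine ⟨Q.card, ?_, ?_⟩
  · have : 16 * r * Q.card = 8 * (2 * r * Q.card) := by ring
    omega
  · have := sum_indep hr hn Q hQ
    refine le_trans ?_ (mul_le_mul_of_nonneg_left this (by positivity))
    rw [Finset.mul_sum]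
    refine Finset.sum_le_sum fun φ hφ => ?_
    refine (hrk φ).trans ?_
    unfold Bd
    have hc := card_Y (by omega) he hn (Finset.mem_filter.1 hφ).2
    have hc' : (n : ℝ) / 2 = ((Finset.univ.filter fun i => φ i = true).card : ℝ) := by
      have h2 : (2 : ℝ) * ((Finset.univ.filter fun i => φ i = true).card : ℝ) = n := by
        exact_mod_cast hc
      linarith
    rw [hc', Real.rpow_natCast]
    refine mul_le_mul_of_nonneg_left ?_ (by positivity)
    rw [← Finset.prod_sdiff hQP]
    refine mul_le_of_le_one_left (Finset.prod_nonneg fun q _ => (wt_pos φ q).le) ?_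
    exact Finset.prod_le_one (fun q _ => (wt_pos φ q).le) (fun q _ => wt_le φ q)

end Prob

/-- for every sufficiently large even constant `r` there are `ε, δ > 0` such
that for all `n` divisible by `r` with `n/r` even and every polynomial computed by a
read-once formula, the probability over `φ ~ D_B` that `rank_φ(f) > 2^{n/2 - εn}` is at
most `2^{-δn}` (stated by counting: the number of bad `φ` is at most `2^{-δn}` times the
number of all `φ` in the support of `D_B`). -/
theorem ROF_rank_upper_bound :
    ∃ r₀ : ℕ, ∀ r : ℕ, r₀ ≤ r → Even r →
      ∃ ε δ : ℝ, 0 < ε ∧ 0 < δ ∧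
        ∀ (n : ℕ), 0 < n → r ∣ n → Even (n / r) →
          ∀ (F : Type) [inst : Field F] (Φ : Formula F n),
            (∀ i, Φ.readCount i ≤ 1) →
            (({φ : Fin n → Bool | BlockBalanced n r φ ∧
                (2 : ℝ) ^ ((n : ℝ) / 2 - ε * n) <
                  (rankPart F n φ Φ.eval : ℝ)} : Set (Fin n → Bool)).ncard : ℝ) ≤
              (2 : ℝ) ^ (-(δ * n)) *
                (({φ : Fin n → Bool | BlockBalanced n r φ} :
                    Set (Fin n → Bool)).ncard : ℝ) := by
  classical
  refine ⟨4, fun r hr he => ?_⟩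
  have hr0 : (0 : ℝ) < r := by exact_mod_cast (show 0 < r by omega)
  obtain ⟨κ, hκ⟩ : ∃ κ : ℝ, κ = 1 - 1 / (4 * 2 ^ (2 * r)) := ⟨_, rfl⟩
  have h1K : (1 : ℝ) ≤ 2 ^ (2 * r) := one_le_pow₀ (by norm_num)
  have hκ1 : κ < 1 := by
    rw [hκ]
    have : (0 : ℝ) < 1 / (4 * 2 ^ (2 * r)) := by positivity
    linarith
  have hκ0 : 0 < κ := by
    rw [hκ, sub_pos, div_lt_one (by positivity)]
    linarith
  have hlog : Real.logb 2 κ < 0 := Real.logb_neg (by norm_num) hκ0 hκ1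
  obtain ⟨η, hη⟩ : ∃ η : ℝ, η = - Real.logb 2 κ / (32 * r) := ⟨_, rfl⟩
  have hη0 : 0 < η := by
    rw [hη]
    exact div_pos (by linarith) (by positivity)
  have hlogη : Real.logb 2 κ = -(32 * r * η) := by
    rw [hη]; field_simp
  refine ⟨η, η, hη0, hη0, ?_⟩
  intro n hn0 hrn _ F _ Φ hΦ
  obtain ⟨N, hN, hsum⟩ := sum_rank hr he hrn hn0 Φ hΦ
  rw [← hκ] at hsum
  have hκN : κ ^ N ≤ (2 : ℝ) ^ (-(2 * η * n)) := by
    have h2 : κ = (2 : ℝ) ^ (Real.logb 2 κ) :=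
      (Real.rpow_logb (by norm_num) (by norm_num) hκ0).symm
    rw [h2, ← Real.rpow_natCast, ← Real.rpow_mul (by norm_num)]
    refine Real.rpow_le_rpow_of_exponent_le (by norm_num) ?_
    rw [hlogη]
    have : (n : ℝ) ≤ 16 * r * N := by exact_mod_cast hN
    nlinarith
  have hset1 : ({φ : Fin n → Bool | BlockBalanced n r φ} : Set (Fin n → Bool)).ncard
      = (BB n r).card := by
    rw [← Set.ncard_coe_finset]
    congr 1
    ext φ
    simp [BB]
  have hset2 : ({φ : Fin n → Bool | BlockBalanced n r φ ∧
                (2 : ℝ) ^ ((n : ℝ) / 2 - η * n) <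
                  (rankPart F n φ Φ.eval : ℝ)} : Set (Fin n → Bool)).ncard
      = ((BB n r).filter fun φ => (2 : ℝ) ^ ((n : ℝ) / 2 - η * n) <
                  (rankPart F n φ Φ.eval : ℝ)).card := by
    rw [← Set.ncard_coe_finset]
    congr 1
    ext φ
    simp [BB]
  rw [hset1, hset2]
  set bad := (BB n r).filter fun φ => (2 : ℝ) ^ ((n : ℝ) / 2 - η * n) <
                  (rankPart F n φ Φ.eval : ℝ) with hbad
  have hm : (bad.card : ℝ) * (2 : ℝ) ^ ((n : ℝ) / 2 - η * n) ≤
      ∑ φ ∈ BB n r, (rankPart F n φ Φ.eval : ℝ) := by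
    calc (bad.card : ℝ) * (2 : ℝ) ^ ((n : ℝ) / 2 - η * n)
        = ∑ φ ∈ bad, (2 : ℝ) ^ ((n : ℝ) / 2 - η * n) := by
          rw [Finset.sum_const, nsmul_eq_mul]
      _ ≤ ∑ φ ∈ bad, (rankPart F n φ Φ.eval : ℝ) :=
          Finset.sum_le_sum fun φ hφ => (Finset.mem_filter.1 hφ).2.le
      _ ≤ _ := Finset.sum_le_sum_of_subset_of_nonneg (Finset.filter_subset _ _)
          (fun φ _ _ => Nat.cast_nonneg _)
  have hpos : (0 : ℝ) < (2 : ℝ) ^ ((n : ℝ) / 2 - η * n) := by positivity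
  rw [← mul_le_mul_iff_left₀ hpos]
  refine (hm.trans hsum).trans ?_
  calc (2 : ℝ) ^ ((n : ℝ) / 2) * (κ ^ N * (BB n r).card)
      ≤ (2 : ℝ) ^ ((n : ℝ) / 2) * ((2 : ℝ) ^ (-(2 * η * n)) * (BB n r).card) :=
        mul_le_mul_of_nonneg_left (mul_le_mul_of_nonneg_right hκN (Nat.cast_nonneg _)) (Real.rpow_nonneg (by norm_num) _)
    _ = ((2 : ℝ) ^ ((n : ℝ) / 2) * (2 : ℝ) ^ (-(2 * η * n))) * (BB n r).card := by ring
    _ = ((2 : ℝ) ^ (-(η * n)) * (2 : ℝ) ^ ((n : ℝ) / 2 - η * n)) * (BB n r).card := by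
        rw [← Real.rpow_add (by norm_num), ← Real.rpow_add (by norm_num)]
        congr 2
        ring
    _ = _ := by ring
end

section
/- Let P be a strict-interval algebraic branching program over variables x₁,...,x_n all of whose non-terminal nodes are ascending. Then along every s-to-t path of P the edge labels that are variables appear in strictly increasing order of index, and the polynomial computed by P can be computed by a read-once oblivious ABP of size polynomial in the size of P in which the variables appear in the order x₁, x₂, ..., x_n. Symmetrically, if all non-terminal nodes of P are descending, the variables along every s-to-t path appear in strictly decreasing order of index, and the polynomial computed by P can be computed by a ROABP of size polynomial in the size of P in which the variables appear in the order x_n, x_{n−1}, ..., x₁. -/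
/-- The variables of `P` appear in the (descending) order `x_{n-1}, …, x_1, x_0`. -/
def ABP.OrderedDesc {F : Type} {n : ℕ} (P : ABP F n) : Prop :=
  ∀ (x x' : Fin n) (j j' : ℕ), P.VarInLayer x j → P.VarInLayer x' j' → x < x' → j' < j

namespace SIProof

open ABP

/-- Forward evaluation of an ABP. -/
lemma eval_forward {F : Type} {n : ℕ} [Field F] (P : ABP F n)
    (f : ℕ → ℕ → MvPolynomial (Fin n) F) (h0 : f 0 0 = 1)
    (hs : ∀ j < P.m, ∀ v < P.width (j + 1),
      f (j + 1) v = ∑ u ∈ Finset.range (P.width j), f j u * edgeVal (P.label j u v)) :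
    P.eval = f P.m 0 := by
  have key : ∀ k ≤ P.m, ∀ φ : ℕ → MvPolynomial (Fin n) F,
      ∑ π : (∀ i : Fin (k + 1), Fin (P.width i)), (∏ i : Fin k,
        edgeVal (P.label i (π i.castSucc) (π i.succ))) * φ (π (Fin.last k))
      = ∑ u ∈ Finset.range (P.width k), f k u * φ u := by
    intro k
    induction k with
    | zero =>
      intro _ φ
      rw [Finset.sum_range]
      refine Fintype.sum_equiv (Equiv.piUnique (fun i : Fin 1 => Fin (P.width i))) _ _ ?_
      intro π
      simp only [Finset.univ_eq_empty, Finset.prod_empty]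
      have h1 : ∀ v : Fin (P.width 0), (v : ℕ) = 0 := by
        intro v
        have := v.2
        have h2 := P.w0
        omega
      have h3 := h1 (π (Fin.last 0))
      have h4 := h1 ((Equiv.piUnique (fun i : Fin 1 => Fin (P.width i))) π)
      refine Eq.trans ?_ (congrArg (fun k => f 0 k * φ k) h4).symm
      simp only [h0]
      exact congrArg (fun k => 1 * φ k) h3
    | succ k ih =>
      intro hk φ
      rw [← Equiv.sum_comp (Fin.snocEquiv (fun i : Fin (k + 1 + 1) => Fin (P.width i)))]
      rw [Fintype.sum_prod_type]
      rw [Finset.sum_range]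
      rw [Finset.sum_comm]
      have := ih (by omega) (fun u => ∑ v : Fin (P.width (k + 1)), edgeVal (P.label k u v) * φ v)
      have h2 : ∑ u : Fin (P.width (k+1)), f (k + 1) u * φ u =
          ∑ u ∈ Finset.range (P.width k), f k u *
            ∑ v : Fin (P.width (k + 1)), edgeVal (P.label k u v) * φ v := by
        simp_rw [Finset.mul_sum]
        rw [Finset.sum_comm]
        apply Finset.sum_congr rfl
        intro v _
        rw [hs k (by omega) v v.2, Finset.sum_mul]
        apply Finset.sum_congr rfl
        intro u _
        ring
      rw [h2, ← this]
      apply Finset.sum_congr rfl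
      intro π _
      rw [Finset.mul_sum]
      apply Finset.sum_congr rfl
      intro v _
      rw [Fin.prod_univ_castSucc]
      simp only [Fin.snocEquiv, Equiv.coe_fn_mk, Fin.snoc_last, Fin.succ_last, Fin.snoc_castSucc,
        ← Fin.castSucc_succ, Fin.val_castSucc, Fin.val_last, Fin.val_succ]
      ring_nf
  have := key P.m le_rfl (fun _ => 1)
  simp only [mul_one, P.wm, Finset.sum_range_one] at this
  exact this

lemma ring_lemma {S : Type*} [Ring S] (a : ℕ → S) (M : ℕ → S) (h0 : M 0 = 1)
    (hs : ∀ i, M (i + 1) = M i * (1 + a i))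
    (hz : ∀ i j, j ≤ i → a i * a j = 0) (K : ℕ) :
    M K = 1 + M K * ∑ i ∈ Finset.range K, a i := by
  have h1 : ∀ d l, M (l + d) * a l = M l * a l := by
    intro d
    induction d with
    | zero => intro l; rfl
    | succ d ih =>
      intro l
      rw [← add_assoc, hs, mul_assoc, add_mul, hz _ _ (by omega), one_mul, add_zero, ih]
  have h2 : ∀ K, M K = 1 + ∑ i ∈ Finset.range K, M i * a i := by
    intro K
    induction K with
    | zero => simp [h0]
    | succ K ih =>
      rw [Finset.sum_range_succ, ← add_assoc, ← ih, hs, mul_add, mul_one]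
  conv_lhs => rw [h2 K]
  rw [Finset.mul_sum]
  congr 1
  apply Finset.sum_congr rfl
  intro i hi
  rw [Finset.mem_range] at hi
  obtain ⟨d, rfl⟩ := Nat.exists_eq_add_of_lt hi
  rw [add_assoc, h1]

section Build

variable {F : Type} {n : ℕ} {V : Type} [Fintype V] [DecidableEq V]

/-- Level matrix. -/
noncomputable def lev [Field F] (lab : V → V → Option (F ⊕ Fin n)) (L : V → V → ℕ) (i : ℕ) :
    Matrix V V (MvPolynomial (Fin n) F) :=
  fun a b => if L a b = i then edgeVal (lab a b) else 0

noncomputable def pm [Field F] (lab : V → V → Option (F ⊕ Fin n)) (L : V → V → ℕ) :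
    ℕ → Matrix V V (MvPolynomial (Fin n) F)
  | 0 => 1
  | i + 1 => pm lab L i * (1 + lev lab L i)

lemma pm_eq [Field F] (lab : V → V → Option (F ⊕ Fin n)) (L : V → V → ℕ) (K : ℕ)
    (hK : ∀ a b, L a b < K)
    (hL : ∀ a b c, lab a b ≠ none → lab b c ≠ none → L a b < L b c) :
    pm lab L K = 1 + pm lab L K * Matrix.of (fun a b => edgeVal (lab a b)) := by
  have h := ring_lemma (lev lab L) (pm lab L) rfl (fun _ => rfl) (by
    intro i j hij
    ext1 a c
    rw [Matrix.mul_apply]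
    apply Finset.sum_eq_zero
    intro b _
    unfold lev
    by_cases h1 : L a b = i
    · by_cases h2 : L b c = j
      · by_cases h3 : lab a b = none
        · simp [h3, edgeVal]
        · by_cases h4 : lab b c = none
          · simp [h4, edgeVal]
          · have := hL a b c h3 h4
            omega
      · simp [h2]
    · simp [h1]) K
  have h2 : ∑ i ∈ Finset.range K, lev lab L i =
      Matrix.of (fun a b => edgeVal (lab a b)) := by
    ext1 a b
    rw [Matrix.sum_apply]
    simp only [lev, Matrix.of_apply]
    rw [Finset.sum_ite_eq]
    simp [hK]
  rw [h2] at h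
  exact h

noncomputable def dec (s : V) (u : ℕ) : V :=
  if h : u < Fintype.card V then (Fintype.equivFin V).symm ⟨u, h⟩ else s

omit [DecidableEq V] in
lemma sum_dec {M : Type*} [AddCommMonoid M] (s : V) (g : V → M) :
    ∑ u ∈ Finset.range (Fintype.card V), g (dec s u) = ∑ a, g a := by
  rw [Finset.sum_range, ← Equiv.sum_comp (Fintype.equivFin V).symm]
  apply Finset.sum_congr rfl
  intro u _
  simp [dec]

/-- The oblivious program. -/
noncomputable def mkQ [Field F] (lab : V → V → Option (F ⊕ Fin n)) (L : V → V → ℕ) (K : ℕ)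
    (s t : V) : ABP F n where
  m := K + 2
  width i := if i = 0 then 1 else if i = K + 2 then 1 else Fintype.card V
  w0 := by simp
  wm := by simp
  label i u v :=
    if i = 0 then (if dec s v = s then some (Sum.inl 1) else none)
    else if i = K + 1 then (if dec s u = t then some (Sum.inl 1) else none)
    else if dec s u = dec s v then some (Sum.inl 1)
    else if L (dec s u) (dec s v) = i - 1 then lab (dec s u) (dec s v) else none

lemma mkQ_size [Field F] (lab : V → V → Option (F ⊕ Fin n)) (L : V → V → ℕ) (K : ℕ)
    (s t : V) : (mkQ lab L K s t).size = (K + 1) * Fintype.card V + 2 := by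
  unfold ABP.size
  change ∑ i ∈ Finset.range (K + 2 + 1),
    (if i = 0 then 1 else if i = K + 2 then 1 else Fintype.card V) = _
  rw [Finset.sum_range_succ, Finset.sum_range_succ']
  have : ∑ k ∈ Finset.range (K + 1), (if k + 1 = 0 then 1 else if k + 1 = K + 2 then 1 else
      Fintype.card V) = ∑ k ∈ Finset.range (K + 1), Fintype.card V := by
    apply Finset.sum_congr rfl
    intro k hk
    rw [Finset.mem_range] at hk
    rw [if_neg (by omega), if_neg (by omega)]
  rw [this]
  simp

lemma mkQ_eval [Field F] (lab : V → V → Option (F ⊕ Fin n)) (L : V → V → ℕ) (K : ℕ)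
    (s t : V) (hd : ∀ a, lab a a = none) : (mkQ lab L K s t).eval = pm lab L K s t := by
  rw [eval_forward (mkQ lab L K s t) (fun j u => if j = 0 then 1 else
    if j = K + 2 then pm lab L K s t else pm lab L (j - 1) s (dec s u))]
  · change (if K + 2 = 0 then _ else if K + 2 = K + 2 then _ else _) = _
    simp
  · simp
  · intro j hj v hv
    change j < K + 2 at hj
    change (_ : MvPolynomial (Fin n) F) = ∑ u ∈ Finset.range
      (if j = 0 then 1 else if j = K + 2 then 1 else Fintype.card V), _
    simp only [mkQ]
    rcases Nat.eq_zero_or_pos j with rfl | hj0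
    · by_cases h : dec s v = s
      · simp [h, edgeVal, pm]
      · have h' : s ≠ dec s v := fun e => h e.symm
        simp [h, h', edgeVal, pm]
    · obtain ⟨i, rfl⟩ : ∃ i, j = i + 1 := ⟨j - 1, by omega⟩
      by_cases h : i = K
      · subst h
        simp only [if_neg (show i + 1 ≠ 0 by omega), if_neg (show i + 1 + 1 ≠ 0 by omega),
          if_neg (show i + 1 ≠ i + 2 by omega), if_true, Nat.add_sub_cancel]
        rw [sum_dec s (fun a => pm lab L i s a *
          edgeVal (if a = t then some (Sum.inl 1) else none))]
        rw [Finset.sum_eq_single t]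
        · simp [edgeVal]
        · intro b _ hb
          simp [hb, edgeVal]
        · simp
      · simp only [if_neg (show i + 1 ≠ 0 by omega), if_neg (show i + 1 + 1 ≠ 0 by omega),
          if_neg (show i + 1 ≠ K + 2 by omega), if_neg (show i + 1 + 1 ≠ K + 2 by omega),
          if_neg (show i + 1 ≠ K + 1 by omega), Nat.add_sub_cancel]
        rw [sum_dec s (fun a => pm lab L i s a *
          edgeVal (if a = dec s v then some (Sum.inl 1) else
            if L a (dec s v) = i then lab a (dec s v) else none))]
        change (pm lab L i * (1 + lev lab L i)) s (dec s v) = _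
        rw [Matrix.mul_apply]
        apply Finset.sum_congr rfl
        intro a _
        congr 1
        rw [Matrix.add_apply, Matrix.one_apply]
        unfold lev
        by_cases hav : a = dec s v
        · rw [← hav]
          simp [hd, edgeVal]
        · simp only [if_neg hav, zero_add]
          by_cases hl : L a (dec s v) = i
          · simp [hl]
          · simp [hl, edgeVal]

lemma mkQ_var [Field F] (lab : V → V → Option (F ⊕ Fin n)) (L : V → V → ℕ) (K : ℕ)
    (s t : V) (x : Fin n) (j : ℕ) (h : (mkQ lab L K s t).VarInLayer x j) :
    0 < j ∧ ∃ a b, lab a b = some (Sum.inr x) ∧ L a b = j - 1 := by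
  obtain ⟨_, u, v, _, _, h⟩ := h
  simp only [mkQ] at h
  split_ifs at h with h1 h2 h3 h4 h5 h6
  all_goals first
    | (simp at h)
    | exact ⟨by omega, _, _, h, h6⟩

end Build

section Prune

variable {F : Type} {n : ℕ}

/-- The pair `(u,v)` at layer `i` lies on an s-t path. -/
def OnPath (P : ABP F n) (i u v : ℕ) : Prop :=
  ∃ π, P.IsPath π ∧ π i = u ∧ π (i + 1) = v

open Classical in
noncomputable def prune (P : ABP F n) : ABP F n where
  m := P.m
  width := P.width
  w0 := P.w0
  wm := P.wm
  label i u v := if OnPath P i u v then P.label i u v else none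

lemma prune_eval [Field F] (P : ABP F n) : (prune P).eval = P.eval := by
  unfold ABP.eval
  change ∑ π : (∀ i : Fin (P.m + 1), Fin (P.width i)), ∏ k : Fin P.m,
    edgeVal ((prune P).label k (π k.castSucc) (π k.succ)) = _
  apply Finset.sum_congr rfl
  intro π _
  by_cases h : ∃ k : Fin P.m, P.label k (π k.castSucc) (π k.succ) = none
  · obtain ⟨k, hk⟩ := h
    rw [Finset.prod_eq_zero (Finset.mem_univ k), Finset.prod_eq_zero (Finset.mem_univ k)]
    · rw [hk]; rfl
    · simp [prune, hk, edgeVal]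
  · push Not at h
    have hp : P.IsPath (fun k => if h : k < P.m + 1 then (π ⟨k, h⟩ : ℕ) else 0) := by
      refine ⟨?_, ?_, ?_, ?_⟩
      · have := (π ⟨0, by omega⟩).2
        have h2 := P.w0
        simp only [] at this
        simp
        have h3 : ∀ v : Fin (P.width 0), (v : ℕ) = 0 := by
          intro v
          have := v.2
          omega
        exact h3 (π 0)
      · have := (π ⟨P.m, by omega⟩).2
        have h2 := P.wm
        simp only [] at this
        simp
        omega
      · intro k hk
        have := (π ⟨k, by omega⟩).2
        simp only [] at this
        simp only [dif_pos (show k < P.m + 1 by omega)]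
        exact this
      · intro k hk
        have := h ⟨k, hk⟩
        simp only [dif_pos (show k < P.m + 1 by omega), dif_pos (show k + 1 < P.m + 1 by omega)]
        exact this
    apply Finset.prod_congr rfl
    intro k _
    have : OnPath P k (π k.castSucc) (π k.succ) := by
      refine ⟨_, hp, ?_, ?_⟩
      · simp only [dif_pos (show (k : ℕ) < P.m + 1 by omega)]
        rfl
      · simp only [dif_pos (show (k : ℕ) + 1 < P.m + 1 by omega)]
        rfl
    simp [prune, this]

lemma splice (P : ABP F n) (π₁ π₂ : ℕ → ℕ) (h1 : P.IsPath π₁) (h2 : P.IsPath π₂) (i : ℕ)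
    (hi : π₁ i = π₂ i) : P.IsPath (fun k => if k ≤ i then π₁ k else π₂ k) := by
  obtain ⟨a1, b1, c1, d1⟩ := h1
  obtain ⟨a2, b2, c2, d2⟩ := h2
  refine ⟨?_, ?_, ?_, ?_⟩
  · simp [a1]
  · dsimp only
    split_ifs <;> assumption
  · intro k hk
    dsimp only
    split_ifs
    · exact c1 k hk
    · exact c2 k hk
  · intro k hk
    dsimp only
    by_cases h : k + 1 ≤ i
    · rw [if_pos (by omega), if_pos h]
      exact d1 k hk
    · by_cases h' : k = i
      · subst h'
        rw [if_pos le_rfl, if_neg h, hi]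
        exact d2 k hk
      · rw [if_neg (by omega), if_neg h]
        exact d2 k hk

/-- `x` occurs before node `v` of layer `i` on an s-t path. -/
def Before (P : ABP F n) (i v : ℕ) (x : Fin n) : Prop :=
  ∃ π, P.IsPath π ∧ π i = v ∧ ∃ k < i, P.label k (π k) (π (k + 1)) = some (Sum.inr x)

open Classical in
noncomputable def rho (P : ABP F n) (σ : Fin n → ℕ) (i v : ℕ) : ℕ :=
  (Finset.univ.filter (Before P i v)).sup (fun x => σ x + 1)

lemma rho_mono (P : ABP F n) (σ : Fin n → ℕ) (i v w : ℕ) (h : OnPath P i v w) :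
    rho P σ i v ≤ rho P σ (i + 1) w := by
  classical
  unfold rho
  apply Finset.sup_mono
  intro x hx
  rw [Finset.mem_filter] at hx ⊢
  refine ⟨Finset.mem_univ _, ?_⟩
  obtain ⟨_, π₁, h1, e1, k, hk, hx⟩ := hx
  obtain ⟨π₂, h2, e2, e3⟩ := h
  refine ⟨_, splice P π₁ π₂ h1 h2 i (by omega), ?_, k, by omega, ?_⟩
  · simp [e3]
  · simp only [if_pos (show k ≤ i by omega), if_pos (show k + 1 ≤ i by omega), hx]

lemma rho_ge (P : ABP F n) (σ : Fin n → ℕ) (i v w : ℕ) (x : Fin n) (h : OnPath P i v w)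
    (hx : P.label i v w = some (Sum.inr x)) : σ x + 1 ≤ rho P σ (i + 1) w := by
  classical
  unfold rho
  apply Finset.le_sup (f := fun x => σ x + 1)
  rw [Finset.mem_filter]
  obtain ⟨π, h2, e2, e3⟩ := h
  exact ⟨Finset.mem_univ _, π, h2, e3, i, by omega, by rw [e2, e3, hx]⟩

lemma rho_le (P : ABP F n) (σ : Fin n → ℕ)
    (H : ∀ π : ℕ → ℕ, P.IsPath π → ∀ (k k' : ℕ) (x x' : Fin n), k < k' → k' < P.m →
          P.label k (π k) (π (k + 1)) = some (Sum.inr x) →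
          P.label k' (π k') (π (k' + 1)) = some (Sum.inr x') → σ x < σ x')
    (i v w : ℕ) (hi : i < P.m) (x : Fin n) (h : OnPath P i v w)
    (hx : P.label i v w = some (Sum.inr x)) : rho P σ i v ≤ σ x := by
  classical
  unfold rho
  apply Finset.sup_le
  intro y hy
  rw [Finset.mem_filter] at hy
  obtain ⟨_, π₁, h1, e1, k, hk, hy⟩ := hy
  obtain ⟨π₂, h2, e2, e3⟩ := h
  apply H _ (splice P π₁ π₂ h1 h2 i (by omega)) k i y x hk hi
  · simp only [if_pos (show k ≤ i by omega), if_pos (show k + 1 ≤ i by omega), hy]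
  · simp only [if_pos le_rfl, if_neg (show ¬ i + 1 ≤ i by omega), e1, e3, hx]

abbrev Node (P : ABP F n) : Type := Σ j : Fin (P.m + 1), Fin (P.width j)

lemma card_node (P : ABP F n) : Fintype.card (Node P) = P.size := by
  simp [ABP.size, Finset.sum_range]

noncomputable def nlab (P : ABP F n) (a b : Node P) : Option (F ⊕ Fin n) :=
  if (b.1 : ℕ) = a.1 + 1 then (prune P).label a.1 a.2 b.2 else none

noncomputable def key (P : ABP F n) (σ : Fin n → ℕ) (a b : Node P) : ℕ :=
  match nlab P a b with
  | some (Sum.inr x) => (σ x + 1) * (P.m + 1)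
  | _ => rho P σ b.1 b.2 * (P.m + 1) + b.1

lemma nlab_some (P : ABP F n) (a b : Node P) (h : nlab P a b ≠ none) :
    (b.1 : ℕ) = a.1 + 1 ∧ OnPath P a.1 a.2 b.2 ∧ nlab P a b = P.label a.1 a.2 b.2 := by
  unfold nlab at h ⊢
  split_ifs at h ⊢ with h1
  · simp only [prune] at h ⊢
    split_ifs at h ⊢ with h2
    · exact ⟨h1, h2, rfl⟩
    · exact absurd rfl h
  · exact absurd rfl h

lemma key_lt (P : ABP F n) (σ : Fin n → ℕ)
    (H : ∀ π : ℕ → ℕ, P.IsPath π → ∀ (k k' : ℕ) (x x' : Fin n), k < k' → k' < P.m →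
          P.label k (π k) (π (k + 1)) = some (Sum.inr x) →
          P.label k' (π k') (π (k' + 1)) = some (Sum.inr x') → σ x < σ x')
    (a b c : Node P) (hab : nlab P a b ≠ none) (hbc : nlab P b c ≠ none) :
    key P σ a b < key P σ b c := by
  obtain ⟨e1, o1, l1⟩ := nlab_some P a b hab
  obtain ⟨e2, o2, l2⟩ := nlab_some P b c hbc
  have hb := b.1.2
  have hc := c.1.2
  have hmono := rho_mono P σ _ _ _ o2
  rw [← e2] at hmono
  have k1 : key P σ a b ≤ rho P σ b.1 b.2 * (P.m + 1) + b.1 := by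
    rcases hl : nlab P a b with _ | (cc | x)
    · simp [key, hl]
    · simp [key, hl]
    · simp only [key, hl]
      have := rho_ge P σ _ _ _ x o1 (by rw [← l1, hl])
      rw [← e1] at this
      have := Nat.mul_le_mul_right (P.m + 1) this
      omega
  apply lt_of_le_of_lt k1
  rcases hl : nlab P b c with _ | (cc | x)
  · exact absurd hl hbc
  · simp only [key, hl]
    have := Nat.mul_le_mul_right (P.m + 1) hmono
    omega
  · simp only [key, hl]
    have := rho_le P σ H _ _ _ (by omega) x o2 (by rw [← l2, hl])
    have := Nat.mul_le_mul_right (P.m + 1) this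
    rw [add_mul]
    omega

noncomputable def keys (P : ABP F n) (σ : Fin n → ℕ) : Finset ℕ :=
  Finset.univ.image (fun p : Node P × Node P => key P σ p.1 p.2)

noncomputable def level (P : ABP F n) (σ : Fin n → ℕ) (a b : Node P) : ℕ :=
  ((keys P σ).filter (· < key P σ a b)).card

lemma key_mem (P : ABP F n) (σ : Fin n → ℕ) (a b : Node P) : key P σ a b ∈ keys P σ := by
  unfold keys
  rw [Finset.mem_image]
  exact ⟨(a, b), Finset.mem_univ _, rfl⟩

lemma level_lt (P : ABP F n) (σ : Fin n → ℕ) (a b c d : Node P)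
    (h : key P σ a b < key P σ c d) : level P σ a b < level P σ c d := by
  unfold level
  apply Finset.card_lt_card
  rw [Finset.ssubset_iff_of_subset]
  · refine ⟨key P σ a b, ?_, ?_⟩
    · simp [key_mem, h]
    · simp
  · intro k hk
    rw [Finset.mem_filter] at hk ⊢
    exact ⟨hk.1, hk.2.trans h⟩

lemma level_inj (P : ABP F n) (σ : Fin n → ℕ) (a b c d : Node P)
    (h : level P σ a b = level P σ c d) : key P σ a b = key P σ c d := by
  rcases lt_trichotomy (key P σ a b) (key P σ c d) with h1 | h1 | h1
  · have := level_lt P σ _ _ _ _ h1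
    omega
  · exact h1
  · have := level_lt P σ _ _ _ _ h1
    omega

lemma level_bound (P : ABP F n) (σ : Fin n → ℕ) (a b : Node P) :
    level P σ a b < (keys P σ).card := by
  unfold level
  apply Finset.card_lt_card
  rw [Finset.ssubset_iff_of_subset (Finset.filter_subset _ _)]
  exact ⟨key P σ a b, key_mem P σ a b, by simp⟩

def ndS (P : ABP F n) : Node P := ⟨0, ⟨0, by have := P.w0; simp [this]⟩⟩
def ndT (P : ABP F n) : Node P := ⟨Fin.last _, ⟨0, by have := P.wm; simp [this]⟩⟩

lemma synML_of_readOnce (Q : ABP F n) (h : Q.ReadOnceVars) : Q.SynMultilinear := by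
  intro π hπ x
  have hfin : {k : ℕ | k < Q.m ∧ Q.label k (π k) (π (k + 1)) = some (Sum.inr x)}.Finite :=
    (Set.finite_lt_nat Q.m).subset (fun k hk => hk.1)
  rw [Set.ncard_le_one hfin]
  · intro k hk k' hk'
    obtain ⟨_, _, c, d⟩ := hπ
    apply h x
    · exact ⟨hk.1, _, _, c k (le_of_lt hk.1), c (k + 1) hk.1, hk.2⟩
    · exact ⟨hk'.1, _, _, c k' (le_of_lt hk'.1), c (k' + 1) hk'.1, hk'.2⟩

lemma pm_prune [Field F] (P : ABP F n) (M : Matrix (Node P) (Node P) (MvPolynomial (Fin n) F))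
    (hM : M = 1 + M * Matrix.of (fun a b => edgeVal (nlab P a b))) :
    P.eval = M (ndS P) (ndT P) := by
  rw [← prune_eval]
  have hrec : ∀ b, M (ndS P) b = (1 : Matrix (Node P) (Node P) (MvPolynomial (Fin n) F)) (ndS P) b
      + ∑ a, M (ndS P) a * edgeVal (nlab P a b) := by
    intro b
    conv_lhs => rw [hM]
    rw [Matrix.add_apply, Matrix.mul_apply]
    rfl
  rw [eval_forward (prune P) (fun j v => if h : j < P.m + 1 then
    (if h' : v < P.width j then M (ndS P) ⟨⟨j, h⟩, ⟨v, h'⟩⟩ else 0) else 0)]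
  · have h1 : (prune P).m < P.m + 1 := Nat.lt_succ_self P.m
    have h2 : 0 < P.width (prune P).m := by
      have := P.wm
      change 0 < P.width P.m
      omega
    rw [dif_pos h1, dif_pos h2]
    rfl
  · have h2 : 0 < P.width 0 := by
      have := P.w0
      omega
    rw [dif_pos (by omega), dif_pos h2]
    have e : (⟨⟨0, by omega⟩, ⟨0, h2⟩⟩ : Node P) = ndS P := rfl
    rw [e, hrec, Matrix.one_apply_eq, Finset.sum_eq_zero, add_zero]
    intro a _
    have : nlab P a (ndS P) = none := by
      unfold nlab
      rw [if_neg]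
      simp [ndS]
    rw [this]
    simp [edgeVal]
  · intro j hj v hv
    change j < P.m at hj
    change v < P.width (j + 1) at hv
    rw [dif_pos (by omega), dif_pos hv, hrec, Matrix.one_apply_ne, zero_add]
    · rw [Fintype.sum_sigma]
      rw [Finset.sum_eq_single (⟨j, by omega⟩ : Fin (P.m + 1))]
      · change _ = ∑ u ∈ Finset.range (P.width j), _
        rw [Finset.sum_range]
        apply Finset.sum_congr rfl
        intro u _
        rw [dif_pos (by omega), dif_pos u.2]
        simp [nlab]
      · intro i _ hi
        apply Finset.sum_eq_zero
        intro u _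
        have : nlab P ⟨i, u⟩ ⟨⟨j + 1, by omega⟩, ⟨v, hv⟩⟩ = none := by
          unfold nlab
          rw [if_neg]
          intro h
          apply hi
          apply Fin.ext
          simp at h
          exact h.symm
        rw [this]
        simp [edgeVal]
      · simp
    · intro h
      have := congrArg (fun a : Node P => (a.1 : ℕ)) h
      simp [ndS] at this

lemma main_aux [Field F] (P : ABP F n) (σ : Fin n → ℕ) (hσ : Function.Injective σ)
    (H : ∀ π : ℕ → ℕ, P.IsPath π → ∀ (k k' : ℕ) (x x' : Fin n), k < k' → k' < P.m →
          P.label k (π k) (π (k + 1)) = some (Sum.inr x) →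
          P.label k' (π k') (π (k' + 1)) = some (Sum.inr x') → σ x < σ x') :
    ∃ Q : ABP F n, Q.IsROABP ∧
      (∀ (x x' : Fin n) (j j' : ℕ), Q.VarInLayer x j → Q.VarInLayer x' j' → σ x < σ x' → j < j') ∧
      Q.eval = P.eval ∧ Q.size ≤ P.size ^ 4 := by
  rcases Nat.eq_zero_or_pos P.m with hm | hm
  · have hv : ∀ x j, ¬ P.VarInLayer x j := by
      intro x j h
      have := h.1
      omega
    have hro : P.ReadOnceVars := fun x j j' h => absurd h (hv x j)
    refine ⟨P, ⟨fun j x x' h => absurd h (hv x j), hro, synML_of_readOnce P hro⟩,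
      fun x x' j j' h => absurd h (hv x j), rfl, ?_⟩
    exact Nat.le_self_pow (by norm_num) _
  · set Q := mkQ (nlab P) (level P σ) (keys P σ).card (ndS P) (ndT P) with hQ
    have hvar : ∀ x j, Q.VarInLayer x j → 0 < j ∧ ∃ a b, key P σ a b = (σ x + 1) * (P.m + 1) ∧
        level P σ a b = j - 1 := by
      intro x j h
      obtain ⟨h0, a, b, h1, h2⟩ := mkQ_var _ _ _ _ _ _ _ h
      exact ⟨h0, a, b, by simp [key, h1], h2⟩
    have hro : Q.ReadOnceVars := by
      intro x j j' h h'
      obtain ⟨h0, a, b, h1, h2⟩ := hvar x j h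
      obtain ⟨h0', a', b', h1', h2'⟩ := hvar x j' h'
      have : level P σ a b = level P σ a' b' := by
        unfold level
        rw [h1, h1']
      omega
    refine ⟨Q, ⟨?_, hro, synML_of_readOnce Q hro⟩, ?_, ?_, ?_⟩
    · intro j x x' h h'
      obtain ⟨h0, a, b, h1, h2⟩ := hvar x j h
      obtain ⟨h0', a', b', h1', h2'⟩ := hvar x' j h'
      have := level_inj P σ a b a' b' (by omega)
      rw [h1, h1'] at this
      have := Nat.eq_of_mul_eq_mul_right (by omega) this
      apply hσ
      omega
    · intro x x' j j' h h' hlt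
      obtain ⟨h0, a, b, h1, h2⟩ := hvar x j h
      obtain ⟨h0', a', b', h1', h2'⟩ := hvar x' j' h'
      have := level_lt P σ a b a' b' (by
        rw [h1, h1']
        exact Nat.mul_lt_mul_of_pos_right (by omega) (by omega))
      omega
    · rw [hQ, mkQ_eval, pm_prune P]
      · exact pm_eq _ _ _ (level_bound P σ)
          (fun a b c h1 h2 => level_lt P σ _ _ _ _ (key_lt P σ H a b c h1 h2))
      · intro a
        unfold nlab
        rw [if_neg (by omega)]
    · rw [hQ, mkQ_size, card_node]
      have h1 : (keys P σ).card ≤ P.size * P.size := by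
        refine Finset.card_image_le.trans ?_
        rw [Finset.card_univ, Fintype.card_prod, card_node]
      have h2 : 2 ≤ P.size := by
        unfold ABP.size
        rw [Finset.sum_range_succ, P.wm]
        have := Finset.single_le_sum (f := P.width) (fun _ _ => Nat.zero_le _)
          (Finset.mem_range.2 hm)
        rw [P.w0] at this
        omega
      generalize P.size = N at *
      have h3 := Nat.mul_le_mul_right N (Nat.add_le_add_right h1 1)
      have h4 : (N * N + 1) * N + 2 ≤ N ^ 4 := by
        obtain ⟨d, rfl⟩ := Nat.exists_eq_add_of_le h2
        ring_nf
        nlinarith [Nat.zero_le (d^2), Nat.zero_le (d^3), Nat.zero_le (d^4)]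
      omega

end Prune

lemma path_sub {F : Type} {n : ℕ} (P : StrictIntervalABP F n) (π : ℕ → ℕ)
    (hπ : P.toABP.IsPath π) (k k' : ℕ) (x x' : Fin n) (hk : k < k') (hk' : k' < P.m)
    (hx : P.label k (π k) (π (k + 1)) = some (Sum.inr x))
    (hx' : P.label k' (π k') (π (k' + 1)) = some (Sum.inr x')) :
    (P.lo 0 (k + 1) 0 (π (k + 1)) ≤ x ∧ x ≤ P.hi 0 (k + 1) 0 (π (k + 1))) ∧
    (P.lo (k + 1) P.m (π (k + 1)) 0 ≤ x' ∧ x' ≤ P.hi (k + 1) P.m (π (k + 1)) 0) ∧ x ≠ x' := by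
  obtain ⟨a, b, c, d⟩ := hπ
  have w0 := P.w0
  have wm := P.wm
  have h1 := P.mem_ival 0 (k + 1) 0 (π (k + 1)) x (by omega) (by omega) (by omega)
    (c _ (by omega)) ⟨π, a, rfl, fun j _ h => c j (by omega), fun j _ h => d j (by omega),
      k, by omega, by omega, hx⟩
  have h2 := P.mem_ival (k + 1) P.m (π (k + 1)) 0 x' (by omega) (by omega) (c _ (by omega))
    (by omega) ⟨π, rfl, b, fun j _ h => c j (by omega), fun j _ h => d j (by omega),
      k', by omega, by omega, hx'⟩
  refine ⟨h1, h2, ?_⟩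
  rintro rfl
  have h3 := P.disj 0 (k + 1) P.m 0 (π (k + 1)) 0 (by omega) (by omega) le_rfl (by omega)
    (c _ (by omega)) (by omega)
  exact Finset.disjoint_left.1 h3 (Finset.mem_Icc.2 h1) (Finset.mem_Icc.2 h2)

end SIProof

/-- there is a constant `c` such that for every strict-interval ABP `P`:
if all non-terminal nodes of `P` are ascending, then along every `s`-to-`t` path the
variable edge labels appear in strictly increasing order of index, and the polynomial
computed by `P` is computed by a ROABP of size polynomial in `size P` in which the
variables appear in the order `x_0, x_1, …, x_{n-1}`; symmetrically, if all non-terminal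
nodes of `P` are descending, the variables along every `s`-to-`t` path appear in strictly
decreasing order, and the polynomial computed by `P` is computed by a ROABP of size
polynomial in `size P` in which the variables appear in the order `x_{n-1}, …, x_1, x_0`. -/
theorem strictInterval_asc_desc_to_ROABP :
    ∃ c : ℕ, ∀ (F : Type) [inst : Field F] (n : ℕ) (P : StrictIntervalABP F n),
      ((∀ i v, 0 < i → i < P.m → v < P.width i → P.Ascending i v) →
        (∀ π : ℕ → ℕ, P.toABP.IsPath π → ∀ (k k' : ℕ) (x x' : Fin n), k < k' → k' < P.m →
          P.label k (π k) (π (k + 1)) = some (Sum.inr x) →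
          P.label k' (π k') (π (k' + 1)) = some (Sum.inr x') → x < x') ∧
        (∃ Q : ABP F n, Q.IsROABP ∧ Q.OrderedAsc ∧ Q.eval = P.toABP.eval ∧
          Q.size ≤ P.toABP.size ^ c)) ∧
      ((∀ i v, 0 < i → i < P.m → v < P.width i → P.Descending i v) →
        (∀ π : ℕ → ℕ, P.toABP.IsPath π → ∀ (k k' : ℕ) (x x' : Fin n), k < k' → k' < P.m →
          P.label k (π k) (π (k + 1)) = some (Sum.inr x) →
          P.label k' (π k') (π (k' + 1)) = some (Sum.inr x') → x' < x) ∧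
        (∃ Q : ABP F n, Q.IsROABP ∧ Q.OrderedDesc ∧ Q.eval = P.toABP.eval ∧
          Q.size ≤ P.toABP.size ^ c)) := by
  refine ⟨4, ?_⟩
  intro F inst n P
  constructor
  · intro hA
    have hpath : ∀ π : ℕ → ℕ, P.toABP.IsPath π → ∀ (k k' : ℕ) (x x' : Fin n), k < k' → k' < P.m →
          P.label k (π k) (π (k + 1)) = some (Sum.inr x) →
          P.label k' (π k') (π (k' + 1)) = some (Sum.inr x') → x < x' := by
      intro π hπ k k' x x' hk hk' hx hx'
      obtain ⟨h1, h2, h3⟩ := SIProof.path_sub P π hπ k k' x x' hk hk' hx hx'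
      have h4 : P.hi 0 (k + 1) 0 (π (k + 1)) ≤ P.lo (k + 1) P.m (π (k + 1)) 0 :=
        hA (k + 1) (π (k + 1)) (by omega) (by omega) (hπ.2.2.1 _ (by omega))
      exact lt_of_le_of_ne ((h1.2.trans h4).trans h2.1) h3
    refine ⟨hpath, ?_⟩
    obtain ⟨Q, h1, h2, h3, h4⟩ := SIProof.main_aux P.toABP (fun x => (x : ℕ)) Fin.val_injective
      (fun π hπ k k' x x' hk hk' hx hx' => hpath π hπ k k' x x' hk hk' hx hx')
    exact ⟨Q, h1, fun x x' j j' h h' hlt => h2 x x' j j' h h' hlt, h3, h4⟩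
  · intro hD
    have hpath : ∀ π : ℕ → ℕ, P.toABP.IsPath π → ∀ (k k' : ℕ) (x x' : Fin n), k < k' → k' < P.m →
          P.label k (π k) (π (k + 1)) = some (Sum.inr x) →
          P.label k' (π k') (π (k' + 1)) = some (Sum.inr x') → x' < x := by
      intro π hπ k k' x x' hk hk' hx hx'
      obtain ⟨h1, h2, h3⟩ := SIProof.path_sub P π hπ k k' x x' hk hk' hx hx'
      have h4 : P.hi (k + 1) P.m (π (k + 1)) 0 ≤ P.lo 0 (k + 1) 0 (π (k + 1)) :=
        hD (k + 1) (π (k + 1)) (by omega) (by omega) (hπ.2.2.1 _ (by omega))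
      exact lt_of_le_of_ne ((h2.2.trans h4).trans h1.1) h3.symm
    refine ⟨hpath, ?_⟩
    obtain ⟨Q, h1, h2, h3, h4⟩ := SIProof.main_aux P.toABP (fun x => (x.rev : ℕ))
      (Fin.val_injective.comp Fin.rev_injective)
      (fun π hπ k k' x x' hk hk' hx hx' =>
        Fin.rev_lt_rev.2 (hpath π hπ k k' x x' hk hk' hx hx'))
    exact ⟨Q, h1, fun x x' j j' h h' hlt => h2 x' x j' j h' h (Fin.rev_lt_rev.2 hlt), h3, h4⟩
end
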